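/- arXiv:2407.16980 — 2 statements merged into one kernel-verified Lean document; each statement's English description precedes it below -/
import Mathlib

section
/- There is a universal constant C such that for every square-integrable martingale difference sequence {Y_m}_{m=1}^n with max_{1≤i≤n} ‖Y_i‖_∞ < ∞, one has W_1(X_n, N) ≤ C ( L_∞ · log(e + L_∞^{-2}) + ‖V_n² − 1‖_{1/2}^{1/2} ), where N is a standard normal random variable. -/
open MeasureTheory ProbabilityTheory Real Filter

noncomputable section

/-- `E[|U|^q]^{1/q}`. -/
def rnorm {Ω : Type*} [MeasurableSpace Ω] (μ : Measure Ω) (q : ℝ) (U : Ω → ℝ) : ℝ :=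
  (∫ ω, |U ω| ^ q ∂μ) ^ (1 / q)

/-- Wasserstein distance of order `r` between two laws on `ℝ`, defined as the infimum of
`E[|U'-V'|^r]^{1/r}` over all couplings. -/
def wassersteinDist (r : ℝ) (μ ν : Measure ℝ) : ℝ :=
  sInf { d : ℝ | ∃ cpl : Measure (ℝ × ℝ), IsProbabilityMeasure cpl ∧
    cpl.map Prod.fst = μ ∧ cpl.map Prod.snd = ν ∧
    d = (∫ p, |p.1 - p.2| ^ r ∂cpl) ^ (1 / r) }

/-- The standard normal law on `ℝ`. -/
def stdGaussian : Measure ℝ := gaussianReal 0 1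

/-- `{Y_i}_{i=1}^n` is a square-integrable martingale difference sequence w.r.t. `F`. -/
structure IsMDS {Ω : Type*} [m0 : MeasurableSpace Ω] (μ : Measure Ω)
    (F : ℕ → MeasurableSpace Ω) (n : ℕ) (Y : ℕ → Ω → ℝ) : Prop where
  protected le : ∀ i, F i ≤ m0
  protected mono : Monotone F
  protected adapted : ∀ i, 1 ≤ i → i ≤ n → Measurable[F i] (Y i)
  protected memL2 : ∀ i, 1 ≤ i → i ≤ n → MemLp (Y i) 2 μ
  protected mdiff : ∀ i, 1 ≤ i → i ≤ n → μ[Y i | F (i - 1)] =ᵐ[μ] 0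

/-- An N-function. -/
def IsNFunction (φ : ℝ → ℝ) : Prop :=
  ConvexOn ℝ (Set.Ici 0) φ ∧ (∀ x, 0 ≤ x → 0 ≤ φ x) ∧
  Tendsto (fun x => φ x / x) (nhdsWithin 0 (Set.Ioi 0)) (nhds 0) ∧
  Tendsto (fun x => φ x / x) atTop atTop ∧
  (∀ x, 0 < x → 0 < φ x)

/-- `φ₁ ≼ φ₂` : the ratio `φ₂/φ₁` is non-decreasing on `(0,∞)`. -/
def Dominates (φ₁ φ₂ : ℝ → ℝ) : Prop :=
  MonotoneOn (fun x => φ₂ x / φ₁ x) (Set.Ioi (0 : ℝ))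

/-- Generalized inverse of `φ` on `[0,∞)`. -/
def ninv (φ : ℝ → ℝ) (y : ℝ) : ℝ := sInf {x : ℝ | 0 ≤ x ∧ y ≤ φ x}

/-- Orlicz norm of the finite sequence `{Y_i}_{i=1}^n`. -/
def orliczSeqNorm {Ω : Type*} [MeasurableSpace Ω] (μ : Measure Ω) (φ : ℝ → ℝ)
    (n : ℕ) (Y : ℕ → Ω → ℝ) : ℝ :=
  sInf {c : ℝ | 0 < c ∧ (1 / n : ℝ) * ∑ i ∈ Finset.Icc 1 n, ∫ ω, φ (|Y i ω| / c) ∂μ ≤ 1}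


open scoped ENNReal

/-- Zolotarev's ideal distance of integer order `r`: the supremum of `E f(U) - E f(V)` over
`(r-1)`-times differentiable `f` whose `(r-1)`-st derivative is `1`-Lipschitz. -/
def zolotarev {Ω : Type*} [MeasurableSpace Ω] (r : ℕ) (μ : Measure Ω) (U : Ω → ℝ)
    (ν : Measure ℝ) : ℝ :=
  sSup { d : ℝ | ∃ f : ℝ → ℝ, ContDiff ℝ (r - 1 : ℕ) f ∧
    LipschitzWith 1 (iteratedDeriv (r - 1) f) ∧
    d = (∫ ω, f (U ω) ∂μ) - ∫ x, f x ∂ν }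

/-- The Fenchel–Legendre transform of `φ` (with the supremum over `y ≥ 0`). -/
def fenchel (φ : ℝ → ℝ) (x : ℝ) : ℝ := sSup ((fun y => x * y - φ y) '' Set.Ici 0)

/-- `C_φ = sup_{x,y>0} (φ⁻¹(x)φ_*⁻¹(x)/x) / (φ⁻¹(y)φ_*⁻¹(y)/y)`. -/
def nratioConst (φ : ℝ → ℝ) : ℝ :=
  sSup { r : ℝ | ∃ x > (0:ℝ), ∃ y > (0:ℝ),
    r = (ninv φ x * ninv (fenchel φ) x / x) / (ninv φ y * ninv (fenchel φ) y / y) }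

/-- `λ_m = ( Σ_{i=m+1}^n σ_i²(Y) + β² s_n² )^{1/2}`. -/
def lamCV {Ω : Type*} [MeasurableSpace Ω] (μ : Measure Ω) (F : ℕ → MeasurableSpace Ω)
    (n : ℕ) (Y : ℕ → Ω → ℝ) (sn β : ℝ) (m : ℕ) (ω : Ω) : ℝ :=
  Real.sqrt ((∑ j ∈ Finset.Icc (m + 1) n, (μ[fun ω' => Y j ω' ^ 2 | F (j - 1)]) ω)
    + β ^ 2 * sn ^ 2)


/-- Quantile function. -/
def qtl (μ : Measure ℝ) (u : ℝ) : ℝ := sInf {x : ℝ | u ≤ cdf μ x}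

lemma qtl_le_iff (μ : Measure ℝ) [IsProbabilityMeasure μ] {u : ℝ} (hu : u ∈ Set.Ioo (0:ℝ) 1) (x : ℝ) :
    qtl μ u ≤ x ↔ u ≤ cdf μ x := by
  have hne : {x : ℝ | u ≤ cdf μ x}.Nonempty := by
    obtain ⟨y, hy⟩ := ((tendsto_cdf_atTop μ).eventually (lt_mem_nhds hu.2)).exists
    exact ⟨y, hy.le⟩
  have hbdd : BddBelow {x : ℝ | u ≤ cdf μ x} := by
    obtain ⟨y, hy⟩ := ((tendsto_cdf_atBot μ).eventually (gt_mem_nhds hu.1)).exists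
    refine ⟨y, fun z hz => ?_⟩
    by_contra hlt
    push Not at hlt
    have := monotone_cdf μ hlt.le
    have hz' : u ≤ cdf μ z := hz
    linarith
  constructor
  · intro h
    have hc : Tendsto (cdf μ) (nhdsWithin x (Set.Ioi x)) (nhds (cdf μ x)) :=
      ((cdf μ).right_continuous x).mono_left (nhdsWithin_mono _ Set.Ioi_subset_Ici_self)
    refine ge_of_tendsto hc ?_
    filter_upwards [self_mem_nhdsWithin] with y hy
    have hy' : qtl μ u < y := lt_of_le_of_lt h hy
    obtain ⟨s, hs, hsy⟩ := (csInf_lt_iff hbdd hne).1 hy'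
    exact le_trans hs (monotone_cdf μ hsy.le)
  · intro h
    exact csInf_le hbdd h

lemma qtl_monoOn (μ : Measure ℝ) [IsProbabilityMeasure μ] : MonotoneOn (qtl μ) (Set.Ioo (0:ℝ) 1) := by
  intro u hu v hv huv
  rw [qtl_le_iff μ hu]
  exact huv.trans ((qtl_le_iff μ hv _).1 le_rfl)

lemma qtl_aemeas (μ : Measure ℝ) [IsProbabilityMeasure μ] :
    AEMeasurable (qtl μ) (volume.restrict (Set.Ioo (0:ℝ) 1)) :=
  aemeasurable_restrict_of_monotoneOn measurableSet_Ioo (qtl_monoOn μ)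

instance unifProb : IsProbabilityMeasure (volume.restrict (Set.Ioo (0:ℝ) 1)) :=
  ⟨by simp⟩

lemma qtl_map (μ : Measure ℝ) [IsProbabilityMeasure μ] :
    (volume.restrict (Set.Ioo (0:ℝ) 1)).map (qtl μ) = μ := by
  have : IsProbabilityMeasure ((volume.restrict (Set.Ioo (0:ℝ) 1)).map (qtl μ)) :=
    Measure.isProbabilityMeasure_map (qtl_aemeas μ)
  refine Measure.ext_of_Iic _ _ fun x => ?_
  rw [Measure.map_apply_of_aemeasurable (qtl_aemeas μ) measurableSet_Iic, ← ofReal_cdf]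
  have h1 : (volume.restrict (Set.Ioo (0:ℝ) 1)) (qtl μ ⁻¹' Set.Iic x)
      = (volume.restrict (Set.Ioo (0:ℝ) 1)) (Set.Iic (cdf μ x)) := by
    refine measure_congr ?_
    filter_upwards [ae_restrict_mem measurableSet_Ioo] with u hu
    exact propext (qtl_le_iff μ hu x)
  rw [h1, Measure.restrict_apply measurableSet_Iic]
  have h0 := cdf_nonneg μ x
  have h2 := cdf_le_one μ x
  generalize cdf μ x = c at *
  rcases h2.lt_or_eq with h3 | h3
  · have : Set.Iic c ∩ Set.Ioo (0:ℝ) 1 = Set.Ioc 0 c := by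
      ext y; simp only [Set.mem_inter_iff, Set.mem_Iic, Set.mem_Ioo, Set.mem_Ioc]
      constructor
      · rintro ⟨a, b, _⟩; exact ⟨b, a⟩
      · rintro ⟨a, b⟩; exact ⟨b, a, by linarith⟩
    rw [this]; simp
  · have : Set.Iic c ∩ Set.Ioo (0:ℝ) 1 = Set.Ioo 0 1 := by
      ext y; simp only [Set.mem_inter_iff, Set.mem_Iic, Set.mem_Ioo]
      constructor
      · rintro ⟨a, b⟩; exact b
      · rintro b; exact ⟨by linarith [b.2], b⟩
    rw [this]; simp [h3]

/-- One-sided Kantorovich duality on the line. -/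
lemma wasserstein_le_lip (μ ν : Measure ℝ) [IsProbabilityMeasure μ] [IsProbabilityMeasure ν]
    (hμ : Integrable (fun x => x) μ) (hν : Integrable (fun x => x) ν) :
    ∃ h : ℝ → ℝ, (∀ x y, |h x - h y| ≤ |x - y|) ∧
      wassersteinDist 1 μ ν ≤ ∫ x, h x ∂μ - ∫ x, h x ∂ν := by
  classical
  set s : ℝ → ℝ := fun t => if cdf μ t ≤ cdf ν t then 1 else -1 with hs
  have hsm : Measurable s := by
    refine Measurable.ite ?_ measurable_const measurable_const
    exact measurableSet_le (monotone_cdf μ).measurable (monotone_cdf ν).measurable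
  have hsb : ∀ t, ‖s t‖ ≤ 1 := by
    intro t; simp only [hs]; split_ifs <;> simp
  have hii : ∀ a b, IntervalIntegrable s volume a b := fun a b =>
    (intervalIntegrable_const (c := (1:ℝ))).mono_fun' hsm.aestronglyMeasurable (ae_of_all _ hsb)
  set h : ℝ → ℝ := fun x => ∫ t in (0:ℝ)..x, s t with hh
  have hsub : ∀ x y, h x - h y = ∫ t in y..x, s t := fun x y => by
    simp only [hh]
    exact intervalIntegral.integral_interval_sub_left (hii _ _) (hii _ _)
  have hlip : ∀ x y, |h x - h y| ≤ |x - y| := by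
    intro x y
    rw [hsub]
    have := intervalIntegral.norm_integral_le_of_norm_le_const (a := y) (b := x) (f := s) (C := 1)
      (fun t _ => hsb t)
    simpa using this
  have hcont : Continuous h := by
    have : LipschitzWith 1 h := LipschitzWith.of_dist_le_mul fun x y => by
      simpa [Real.dist_eq] using hlip x y
    exact this.continuous
  have hintg : ∀ ρ : Measure ℝ, IsProbabilityMeasure ρ → Integrable (fun x => x) ρ → Integrable h ρ := by
    intro ρ _ hρ
    refine hρ.mono hcont.aestronglyMeasurable (ae_of_all _ fun x => ?_)
    have h0 : h 0 = 0 := by simp [hh]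
    simpa [h0] using hlip x 0
  refine ⟨h, hlip, ?_⟩
  set P := volume.restrict (Set.Ioo (0:ℝ) 1) with hP
  have hpt : ∀ u ∈ Set.Ioo (0:ℝ) 1, |qtl μ u - qtl ν u| = h (qtl μ u) - h (qtl ν u) := by
    intro u hu
    rw [hsub]
    rcases le_total (qtl ν u) (qtl μ u) with hle | hle
    · have : ∫ t in (qtl ν u)..(qtl μ u), s t = ∫ t in (qtl ν u)..(qtl μ u), (1:ℝ) := by
        refine intervalIntegral.integral_congr_ae ?_
        have hne : ∀ᵐ t : ℝ, t ≠ qtl μ u := by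
          simp [ae_iff]
        filter_upwards [hne] with t htne ht
        rw [Set.uIoc_of_le hle] at ht
        have h1 : u ≤ cdf ν t := (qtl_le_iff ν hu t).1 ht.1.le
        have h2 : ¬ u ≤ cdf μ t := fun hc => by
          have := (qtl_le_iff μ hu t).2 hc
          exact htne (le_antisymm ht.2 this)
        simp only [hs]
        rw [if_pos (by linarith)]
      rw [this]; simp [abs_of_nonneg (sub_nonneg.2 hle)]
    · have : ∫ t in (qtl μ u)..(qtl ν u), s t = ∫ t in (qtl μ u)..(qtl ν u), (-1:ℝ) := by
        refine intervalIntegral.integral_congr_ae ?_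
        have hne : ∀ᵐ t : ℝ, t ≠ qtl ν u := by
          simp [ae_iff]
        filter_upwards [hne] with t htne ht
        rw [Set.uIoc_of_le hle] at ht
        have h1 : u ≤ cdf μ t := (qtl_le_iff μ hu t).1 ht.1.le
        have h2 : ¬ u ≤ cdf ν t := fun hc => by
          have := (qtl_le_iff ν hu t).2 hc
          exact htne (le_antisymm ht.2 this)
        simp only [hs]
        rw [if_neg (by linarith)]
      rw [intervalIntegral.integral_symm, this]
      rw [abs_of_nonpos (sub_nonpos.2 hle)]; simp
  have hqm := qtl_aemeas μ
  have hqn := qtl_aemeas ν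
  have hpair : AEMeasurable (fun u => (qtl μ u, qtl ν u)) P := hqm.prodMk hqn
  refine csInf_le ⟨0, ?_⟩ ⟨P.map (fun u => (qtl μ u, qtl ν u)), Measure.isProbabilityMeasure_map hpair,
    ?_, ?_, ?_⟩
  · rintro d ⟨cpl, _, _, _, rfl⟩
    exact Real.rpow_nonneg (integral_nonneg fun p => Real.rpow_nonneg (abs_nonneg _) _) _
  · rw [AEMeasurable.map_map_of_aemeasurable measurable_fst.aemeasurable hpair]
    exact qtl_map μ
  · rw [AEMeasurable.map_map_of_aemeasurable measurable_snd.aemeasurable hpair]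
    exact qtl_map ν
  · simp only [Real.rpow_one, div_one]
    rw [integral_map hpair (by fun_prop)]
    have e1 : ∫ x, h x ∂μ = ∫ u, h (qtl μ u) ∂P := by
      conv_lhs => rw [← qtl_map μ]
      exact integral_map hqm hcont.aestronglyMeasurable
    have e2 : ∫ x, h x ∂ν = ∫ u, h (qtl ν u) ∂P := by
      conv_lhs => rw [← qtl_map ν]
      exact integral_map hqn hcont.aestronglyMeasurable
    have i1 : Integrable (fun u => h (qtl μ u)) P := by
      have := hintg μ inferInstance hμ
      rw [← qtl_map μ] at this
      exact (integrable_map_measure hcont.aestronglyMeasurable hqm).1 this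
    have i2 : Integrable (fun u => h (qtl ν u)) P := by
      have := hintg ν inferInstance hν
      rw [← qtl_map ν] at this
      exact (integrable_map_measure hcont.aestronglyMeasurable hqn).1 this
    rw [e1, e2, ← integral_sub i1 i2]
    refine (setIntegral_congr_fun measurableSet_Ioo fun u hu => ?_).symm
    exact hpt u hu

lemma real_exp_third (p : ℝ) : |Real.exp p - 1 - p - p ^ 2 / 2| ≤ |p| ^ 3 * Real.exp |p| := by
  have h := Complex.norm_exp_sub_sum_le_norm_mul_exp (p : ℂ) 3
  simp only [Finset.sum_range_succ, Finset.sum_range_zero] at h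
  have e : Complex.exp (p : ℂ) - (0 + (p : ℂ) ^ 0 / (Nat.factorial 0 : ℂ) + (p : ℂ) ^ 1 / (Nat.factorial 1 : ℂ)
      + (p : ℂ) ^ 2 / (Nat.factorial 2 : ℂ)) = ((Real.exp p - 1 - p - p ^ 2 / 2 : ℝ) : ℂ) := by
    push_cast
    simp [Nat.factorial]
    ring
  rw [e, Complex.norm_real, Complex.norm_real] at h
  simpa using h

lemma herm_rem (v z : ℝ) (hv : |v| ≤ 1) :
    |z| * |Real.exp (v * z - v ^ 2 / 2) - 1 - v * z - v ^ 2 * ((z ^ 2 - 1) / 2)|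
      ≤ 7 * |v| ^ 3 * Real.exp (3 * (|z| + 1)) := by
  set a := |z| + 1 with ha
  set p := v * z - v ^ 2 / 2 with hp
  have hz0 := abs_nonneg z
  have hv0 := abs_nonneg v
  have ha1 : 1 ≤ a := by linarith
  have hpa : |p| ≤ |v| * a := by
    have h1 : |p| ≤ |v * z| + |v ^ 2 / 2| := abs_sub _ _
    have h2 : |v ^ 2 / 2| = |v| * |v| / 2 := by
      rw [abs_div, abs_pow, abs_of_pos (by norm_num : (0:ℝ) < 2)]; ring
    rw [abs_mul, h2] at h1
    nlinarith
  have hpa' : |p| ≤ a := hpa.trans (by nlinarith)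
  have h3 := real_exp_third p
  have hE : |p| ^ 3 * Real.exp |p| ≤ (|v| * a) ^ 3 * Real.exp a := by gcongr
  have hpoly : |p + p ^ 2 / 2 - v * z - v ^ 2 * ((z ^ 2 - 1) / 2)| ≤ |v| ^ 3 * a := by
    have : p + p ^ 2 / 2 - v * z - v ^ 2 * ((z ^ 2 - 1) / 2) = v ^ 3 * (v / 8 - z / 2) := by
      rw [hp]; ring
    rw [this, abs_mul, abs_pow]
    gcongr
    have := abs_sub (v / 8) (z / 2)
    rw [abs_div, abs_div, abs_of_pos (by norm_num : (0:ℝ) < 2), abs_of_pos (by norm_num : (0:ℝ) < 8)] at this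
    linarith
  have htot : |Real.exp p - 1 - v * z - v ^ 2 * ((z ^ 2 - 1) / 2)| ≤ |v| ^ 3 * a + (|v| * a) ^ 3 * Real.exp a := by
    have : Real.exp p - 1 - v * z - v ^ 2 * ((z ^ 2 - 1) / 2) =
      (Real.exp p - 1 - p - p ^ 2 / 2) + (p + p ^ 2 / 2 - v * z - v ^ 2 * ((z ^ 2 - 1) / 2)) := by ring
    rw [this]
    refine (abs_add_le _ _).trans ?_
    linarith
  have hexp1 : 1 ≤ Real.exp a := Real.one_le_exp (by linarith)
  have hae : a ≤ Real.exp a := by linarith [Real.add_one_le_exp a]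
  have ha3 : a ^ 3 ≤ 6 * Real.exp a := by
    have := Real.pow_div_factorial_le_exp a (by linarith) 3
    simp [Nat.factorial] at this
    linarith
  have hze : |z| ≤ Real.exp a := by linarith
  have he3 : Real.exp (3 * a) = Real.exp a * Real.exp a * Real.exp a := by
    rw [← Real.exp_add, ← Real.exp_add]; congr 1; ring
  have hv3 : 0 ≤ |v| ^ 3 := by positivity
  calc |z| * |Real.exp p - 1 - v * z - v ^ 2 * ((z ^ 2 - 1) / 2)|
      ≤ Real.exp a * (|v| ^ 3 * a + (|v| * a) ^ 3 * Real.exp a) := by gcongr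
    _ = |v| ^ 3 * (Real.exp a * a + a ^ 3 * Real.exp a * Real.exp a) := by ring
    _ ≤ |v| ^ 3 * (Real.exp a * Real.exp a * Real.exp a + (6 * Real.exp a) * Real.exp a * Real.exp a) := by
        gcongr
        nlinarith [Real.exp_pos a, mul_nonneg (Real.exp_pos a).le (Real.exp_pos a).le]
    _ = 7 * |v| ^ 3 * Real.exp (3 * a) := by rw [he3]; ring

lemma int_exp3 : Integrable (fun z : ℝ => Real.exp (3 * (|z| + 1))) (gaussianReal 0 1) := by
  have h1 := integrable_exp_mul_gaussianReal (μ := 0) (v := 1) 3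
  have h2 := integrable_exp_mul_gaussianReal (μ := 0) (v := 1) (-3)
  refine ((h1.add h2).const_mul (Real.exp 3)).mono' (by fun_prop) (ae_of_all _ fun z => ?_)
  rw [Real.norm_of_nonneg (Real.exp_pos _).le]
  simp only [Pi.add_apply]
  rw [mul_add (Real.exp 3), ← Real.exp_add, ← Real.exp_add]
  rcases abs_cases z with ⟨h, _⟩ | ⟨h, _⟩ <;> rw [h]
  · have : Real.exp (3 * (z + 1)) = Real.exp (3 + 3 * z) := by congr 1; ring
    linarith [Real.exp_pos (3 + -3 * z)]
  · have : Real.exp (3 * (-z + 1)) = Real.exp (3 + -3 * z) := by congr 1; ring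
    linarith [Real.exp_pos (3 + 3 * z)]

lemma gauss_shift (f : ℝ → ℝ) (v : ℝ) :
    ∫ z, f (z + v) ∂gaussianReal 0 1 = ∫ z, f z * Real.exp (v * z - v ^ 2 / 2) ∂gaussianReal 0 1 := by
  have hme : MeasurableEmbedding (fun z : ℝ => z + v) := measurableEmbedding_addRight v
  have h1 : ∫ z, f (z + v) ∂gaussianReal 0 1 = ∫ z, f z ∂gaussianReal v 1 := by
    have := gaussianReal_map_add_const (μ := 0) (v := 1) v
    rw [zero_add] at this
    rw [← this, hme.integral_map]
  rw [h1, integral_gaussianReal_eq_integral_smul (by norm_num), integral_gaussianReal_eq_integral_smul (by norm_num)]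
  congr 1
  ext z
  simp only [gaussianPDFReal_def, smul_eq_mul]
  have : Real.exp (-(z - v) ^ 2 / (2 * ((1 : NNReal) : ℝ))) =
      Real.exp (-(z - 0) ^ 2 / (2 * ((1 : NNReal) : ℝ))) * Real.exp (v * z - v ^ 2 / 2) := by
    rw [← Real.exp_add]; congr 1; simp; ring
  rw [this]; ring

def gphi (h : ℝ → ℝ) (x t : ℝ) : ℝ := ∫ z, h (x + √t * z) ∂gaussianReal 0 1
def gga (h : ℝ → ℝ) (x t : ℝ) : ℝ := (∫ z, (h (x + √t * z) - h x) * z ∂gaussianReal 0 1) / √t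
def ggb (h : ℝ → ℝ) (x t : ℝ) : ℝ := (∫ z, (h (x + √t * z) - h x) * ((z ^ 2 - 1) / 2) ∂gaussianReal 0 1) / t

def K3 : ℝ := ∫ z, Real.exp (3 * (|z| + 1)) ∂gaussianReal 0 1

lemma one_le_K3 : 1 ≤ K3 := by
  have : ∫ z : ℝ, (1:ℝ) ∂gaussianReal 0 1 ≤ K3 :=
    integral_mono (integrable_const _) int_exp3 fun z => Real.one_le_exp (by positivity)
  simpa using this

lemma lip_cont {h : ℝ → ℝ} (hl : ∀ x y, |h x - h y| ≤ |x - y|) : Continuous h := by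
  have : LipschitzWith 1 h := LipschitzWith.of_dist_le_mul fun x y => by
    simpa [Real.dist_eq] using hl x y
  exact this.continuous

lemma lip_diff_le {h : ℝ → ℝ} (hl : ∀ x y, |h x - h y| ≤ |x - y|) (x t z : ℝ) :
    |h (x + √t * z) - h x| ≤ √t * |z| := by
  refine (hl _ _).trans ?_
  rw [add_sub_cancel_left, abs_mul, abs_of_nonneg (Real.sqrt_nonneg t)]

/-- generic integrability against the Gaussian -/
lemma int_gen {h : ℝ → ℝ} (hl : ∀ x y, |h x - h y| ≤ |x - y|) (x t : ℝ) {k : ℝ → ℝ} (hk : Continuous k)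
    {c : ℝ} (hb : ∀ z, |z| * |k z| ≤ c * Real.exp (3 * (|z| + 1))) :
    Integrable (fun z => (h (x + √t * z) - h x) * k z) (gaussianReal 0 1) ∧
    |∫ z, (h (x + √t * z) - h x) * k z ∂gaussianReal 0 1| ≤ √t * c * K3 := by
  have hc := lip_cont hl
  have hbd : ∀ z, ‖(h (x + √t * z) - h x) * k z‖ ≤ √t * c * Real.exp (3 * (|z| + 1)) := by
    intro z
    rw [norm_mul, Real.norm_eq_abs, Real.norm_eq_abs]
    calc _ ≤ (√t * |z|) * |k z| := by gcongr; exact lip_diff_le hl x t z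
      _ = √t * (|z| * |k z|) := by ring
      _ ≤ √t * (c * Real.exp (3 * (|z| + 1))) := mul_le_mul_of_nonneg_left (hb z) (Real.sqrt_nonneg t)
      _ = _ := by ring
  refine ⟨(int_exp3.const_mul (√t * c)).mono' (by fun_prop) (ae_of_all _ hbd), ?_⟩
  have := norm_integral_le_of_norm_le (int_exp3.const_mul (√t * c)) (ae_of_all _ hbd)
  rwa [integral_const_mul] at this

lemma bd0 (z : ℝ) : |z| * |(1:ℝ)| ≤ 1 * Real.exp (3 * (|z| + 1)) := by
  have := Real.add_one_le_exp (3 * (|z| + 1))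
  rw [abs_one]
  linarith [abs_nonneg z]

lemma bd1 (z : ℝ) : |z| * |z| ≤ 1 * Real.exp (3 * (|z| + 1)) := by
  have h1 := Real.pow_div_factorial_le_exp (3 * (|z| + 1)) (by positivity) 2
  simp [Nat.factorial] at h1
  nlinarith [abs_nonneg z]

lemma bd2 (z : ℝ) : |z| * |(z ^ 2 - 1) / 2| ≤ 1 * Real.exp (3 * (|z| + 1)) := by
  have h1 := Real.pow_div_factorial_le_exp (3 * (|z| + 1)) (by positivity) 3
  simp [Nat.factorial] at h1
  have hz := abs_nonneg z
  have h2 : |(z ^ 2 - 1) / 2| ≤ (|z| ^ 2 + 1) / 2 := by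
    rw [abs_div, abs_of_pos (by norm_num : (0:ℝ) < 2), sq_abs]
    have := abs_sub (z ^ 2) 1
    rw [abs_one, abs_of_nonneg (sq_nonneg z)] at this
    linarith
  have h3 : |z| * |(z ^ 2 - 1) / 2| ≤ |z| * ((|z| ^ 2 + 1) / 2) := by gcongr
  have h4 : 0 ≤ |z| ^ 3 := by positivity
  nlinarith [sq_nonneg |z|]

lemma gga_bd {h : ℝ → ℝ} (hl : ∀ x y, |h x - h y| ≤ |x - y|) (x : ℝ) {t : ℝ} (ht : 0 < t) :
    |gga h x t| ≤ K3 := by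
  have := (int_gen hl x t continuous_id bd1).2
  have hs := Real.sqrt_pos.2 ht
  rw [gga, abs_div, abs_of_pos hs, div_le_iff₀ hs]
  simp only [id] at this
  linarith

lemma ggb_bd {h : ℝ → ℝ} (hl : ∀ x y, |h x - h y| ≤ |x - y|) (x : ℝ) {t : ℝ} (ht : 0 < t) :
    |ggb h x t| ≤ K3 / √t := by
  have := (int_gen hl x t (k := fun z => (z ^ 2 - 1) / 2) (by fun_prop) bd2).2
  have hs := Real.sqrt_pos.2 ht
  have h2 := Real.mul_self_sqrt ht.le
  rw [ggb, abs_div, abs_of_pos ht, div_le_div_iff₀ ht hs]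
  have h3 := mul_le_mul_of_nonneg_right this hs.le
  have h4 : √t * 1 * K3 * √t = K3 * (√t * √t) := by ring
  rw [h4, h2] at h3
  exact h3

lemma gphi_int {h : ℝ → ℝ} (hl : ∀ x y, |h x - h y| ≤ |x - y|) (x t : ℝ) :
    Integrable (fun z => h (x + √t * z)) (gaussianReal 0 1) := by
  have := (int_gen hl x t continuous_const bd0).1.add (integrable_const (h x))
  refine this.congr (ae_of_all _ fun z => ?_)
  simp

lemma gphi_lip {h : ℝ → ℝ} (hl : ∀ x y, |h x - h y| ≤ |x - y|) (x y t : ℝ) :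
    |gphi h x t - gphi h y t| ≤ |x - y| := by
  rw [gphi, gphi, ← integral_sub (gphi_int hl x t) (gphi_int hl y t)]
  have := norm_integral_le_of_norm_le_const (μ := gaussianReal 0 1) (C := |x - y|)
    (f := fun z => h (x + √t * z) - h (y + √t * z)) (ae_of_all _ fun z => by
      refine (hl _ _).trans (le_of_eq ?_); congr 1; ring)
  simpa using this

lemma gphi_expand {h : ℝ → ℝ} (hl : ∀ x y, |h x - h y| ≤ |x - y|) (x y : ℝ) {t : ℝ} (ht : 0 < t) :
    |gphi h (x + y) t - gphi h x t - gga h x t * y - ggb h x t * y ^ 2| ≤ 7 * K3 * (|y| ^ 3 / t) := by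
  have hs := Real.sqrt_pos.2 ht
  have hss := Real.mul_self_sqrt ht.le
  have hK := one_le_K3
  set r := √t with hr
  set v := y / r with hv
  have hy : y = r * v := by rw [hv]; field_simp
  have hya : |y| = r * |v| := by rw [hy, abs_mul, abs_of_pos hs]
  have hy3 : |y| ^ 3 / t = r * |v| ^ 3 := by
    rw [hya, ← hss]; field_simp
  rw [hy3]
  rcases le_or_gt |v| 1 with h1 | h1
  · -- small increments
    have i0 := (int_gen hl x t continuous_const bd0).1
    have i1 := (int_gen hl x t continuous_id bd1).1
    have i2 := (int_gen hl x t (k := fun z => (z ^ 2 - 1) / 2) (by fun_prop) bd2).1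
    have i3 := int_gen hl x t
      (k := fun z => Real.exp (v * z - v ^ 2 / 2) - 1 - v * z - v ^ 2 * ((z ^ 2 - 1) / 2)) (by fun_prop)
      (c := 7 * |v| ^ 3) (fun z => herm_rem v z h1)
    have e1 : gphi h (x + y) t - h x = ∫ z, (h (x + r * z) - h x) * Real.exp (v * z - v ^ 2 / 2) ∂gaussianReal 0 1 := by
      rw [← gauss_shift (fun z => h (x + r * z) - h x) v]
      have : h x = ∫ z : ℝ, h x ∂gaussianReal 0 1 := by simp
      rw [gphi]
      conv_lhs => rw [this]
      rw [← integral_sub (gphi_int hl _ _) (integrable_const _)]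
      congr 1
      ext z
      rw [hy]
      congr 2
      ring
    have e2 : gphi h x t - h x = ∫ z, (h (x + r * z) - h x) * 1 ∂gaussianReal 0 1 := by
      have : h x = ∫ z : ℝ, h x ∂gaussianReal 0 1 := by simp
      rw [gphi]
      conv_lhs => rw [this]
      rw [← integral_sub (gphi_int hl _ _) (integrable_const _)]
      simp [hr]
    have e3 : gga h x t * y = v * ∫ z, (h (x + r * z) - h x) * id z ∂gaussianReal 0 1 := by
      rw [gga, hv]; simp only [id]; ring
    have e4 : ggb h x t * y ^ 2 = v ^ 2 * ∫ z, (h (x + r * z) - h x) * ((z ^ 2 - 1) / 2) ∂gaussianReal 0 1 := by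
      rw [ggb, hv, div_pow, sq r, hss]; ring
    rw [← hr] at i0 i1 i2 i3
    have j01 : Integrable (fun z => (h (x + r * z) - h x) * 1 + v * ((h (x + r * z) - h x) * id z)) (gaussianReal 0 1) :=
      i0.add (i1.const_mul v)
    have j012 : Integrable (fun z => (h (x + r * z) - h x) * 1 + v * ((h (x + r * z) - h x) * id z)
        + v ^ 2 * ((h (x + r * z) - h x) * ((z ^ 2 - 1) / 2))) (gaussianReal 0 1) :=
      j01.add (i2.const_mul _)
    have key : gphi h (x + y) t - gphi h x t - gga h x t * y - ggb h x t * y ^ 2 =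
        ∫ z, (h (x + r * z) - h x) * (Real.exp (v * z - v ^ 2 / 2) - 1 - v * z - v ^ 2 * ((z ^ 2 - 1) / 2)) ∂gaussianReal 0 1 := by
      have : gphi h (x + y) t - gphi h x t - gga h x t * y - ggb h x t * y ^ 2 =
        (gphi h (x + y) t - h x) - ((gphi h x t - h x) + gga h x t * y + ggb h x t * y ^ 2) := by ring
      rw [this, sub_eq_iff_eq_add, e1, e2, e3, e4, ← integral_const_mul, ← integral_const_mul,
        ← integral_add i0 (i1.const_mul v), ← integral_add j01 (i2.const_mul _),
        ← integral_add i3.1 j012]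
      congr 1
      ext z
      simp only [id]
      ring
    rw [key]
    refine i3.2.trans (le_of_eq ?_)
    ring
  · have b1 := gphi_lip hl (x + y) x t
    have b2 := gga_bd hl x ht
    have b3 := ggb_bd hl x ht
    rw [add_sub_cancel_left] at b1
    have hv2 : |v| ≤ |v| ^ 3 := le_self_pow₀ h1.le (by norm_num)
    have hv3 : |v| ^ 2 ≤ |v| ^ 3 := pow_le_pow_right₀ h1.le (by norm_num)
    have c2 : |gga h x t * y| ≤ K3 * (r * |v| ^ 3) := by
      rw [abs_mul, hya]; gcongr
    have c3 : |ggb h x t * y ^ 2| ≤ K3 * (r * |v| ^ 3) := by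
      rw [abs_mul, abs_pow, hya]
      calc _ ≤ K3 / r * (r * |v|) ^ 2 := by gcongr
        _ = K3 * (r * |v| ^ 2) := by field_simp
        _ ≤ _ := by gcongr
    have c1 : |gphi h (x + y) t - gphi h x t| ≤ K3 * (r * |v| ^ 3) := by
      refine b1.trans ?_
      rw [hya]
      calc r * |v| ≤ r * |v| ^ 3 := by gcongr
        _ ≤ K3 * (r * |v| ^ 3) := le_mul_of_one_le_left (by positivity) hK
    have d1 := abs_sub (gphi h (x + y) t - gphi h x t - gga h x t * y) (ggb h x t * y ^ 2)
    have d2 := abs_sub (gphi h (x + y) t - gphi h x t) (gga h x t * y)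
    have : 0 ≤ K3 * (r * |v| ^ 3) := by positivity
    linarith

lemma bd3 (z : ℝ) : |z| ^ 3 ≤ Real.exp (3 * (|z| + 1)) := by
  have h1 := Real.pow_div_factorial_le_exp (3 * (|z| + 1)) (by positivity) 3
  simp [Nat.factorial] at h1
  have hz := abs_nonneg z
  have h4 : 0 ≤ |z| ^ 3 := by positivity
  nlinarith [sq_nonneg |z|]

lemma int_abs1 : Integrable (fun z : ℝ => |z|) (gaussianReal 0 1) :=
  int_exp3.mono' (by fun_prop) (ae_of_all _ fun z => by simpa using bd0 z)

lemma int_id1 : Integrable (fun z : ℝ => z) (gaussianReal 0 1) :=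
  int_exp3.mono' (by fun_prop) (ae_of_all _ fun z => by simpa using bd0 z)

lemma int_sq1 : Integrable (fun z : ℝ => z ^ 2) (gaussianReal 0 1) :=
  int_exp3.mono' (by fun_prop) (ae_of_all _ fun z => by
    have := bd1 z
    simp only [norm_pow, Real.norm_eq_abs]; nlinarith)

lemma int_cube1 : Integrable (fun z : ℝ => |z| ^ 3) (gaussianReal 0 1) :=
  int_exp3.mono' (by fun_prop) (ae_of_all _ fun z => by simpa using bd3 z)

lemma mom1 : ∫ z : ℝ, |z| ∂gaussianReal 0 1 ≤ K3 :=
  integral_mono int_abs1 int_exp3 fun z => by simpa using bd0 z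

lemma mom3 : ∫ z : ℝ, |z| ^ 3 ∂gaussianReal 0 1 ≤ K3 :=
  integral_mono int_cube1 int_exp3 fun z => bd3 z

lemma mom2 : ∫ z : ℝ, z ^ 2 ∂gaussianReal 0 1 = 1 := by
  have h := variance_fun_id_gaussianReal (μ := 0) (v := 1)
  rw [variance_of_integral_eq_zero (by fun_prop) (by simp)] at h
  simpa using h

lemma gphi_zero (h : ℝ → ℝ) (x : ℝ) : gphi h x 0 = h x := by simp [gphi]

lemma map_sqrt {t : ℝ} (ht : 0 ≤ t) :
    (gaussianReal 0 1).map (fun z => √t * z) = gaussianReal 0 t.toNNReal := by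
  rw [gaussianReal_map_const_mul]
  congr 1
  · simp
  · ext; simp [Real.sq_sqrt ht, ht]

lemma gphi_conv {h : ℝ → ℝ} (hl : ∀ x y, |h x - h y| ≤ |x - y|) (x : ℝ) {s t : ℝ} (hs : 0 ≤ s) (ht : 0 ≤ t) :
    gphi h x (t + s) = ∫ z, gphi h (x + √s * z) t ∂gaussianReal 0 1 := by
  have hc := lip_cont hl
  have h1 : gphi h x (t + s) = ∫ y, h (x + y) ∂gaussianReal 0 (t + s).toNNReal := by
    rw [← map_sqrt (add_nonneg ht hs), integral_map (by fun_prop) (by fun_prop)]; rfl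
  have h2 : gaussianReal 0 (t + s).toNNReal = gaussianReal 0 s.toNNReal ∗ gaussianReal 0 t.toNNReal := by
    rw [gaussianReal_conv_gaussianReal]
    congr 1
    · simp
    · rw [Real.toNNReal_add ht hs, add_comm]
  rw [h1, h2, ← map_sqrt hs, ← map_sqrt ht, Measure.conv]
  rw [Measure.map_prod_map _ _ (by fun_prop) (by fun_prop),
    Measure.map_map (by fun_prop) (by fun_prop), integral_map (by fun_prop) (by fun_prop)]
  rw [integral_prod]
  · simp only [gphi, Function.comp, Prod.map]
    congr 1; ext z; congr 1; ext w; congr 1; ring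
  · have i1 : Integrable (fun p : ℝ × ℝ => |p.1|) ((gaussianReal 0 1).prod (gaussianReal 0 1)) :=
      Integrable.comp_fst int_abs1 _
    have i2 : Integrable (fun p : ℝ × ℝ => |p.2|) ((gaussianReal 0 1).prod (gaussianReal 0 1)) :=
      Integrable.comp_snd int_abs1 _
    refine (((i1.const_mul √s).add (i2.const_mul √t)).add (integrable_const |h x|)).mono' (by fun_prop)
      (ae_of_all _ fun p => ?_)
    have := hl (x + (√s * p.1 + √t * p.2)) x
    rw [add_sub_cancel_left] at this
    have h3 := abs_add_le (√s * p.1) (√t * p.2)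
    rw [abs_mul, abs_mul, abs_of_nonneg (Real.sqrt_nonneg _), abs_of_nonneg (Real.sqrt_nonneg _)] at h3
    have h4 := abs_add_le (h (x + (√s * p.1 + √t * p.2)) - h x) (h x)
    rw [sub_add_cancel] at h4
    simp only [Function.comp, Prod.map, Real.norm_eq_abs, Pi.add_apply]
    linarith

lemma gphi_meas {h : ℝ → ℝ} (hc : Continuous h) : Measurable (fun p : ℝ × ℝ => gphi h p.1 p.2) := by
  unfold gphi
  refine StronglyMeasurable.measurable ?_
  refine StronglyMeasurable.integral_prod_right' (f := fun q : (ℝ × ℝ) × ℝ => h (q.1.1 + √q.1.2 * q.2)) ?_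
  exact Continuous.stronglyMeasurable (by fun_prop)

lemma gga_meas {h : ℝ → ℝ} (hc : Continuous h) : Measurable (fun p : ℝ × ℝ => gga h p.1 p.2) := by
  unfold gga
  refine Measurable.div (StronglyMeasurable.measurable ?_) (by fun_prop)
  refine StronglyMeasurable.integral_prod_right'
    (f := fun q : (ℝ × ℝ) × ℝ => (h (q.1.1 + √q.1.2 * q.2) - h q.1.1) * q.2) ?_
  exact Continuous.stronglyMeasurable (by fun_prop)

lemma ggb_meas {h : ℝ → ℝ} (hc : Continuous h) : Measurable (fun p : ℝ × ℝ => ggb h p.1 p.2) := by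
  unfold ggb
  refine Measurable.div (StronglyMeasurable.measurable ?_) (by fun_prop)
  refine StronglyMeasurable.integral_prod_right'
    (f := fun q : (ℝ × ℝ) × ℝ => (h (q.1.1 + √q.1.2 * q.2) - h q.1.1) * ((q.2 ^ 2 - 1) / 2)) ?_
  exact Continuous.stronglyMeasurable (by fun_prop)

lemma gphi_shift_int {h : ℝ → ℝ} (hl : ∀ x y, |h x - h y| ≤ |x - y|) (x s t : ℝ) :
    Integrable (fun z => gphi h (x + √s * z) t - gphi h x t) (gaussianReal 0 1) := by
  refine (int_abs1.const_mul √s).mono' ?_ (ae_of_all _ fun z => ?_)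
  · have := (gphi_meas (lip_cont hl)).comp (f := fun z : ℝ => (x + √s * z, t)) (by fun_prop)
    exact (this.sub measurable_const).aestronglyMeasurable
  · have := gphi_lip hl (x + √s * z) x t
    rwa [add_sub_cancel_left, abs_mul, abs_of_nonneg (Real.sqrt_nonneg _)] at this

lemma gphi_conv_sub {h : ℝ → ℝ} (hl : ∀ x y, |h x - h y| ≤ |x - y|) (x : ℝ) {s t : ℝ} (hs : 0 ≤ s) (ht : 0 ≤ t) :
    gphi h x (t + s) - gphi h x t = ∫ z, (gphi h (x + √s * z) t - gphi h x t) ∂gaussianReal 0 1 := by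
  have i := (gphi_shift_int hl x s t).add (integrable_const (gphi h x t))
  have i' : Integrable (fun z => gphi h (x + √s * z) t) (gaussianReal 0 1) :=
    i.congr (ae_of_all _ fun z => by simp)
  rw [integral_sub i' (integrable_const _), gphi_conv hl x hs ht]
  simp

lemma gphi_var_lip {h : ℝ → ℝ} (hl : ∀ x y, |h x - h y| ≤ |x - y|) (x : ℝ) {s t : ℝ} (hs : 0 ≤ s) (ht : 0 ≤ t) :
    |gphi h x (t + s) - gphi h x t| ≤ K3 * √s := by
  rw [gphi_conv_sub hl x hs ht]
  have := norm_integral_le_of_norm_le (int_abs1.const_mul √s)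
    (f := fun z => gphi h (x + √s * z) t - gphi h x t) (ae_of_all _ fun z => by
      have := gphi_lip hl (x + √s * z) x t
      rwa [add_sub_cancel_left, abs_mul, abs_of_nonneg (Real.sqrt_nonneg _)] at this)
  rw [integral_const_mul] at this
  refine this.trans ?_
  rw [mul_comm]
  gcongr
  exact mom1

lemma gphi_var {h : ℝ → ℝ} (hl : ∀ x y, |h x - h y| ≤ |x - y|) (x : ℝ) {s t : ℝ} (hs : 0 ≤ s) (ht : 0 < t) :
    |gphi h x (t + s) - gphi h x t - ggb h x t * s| ≤ 7 * K3 * (K3 * √s ^ 3 / t) := by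
  have hK := one_le_K3
  have i0 := gphi_shift_int hl x s t
  have i1 := int_id1.const_mul (gga h x t * √s)
  have i2 := int_sq1.const_mul (ggb h x t * s)
  have e : gphi h x (t + s) - gphi h x t - ggb h x t * s =
      ∫ z, (gphi h (x + √s * z) t - gphi h x t - gga h x t * √s * z - ggb h x t * s * z ^ 2) ∂gaussianReal 0 1 := by
    have i01 : Integrable (fun z => gphi h (x + √s * z) t - gphi h x t - gga h x t * √s * z) (gaussianReal 0 1) :=
      i0.sub i1
    rw [integral_sub i01 i2, integral_sub i0 i1, ← gphi_conv_sub hl x hs ht.le, integral_const_mul,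
      integral_const_mul, mom2]
    simp
  rw [e]
  have := norm_integral_le_of_norm_le (int_cube1.const_mul (7 * K3 * (√s ^ 3 / t)))
    (f := fun z => gphi h (x + √s * z) t - gphi h x t - gga h x t * √s * z - ggb h x t * s * z ^ 2) (ae_of_all _ fun z => by
      have := gphi_expand hl x (√s * z) ht
      rw [mul_pow, Real.sq_sqrt hs, abs_mul, abs_of_nonneg (Real.sqrt_nonneg s)] at this
      rw [Real.norm_eq_abs]
      refine (le_of_eq ?_).trans (this.trans (le_of_eq ?_))
      · congr 1; ring
      · ring)
  rw [integral_const_mul] at this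
  refine this.trans ?_
  calc _ ≤ 7 * K3 * (√s ^ 3 / t) * K3 := by gcongr; exact mom3
    _ = _ := by ring

lemma one_step_pt {h : ℝ → ℝ} (hl : ∀ x y, |h x - h y| ≤ |x - y|) {L : ℝ} (hL : 0 < L) (x y : ℝ) {s t : ℝ}
    (hs : 0 ≤ s) (hsL : s ≤ L ^ 2) (ht : 0 < t) (hy : |y| ≤ L) :
    |gphi h (x + y) t - gphi h x (t + s) - gga h x t * y - ggb h x t * (y ^ 2 - s)| ≤
      7 * K3 ^ 2 * L * ((y ^ 2 + s) / t) := by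
  have hK := one_le_K3
  have h1 := gphi_expand hl x y ht
  have h2 := gphi_var hl x hs ht
  have hsq : √s ≤ L := by rw [Real.sqrt_le_iff]; exact ⟨hL.le, hsL⟩
  have c1 : |y| ^ 3 / t ≤ L * (y ^ 2 / t) := by
    have : |y| ^ 3 = |y| * y ^ 2 := by rw [pow_succ, sq_abs]; ring
    rw [this, mul_div_assoc]; gcongr
  have c2 : √s ^ 3 / t ≤ L * (s / t) := by
    have : √s ^ 3 = √s * s := by rw [pow_succ, Real.sq_sqrt hs]; ring
    rw [this, mul_div_assoc]; gcongr
  have d1 : 7 * K3 * (|y| ^ 3 / t) ≤ 7 * K3 ^ 2 * (L * (y ^ 2 / t)) := by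
    have : 7 * K3 ≤ 7 * K3 ^ 2 := by nlinarith
    gcongr
  have d2 : 7 * K3 * (K3 * √s ^ 3 / t) ≤ 7 * K3 ^ 2 * (L * (s / t)) := by
    calc _ = 7 * K3 ^ 2 * (√s ^ 3 / t) := by ring
      _ ≤ _ := by gcongr
  have e : gphi h (x + y) t - gphi h x (t + s) - gga h x t * y - ggb h x t * (y ^ 2 - s) =
    (gphi h (x + y) t - gphi h x t - gga h x t * y - ggb h x t * y ^ 2) -
      (gphi h x (t + s) - gphi h x t - ggb h x t * s) := by ring
  rw [e]
  refine (abs_sub _ _).trans ?_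
  have : 7 * K3 ^ 2 * L * ((y ^ 2 + s) / t) = 7 * K3 ^ 2 * (L * (y ^ 2 / t)) + 7 * K3 ^ 2 * (L * (s / t)) := by ring
  rw [this]
  linarith

/-- Everywhere-bounded version of a martingale difference sequence together with its
conditional variances. -/
structure Core {Ω : Type} [m0 : MeasurableSpace Ω] (μ : Measure Ω) (F : ℕ → MeasurableSpace Ω) (L : ℝ)
    (X v : ℕ → Ω → ℝ) : Prop where
  Fle : ∀ k, F k ≤ m0
  Fmono : Monotone F
  Xm : ∀ k, Measurable[F (k + 1)] (X k)
  Xb : ∀ k ω, |X k ω| ≤ L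
  vm : ∀ k, Measurable[F k] (v k)
  v0 : ∀ k ω, 0 ≤ v k ω
  vL : ∀ k ω, v k ω ≤ L ^ 2
  m1 : ∀ k (g : Ω → ℝ), Measurable[F k] g → (∃ c, ∀ ω, |g ω| ≤ c) → ∫ ω, g ω * X k ω ∂μ = 0
  m2 : ∀ k (g : Ω → ℝ), Measurable[F k] g → (∃ c, ∀ ω, |g ω| ≤ c) →
    ∫ ω, g ω * X k ω ^ 2 ∂μ = ∫ ω, g ω * v k ω ∂μ

def psum {Ω : Type} (X : ℕ → Ω → ℝ) (n : ℕ) (ω : Ω) : ℝ := ∑ k ∈ Finset.range n, X k ω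

lemma psum_zero {Ω : Type} (X : ℕ → Ω → ℝ) (ω : Ω) : psum X 0 ω = 0 := by simp [psum]
lemma psum_succ {Ω : Type} (X : ℕ → Ω → ℝ) (n : ℕ) (ω : Ω) : psum X (n + 1) ω = psum X n ω + X n ω := by
  simp [psum, Finset.sum_range_succ]

namespace Core
variable {Ω : Type} [m0 : MeasurableSpace Ω] {μ : Measure Ω} {F : ℕ → MeasurableSpace Ω} {L : ℝ}
    {X v : ℕ → Ω → ℝ}

lemma S_meas (hC : Core μ F L X v) (n : ℕ) : Measurable[F n] (psum X n) := by
  induction n with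
  | zero => 
    have : psum X 0 = fun _ => 0 := by ext ω; exact psum_zero X ω
    rw [this]; exact measurable_const
  | succ n ih =>
    have : psum X (n + 1) = fun ω => psum X n ω + X n ω := by ext ω; exact psum_succ X n ω
    rw [this]
    exact Measurable.add (ih.mono (hC.Fmono (Nat.le_succ n)) le_rfl) (hC.Xm n)

/-- predictability of the bracket -/
lemma Q_meas (hC : Core μ F L X v) (n : ℕ) : Measurable[F n] (psum v (n + 1)) := by
  induction n with
  | zero =>
    have : psum v 1 = v 0 := by ext ω; simp [psum]
    rw [zero_add, this]; exact hC.vm 0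
  | succ n ih =>
    have : psum v (n + 1 + 1) = fun ω => psum v (n + 1) ω + v (n + 1) ω := by ext ω; exact psum_succ v _ ω
    rw [this]
    exact Measurable.add (ih.mono (hC.Fmono (Nat.le_succ n)) le_rfl) (hC.vm _)

lemma Q_meas' (hC : Core μ F L X v) (n : ℕ) : Measurable[F n] (psum v n) := by
  cases n with
  | zero =>
    have : psum v 0 = fun _ => 0 := by ext ω; exact psum_zero v ω
    rw [this]; exact measurable_const
  | succ n => exact (hC.Q_meas n).mono (hC.Fmono (Nat.le_succ n)) le_rfl

lemma Q_nonneg (hC : Core μ F L X v) (n : ℕ) (ω : Ω) : 0 ≤ psum v n ω :=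
  Finset.sum_nonneg fun k _ => hC.v0 k ω

lemma Q_le (hC : Core μ F L X v) (n : ℕ) (ω : Ω) : psum v n ω ≤ n * L ^ 2 := by
  have := Finset.sum_le_card_nsmul (Finset.range n) (fun k => v k ω) (L ^ 2) fun k _ => hC.vL k ω
  simpa [psum] using this

lemma S_le (hC : Core μ F L X v) (n : ℕ) (ω : Ω) : |psum X n ω| ≤ n * L := by
  have h1 := Finset.abs_sum_le_sum_abs (fun k => X k ω) (Finset.range n)
  have := Finset.sum_le_card_nsmul (Finset.range n) (fun k => |X k ω|) L fun k _ => hC.Xb k ω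
  simp only [Finset.card_range, nsmul_eq_mul] at this
  exact h1.trans this

lemma restr (hC : Core μ F L X v) (θ : ℕ → Ω → ℝ) (hm : ∀ k, Measurable[F k] (θ k))
    (h01 : ∀ k ω, θ k ω = 0 ∨ θ k ω = 1) :
    Core μ F L (fun k ω => θ k ω * X k ω) (fun k ω => θ k ω * v k ω) where
  Fle := hC.Fle
  Fmono := hC.Fmono
  Xm k := Measurable.mul ((hm k).mono (hC.Fmono (Nat.le_succ k)) le_rfl) (hC.Xm k)
  Xb k ω := by
    have := hC.Xb k ω
    rcases h01 k ω with h | h <;> simp only [h, zero_mul, one_mul, abs_zero]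
    · exact (abs_nonneg _).trans this
    · exact this
  vm k := Measurable.mul (hm k) (hC.vm k)
  v0 k ω := by
    rcases h01 k ω with h | h <;> simp only [h, zero_mul, one_mul, le_refl]
    exact hC.v0 k ω
  vL k ω := by
    rcases h01 k ω with h | h <;> simp only [h, zero_mul, one_mul]
    · positivity
    · exact hC.vL k ω
  m1 k g hg := by
    rintro ⟨c, hc⟩
    have := hC.m1 k (fun ω => g ω * θ k ω) (Measurable.mul hg (hm k)) ⟨c, fun ω => by
      have h2 := hc ω
      rcases h01 k ω with h | h <;> simp only [h, mul_zero, mul_one, abs_zero]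
      · exact (abs_nonneg _).trans h2
      · exact h2⟩
    simp only [mul_assoc] at this
    exact this
  m2 k g hg := by
    rintro ⟨c, hc⟩
    have := hC.m2 k (fun ω => g ω * θ k ω) (Measurable.mul hg (hm k)) ⟨c, fun ω => by
      have h2 := hc ω
      rcases h01 k ω with h | h <;> simp only [h, mul_zero, mul_one, abs_zero]
      · exact (abs_nonneg _).trans h2
      · exact h2⟩
    simp only [mul_assoc] at this
    rw [← this]
    congr 1; ext ω
    rcases h01 k ω with h | h <;> simp [h]

end Core

lemma bdd_int {Ω : Type} [m0 : MeasurableSpace Ω] {μ : Measure Ω} [IsProbabilityMeasure μ] {f : Ω → ℝ}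
    (hf : Measurable f) {c : ℝ} (hb : ∀ ω, |f ω| ≤ c) : Integrable f μ :=
  Integrable.of_bound hf.aestronglyMeasurable c (ae_of_all _ hb)

lemma sqrt_sub_le_aux {A s x : ℝ} (hA : 0 < A) (hs : 0 ≤ s) :
    √(x ^ 2 + (A + s)) + s / (2 * √(x ^ 2 + (A + s))) ≤ √(x ^ 2 + A) + 2 * (√(A + s) - √A) := by
  have hx := sq_nonneg x
  have h1 : √(A + s) - √A = s / (√(A + s) + √A) := by
    have a := Real.sqrt_pos.2 hA
    have b := Real.sqrt_nonneg (A + s)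
    rw [eq_div_iff (by positivity)]
    nlinarith [Real.mul_self_sqrt hA.le, Real.mul_self_sqrt (show 0 ≤ A + s by positivity)]
  have hA' : 0 < x ^ 2 + A := by positivity
  have h2 : √(x ^ 2 + (A + s)) - √(x ^ 2 + A) = s / (√(x ^ 2 + (A + s)) + √(x ^ 2 + A)) := by
    have a := Real.sqrt_pos.2 hA'
    have b := Real.sqrt_nonneg (x ^ 2 + (A + s))
    rw [eq_div_iff (by positivity)]
    nlinarith [Real.mul_self_sqrt hA'.le, Real.mul_self_sqrt (show 0 ≤ x ^ 2 + (A + s) by positivity)]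
  have m1 : √(A + s) ≤ √(x ^ 2 + (A + s)) := Real.sqrt_le_sqrt (by linarith)
  have m2 : √A ≤ √(x ^ 2 + A) := Real.sqrt_le_sqrt (by linarith)
  have m3 : √A ≤ √(A + s) := Real.sqrt_le_sqrt (by linarith)
  have p := Real.sqrt_pos.2 hA
  have g1 : s / (√(x ^ 2 + (A + s)) + √(x ^ 2 + A)) ≤ s / (√(A + s) + √A) := by gcongr
  have g2 : s / (2 * √(x ^ 2 + (A + s))) ≤ s / (√(A + s) + √A) := by
    apply div_le_div_of_nonneg_left hs (by positivity); linarith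
  linarith

lemma sqrt_tangent {u w : ℝ} (hu : 0 ≤ u) (hw : 0 < w) : √u ≤ √w + (u - w) / (2 * √w) := by
  have a := Real.sqrt_pos.2 hw
  have : √w + (u - w) / (2 * √w) - √u = (√u - √w) ^ 2 / (2 * √w) := by
    field_simp
    nlinarith [Real.mul_self_sqrt hw.le, Real.mul_self_sqrt hu]
  have h2 : 0 ≤ (√u - √w) ^ 2 / (2 * √w) := by positivity
  linarith

lemma sqrt_add_le' (a b : ℝ) (ha : 0 ≤ a) (hb : 0 ≤ b) : √(a + b) ≤ √a + √b := by
  rw [Real.sqrt_le_iff]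
  refine ⟨by positivity, ?_⟩
  nlinarith [Real.sq_sqrt ha, Real.sq_sqrt hb, mul_nonneg (Real.sqrt_nonneg a) (Real.sqrt_nonneg b)]

/-- First-moment Burkholder/Lenglart inequality. -/
lemma Core.bdg {Ω : Type} [m0 : MeasurableSpace Ω] {μ : Measure Ω} [IsProbabilityMeasure μ]
    {F : ℕ → MeasurableSpace Ω} {L : ℝ} {X v : ℕ → Ω → ℝ} (hC : Core μ F L X v) (n : ℕ) :
    ∫ ω, |psum X n ω| ∂μ ≤ 2 * ∫ ω, √(psum v n ω) ∂μ := by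
  have Sm : ∀ k, Measurable (psum X k) := fun k => (hC.S_meas k).mono (hC.Fle k) le_rfl
  have Qm : ∀ k, Measurable (psum v k) := fun k => (hC.Q_meas' k).mono (hC.Fle k) le_rfl
  have Xm : ∀ k, Measurable (X k) := fun k => (hC.Xm k).mono (hC.Fle _) le_rfl
  have vm : ∀ k, Measurable (v k) := fun k => (hC.vm k).mono (hC.Fle _) le_rfl
  have Sb := hC.S_le
  have Qb := hC.Q_le
  have Q0 := hC.Q_nonneg
  have S2b : ∀ k ω, psum X k ω ^ 2 ≤ (k * L) ^ 2 := fun k ω => by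
    rw [← sq_abs]; exact pow_le_pow_left₀ (abs_nonneg _) (Sb k ω) 2
  have main : ∀ ε : ℝ, 0 < ε → ∀ n, ∫ ω, √(psum X n ω ^ 2 + (psum v n ω + ε)) ∂μ ≤
      2 * ∫ ω, √(psum v n ω + ε) ∂μ := by
    intro ε hε n
    have iA : ∀ k, Integrable (fun ω => √(psum v k ω + ε)) μ := fun k =>
      bdd_int (c := √(k * L ^ 2 + ε)) (by have := Qm k; fun_prop) fun ω => by
        rw [abs_of_nonneg (Real.sqrt_nonneg _)]
        exact Real.sqrt_le_sqrt (by linarith [Qb k ω])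
    have iW : ∀ k, Integrable (fun ω => √(psum X k ω ^ 2 + (psum v k ω + ε))) μ := fun k =>
      bdd_int (c := √((k * L) ^ 2 + (k * L ^ 2 + ε))) (by have := Qm k; have := Sm k; fun_prop) fun ω => by
        rw [abs_of_nonneg (Real.sqrt_nonneg _)]
        exact Real.sqrt_le_sqrt (by linarith [Qb k ω, S2b k ω])
    induction n with
    | zero =>
      simp only [psum_zero]
      simp
      linarith [Real.sqrt_nonneg ε]
    | succ k ih =>
      set W : Ω → ℝ := fun ω => √(psum X k ω ^ 2 + (psum v k ω + ε + v k ω)) with hW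
      have Wε : ∀ ω, √ε ≤ W ω := fun ω =>
        Real.sqrt_le_sqrt (by nlinarith [Q0 k ω, hC.v0 k ω, sq_nonneg (psum X k ω)])
      have hsε := Real.sqrt_pos.2 hε
      have Wpos : ∀ ω, 0 < W ω := fun ω => lt_of_lt_of_le hsε (Wε ω)
      have WmF : Measurable[F k] W := by
        have a := hC.S_meas k
        have b := hC.Q_meas' k
        have c := hC.vm k
        exact Measurable.sqrt (Measurable.add (Measurable.pow_const a 2)
          (Measurable.add (Measurable.add b measurable_const) c))
      have Wm : Measurable W := WmF.mono (hC.Fle _) le_rfl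
      set g1 : Ω → ℝ := fun ω => psum X k ω / W ω with hg1
      set g2 : Ω → ℝ := fun ω => 1 / (2 * W ω) with hg2
      have g1b : ∀ ω, |g1 ω| ≤ k * L / √ε := fun ω => by
        simp only [hg1]
        rw [abs_div, abs_of_pos (Wpos ω)]
        have := Sb k ω
        have h0 : 0 ≤ (k:ℝ) * L := (abs_nonneg _).trans this
        gcongr
        exact Wε ω
      have g2b : ∀ ω, |g2 ω| ≤ 1 / (2 * √ε) := fun ω => by
        simp only [hg2]
        have := Wpos ω
        rw [abs_of_pos (by positivity)]
        gcongr
        exact Wε ω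
      have g1m : Measurable[F k] g1 := Measurable.div (hC.S_meas k) WmF
      have g2m : Measurable[F k] g2 := Measurable.div measurable_const (Measurable.mul measurable_const WmF)
      have e1 := hC.m1 k g1 g1m ⟨_, g1b⟩
      have e2 := hC.m2 k g2 g2m ⟨_, g2b⟩
      have g1m' := g1m.mono (hC.Fle _) le_rfl
      have g2m' := g2m.mono (hC.Fle _) le_rfl
      have hX2 : ∀ ω, |X k ω ^ 2| ≤ L ^ 2 := fun ω => by
        rw [abs_pow]; exact pow_le_pow_left₀ (abs_nonneg _) (hC.Xb k ω) 2
      have hv2 : ∀ ω, |v k ω| ≤ L ^ 2 := fun ω => by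
        rw [abs_of_nonneg (hC.v0 k ω)]; exact hC.vL k ω
      have j1 : Integrable (fun ω => g1 ω * X k ω) μ :=
        bdd_int (c := k * L / √ε * L) (g1m'.mul (Xm k)) fun ω => by
          rw [abs_mul]
          exact mul_le_mul (g1b ω) (hC.Xb k ω) (abs_nonneg _) ((abs_nonneg _).trans (g1b ω))
      have j2 : Integrable (fun ω => g2 ω * X k ω ^ 2) μ :=
        bdd_int (c := 1 / (2 * √ε) * L ^ 2) (g2m'.mul ((Xm k).pow_const 2)) fun ω => by
          rw [abs_mul]
          exact mul_le_mul (g2b ω) (hX2 ω) (abs_nonneg _) ((abs_nonneg _).trans (g2b ω))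
      have j3 : Integrable (fun ω => g2 ω * v k ω) μ :=
        bdd_int (c := 1 / (2 * √ε) * L ^ 2) (g2m'.mul (vm k)) fun ω => by
          rw [abs_mul]
          exact mul_le_mul (g2b ω) (hv2 ω) (abs_nonneg _) ((abs_nonneg _).trans (g2b ω))
      have jW : Integrable W μ := by
        refine bdd_int (c := √((k * L) ^ 2 + (k * L ^ 2 + ε + L ^ 2))) Wm fun ω => ?_
        rw [abs_of_pos (Wpos ω)]
        exact Real.sqrt_le_sqrt (by linarith [Qb k ω, S2b k ω, hC.vL k ω])
      have jW1 : Integrable (fun ω => W ω + g1 ω * X k ω) μ := jW.add j1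
      have step1 : ∫ ω, √(psum X (k + 1) ω ^ 2 + (psum v (k + 1) ω + ε)) ∂μ ≤
          ∫ ω, (W ω + g1 ω * X k ω + g2 ω * X k ω ^ 2) ∂μ := by
        refine integral_mono (iW (k + 1)) (jW1.add j2) fun ω => ?_
        have hw : 0 < psum X k ω ^ 2 + (psum v k ω + ε + v k ω) := by
          nlinarith [Q0 k ω, hC.v0 k ω, sq_nonneg (psum X k ω)]
        have ht := sqrt_tangent (u := psum X (k + 1) ω ^ 2 + (psum v (k + 1) ω + ε))
          (by have := Q0 (k+1) ω; positivity) hw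
        refine ht.trans (le_of_eq ?_)
        have hWp := (Wpos ω).ne'
        simp only [hg1, hg2, psum_succ]
        change W ω + _ / (2 * W ω) = _
        field_simp
        ring
      have step2 : ∫ ω, (W ω + g1 ω * X k ω + g2 ω * X k ω ^ 2) ∂μ = ∫ ω, (W ω + g2 ω * v k ω) ∂μ := by
        rw [integral_add jW1 j2, integral_add jW j1, e1, e2, integral_add jW j3]; ring
      have step3 : ∫ ω, (W ω + g2 ω * v k ω) ∂μ ≤ ∫ ω, (√(psum X k ω ^ 2 + (psum v k ω + ε)) +
          2 * (√(psum v (k + 1) ω + ε) - √(psum v k ω + ε))) ∂μ := by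
        refine integral_mono (jW.add j3) ((iW k).add (((iA (k + 1)).sub (iA k)).const_mul 2)) fun ω => ?_
        have := sqrt_sub_le_aux (A := psum v k ω + ε) (s := v k ω) (x := psum X k ω)
          (by linarith [Q0 k ω]) (hC.v0 k ω)
        have e : psum v (k + 1) ω + ε = psum v k ω + ε + v k ω := by rw [psum_succ]; ring
        simp only [e, hg2]
        refine (le_of_eq ?_).trans this
        simp only [hW]; ring
      have jd : Integrable (fun ω => 2 * (√(psum v (k + 1) ω + ε) - √(psum v k ω + ε))) μ :=
        ((iA (k + 1)).sub (iA k)).const_mul 2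
      rw [integral_add (iW k) jd, integral_const_mul,
        integral_sub (iA (k + 1)) (iA k)] at step3
      linarith
  have fin : ∀ δ : ℝ, 0 < δ → ∫ ω, |psum X n ω| ∂μ ≤ 2 * ∫ ω, √(psum v n ω) ∂μ + 2 * δ := by
    intro δ hδ
    have h := main (δ ^ 2) (by positivity) n
    have hi1 : Integrable (fun ω => |psum X n ω|) μ := (bdd_int (Sm n) (Sb n)).abs
    have hi2 : Integrable (fun ω => √(psum v n ω)) μ :=
      bdd_int (c := √(n * L ^ 2)) (by have := Qm n; fun_prop) fun ω => by
        rw [abs_of_nonneg (Real.sqrt_nonneg _)]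
        exact Real.sqrt_le_sqrt (Qb n ω)
    have iA : Integrable (fun ω => √(psum v n ω + δ ^ 2)) μ :=
      bdd_int (c := √(n * L ^ 2 + δ ^ 2)) (by have := Qm n; fun_prop) fun ω => by
        rw [abs_of_nonneg (Real.sqrt_nonneg _)]
        exact Real.sqrt_le_sqrt (by linarith [Qb n ω])
    have iW : Integrable (fun ω => √(psum X n ω ^ 2 + (psum v n ω + δ ^ 2))) μ :=
      bdd_int (c := √((n * L) ^ 2 + (n * L ^ 2 + δ ^ 2))) (by have := Qm n; have := Sm n; fun_prop) fun ω => by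
        rw [abs_of_nonneg (Real.sqrt_nonneg _)]
        exact Real.sqrt_le_sqrt (by linarith [Qb n ω, S2b n ω])
    have a1 : ∫ ω, |psum X n ω| ∂μ ≤ ∫ ω, √(psum X n ω ^ 2 + (psum v n ω + δ ^ 2)) ∂μ :=
      integral_mono hi1 iW fun ω => by
        refine Real.abs_le_sqrt ?_
        nlinarith [Q0 n ω]
    have a2 : ∫ ω, √(psum v n ω + δ ^ 2) ∂μ ≤ ∫ ω, (√(psum v n ω) + δ) ∂μ :=
      integral_mono iA (hi2.add (integrable_const δ)) fun ω => by
        have := sqrt_add_le' (psum v n ω) (δ ^ 2) (Q0 n ω) (sq_nonneg _)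
        rwa [Real.sqrt_sq hδ.le] at this
    rw [integral_add hi2 (integrable_const δ)] at a2
    simp at a2
    linarith
  refine le_of_forall_pos_le_add fun δ hδ => ?_
  have := fin (δ / 2) (by positivity)
  linarith

lemma log_aux {s t : ℝ} (hs : 0 ≤ s) (hst : s ≤ t) (ht : 0 < t) :
    s / t ≤ 2 * (Real.log (t + s) - Real.log t) := by
  rw [← Real.log_div (by positivity) ht.ne']
  have h := Real.one_sub_inv_le_log_of_pos (show 0 < (t + s) / t by positivity)
  have e : 1 - ((t + s) / t)⁻¹ = s / (t + s) := by field_simp; ring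
  rw [e] at h
  have : s / (t + t) ≤ s / (t + s) := by gcongr
  have e2 : s / (t + t) = s / t / 2 := by field_simp; ring
  linarith

lemma gphi_abs {h : ℝ → ℝ} (hl : ∀ x y, |h x - h y| ≤ |x - y|) (x : ℝ) {t : ℝ} (ht : 0 ≤ t) :
    |gphi h x t| ≤ |h 0| + |x| + K3 * √t := by
  have h1 := gphi_var_lip hl x ht le_rfl
  rw [zero_add, gphi_zero] at h1
  have h2 := hl x 0
  rw [sub_zero] at h2
  have e : gphi h x t = (gphi h x t - h x) + (h x - h 0) + h 0 := by ring
  rw [e]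
  have a1 := abs_add_le (gphi h x t - h x + (h x - h 0)) (h 0)
  have a2 := abs_add_le (gphi h x t - h x) (h x - h 0)
  linarith

/-- Lindeberg telescoping for a martingale whose bracket never exceeds one. -/
lemma Core.lindeberg {Ω : Type} [m0 : MeasurableSpace Ω] {μ : Measure Ω} [IsProbabilityMeasure μ]
    {F : ℕ → MeasurableSpace Ω} {L : ℝ} {X v : ℕ → Ω → ℝ} (hC : Core μ F L X v) (hL : 0 < L)
    (hQ : ∀ n ω, psum v n ω ≤ 1)
    {h : ℝ → ℝ} (hl : ∀ x y, |h x - h y| ≤ |x - y|) (n : ℕ) :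
    |∫ ω, gphi h (psum X n ω) (1 + L ^ 2 - psum v n ω) ∂μ - gphi h 0 (1 + L ^ 2)| ≤
      28 * K3 ^ 2 * L * (Real.log (1 + L ^ 2) - Real.log (L ^ 2)) := by
  have hc := lip_cont hl
  have hK := one_le_K3
  have Sm : ∀ k, Measurable (psum X k) := fun k => (hC.S_meas k).mono (hC.Fle k) le_rfl
  have Qm : ∀ k, Measurable (psum v k) := fun k => (hC.Q_meas' k).mono (hC.Fle k) le_rfl
  have Xm : ∀ k, Measurable (X k) := fun k => (hC.Xm k).mono (hC.Fle _) le_rfl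
  have vm : ∀ k, Measurable (v k) := fun k => (hC.vm k).mono (hC.Fle _) le_rfl
  have Sb := hC.S_le
  have Q0 := hC.Q_nonneg
  have hL2 : 0 < L ^ 2 := by positivity
  set T : ℕ → Ω → ℝ := fun k ω => 1 + L ^ 2 - psum v k ω with hT
  have TL : ∀ k ω, L ^ 2 ≤ T k ω := fun k ω => by simp only [hT]; linarith [hQ k ω]
  have Tpos : ∀ k ω, 0 < T k ω := fun k ω => lt_of_lt_of_le hL2 (TL k ω)
  have TU : ∀ k ω, T k ω ≤ 1 + L ^ 2 := fun k ω => by simp only [hT]; linarith [Q0 k ω]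
  have Tm : ∀ k, Measurable (T k) := fun k => measurable_const.sub (Qm k)
  have Tsucc : ∀ k ω, T k ω = T (k + 1) ω + v k ω := fun k ω => by simp only [hT, psum_succ]; ring
  have ilog : ∀ k, Integrable (fun ω => Real.log (T k ω)) μ := fun k =>
    bdd_int (c := |Real.log (L ^ 2)| + |Real.log (1 + L ^ 2)|) (Real.measurable_log.comp (Tm k)) fun ω => by
      have a := Real.log_le_log hL2 (TL k ω)
      have b := Real.log_le_log (Tpos k ω) (TU k ω)
      rw [abs_le]
      constructor
      · linarith [neg_abs_le (Real.log (L ^ 2)), abs_nonneg (Real.log (1 + L ^ 2))]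
      · linarith [le_abs_self (Real.log (1 + L ^ 2)), abs_nonneg (Real.log (L ^ 2))]
  have iphi : ∀ k, Integrable (fun ω => gphi h (psum X k ω) (T k ω)) μ := fun k =>
    bdd_int (c := |h 0| + k * L + K3 * √(1 + L ^ 2)) ((gphi_meas hc).comp ((Sm k).prodMk (Tm k))) fun ω => by
      refine (gphi_abs hl _ (Tpos k ω).le).trans ?_
      have := Real.sqrt_le_sqrt (TU k ω)
      have a := Sb k ω
      gcongr
  have main : ∀ n, |∫ ω, gphi h (psum X n ω) (T n ω) ∂μ - gphi h 0 (1 + L ^ 2)| ≤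
      28 * K3 ^ 2 * L * (Real.log (1 + L ^ 2) - ∫ ω, Real.log (T n ω) ∂μ) := by
    intro n
    induction n with
    | zero => simp [hT, psum_zero]
    | succ k ih =>
      have TmF : Measurable[F k] (T (k + 1)) := Measurable.sub measurable_const (hC.Q_meas k)
      have pm : Measurable[F k] (fun ω => (psum X k ω, T (k + 1) ω)) := Measurable.prodMk (hC.S_meas k) TmF
      set a : Ω → ℝ := fun ω => gga h (psum X k ω) (T (k + 1) ω) with ha
      set b : Ω → ℝ := fun ω => ggb h (psum X k ω) (T (k + 1) ω) with hb
      set w : Ω → ℝ := fun ω => 1 / T (k + 1) ω with hw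
      have amF : Measurable[F k] a := (gga_meas hc).comp pm
      have bmF : Measurable[F k] b := (ggb_meas hc).comp pm
      have wmF : Measurable[F k] w := Measurable.div measurable_const TmF
      have ab : ∀ ω, |a ω| ≤ K3 := fun ω => gga_bd hl _ (Tpos _ ω)
      have hsT : ∀ ω, L ≤ √(T (k + 1) ω) := fun ω => Real.le_sqrt_of_sq_le (TL _ ω)
      have bb : ∀ ω, |b ω| ≤ K3 / L := fun ω => by
        refine (ggb_bd hl _ (Tpos _ ω)).trans ?_
        have := hsT ω
        gcongr
      have wb : ∀ ω, |w ω| ≤ 1 / L ^ 2 := fun ω => by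
        simp only [hw]
        have := Tpos (k + 1) ω
        rw [abs_of_pos (by positivity)]
        have := TL (k + 1) ω
        gcongr
      have e1 := hC.m1 k a amF ⟨_, ab⟩
      have e2 := hC.m2 k b bmF ⟨_, bb⟩
      have e3 := hC.m2 k w wmF ⟨_, wb⟩
      have am := amF.mono (hC.Fle _) le_rfl
      have bm := bmF.mono (hC.Fle _) le_rfl
      have wm := wmF.mono (hC.Fle _) le_rfl
      have hX2 : ∀ ω, |X k ω ^ 2| ≤ L ^ 2 := fun ω => by
        rw [abs_pow]; exact pow_le_pow_left₀ (abs_nonneg _) (hC.Xb k ω) 2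
      have hv2 : ∀ ω, |v k ω| ≤ L ^ 2 := fun ω => by
        rw [abs_of_nonneg (hC.v0 k ω)]; exact hC.vL k ω
      have prodint : ∀ (f g : Ω → ℝ) (c d : ℝ), Measurable f → Measurable g → (∀ ω, |f ω| ≤ c) →
          (∀ ω, |g ω| ≤ d) → Integrable (fun ω => f ω * g ω) μ := fun f g c d hf hg hfc hgd =>
        bdd_int (c := c * d) (hf.mul hg) fun ω => by
          rw [abs_mul]
          exact mul_le_mul (hfc ω) (hgd ω) (abs_nonneg _) ((abs_nonneg _).trans (hfc ω))
      have j1 := prodint a (X k) _ _ am (Xm k) ab (hC.Xb k)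
      have j2 := prodint b (fun ω => X k ω ^ 2) _ _ bm ((Xm k).pow_const 2) bb hX2
      have j3 := prodint b (v k) _ _ bm (vm k) bb hv2
      have j4 := prodint w (fun ω => X k ω ^ 2) _ _ wm ((Xm k).pow_const 2) wb hX2
      have j5 := prodint w (v k) _ _ wm (vm k) wb hv2
      have d0 : Integrable (fun ω => gphi h (psum X (k + 1) ω) (T (k + 1) ω) - gphi h (psum X k ω) (T k ω)) μ :=
        (iphi (k + 1)).sub (iphi k)
      have d1 : Integrable (fun ω => gphi h (psum X (k + 1) ω) (T (k + 1) ω) - gphi h (psum X k ω) (T k ω)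
          - a ω * X k ω) μ := d0.sub j1
      have d2 : Integrable (fun ω => b ω * X k ω ^ 2 - b ω * v k ω) μ := j2.sub j3
      have eq : ∫ ω, gphi h (psum X (k + 1) ω) (T (k + 1) ω) ∂μ - ∫ ω, gphi h (psum X k ω) (T k ω) ∂μ =
          ∫ ω, (gphi h (psum X (k + 1) ω) (T (k + 1) ω) - gphi h (psum X k ω) (T k ω)
          - a ω * X k ω - (b ω * X k ω ^ 2 - b ω * v k ω)) ∂μ := by
        rw [integral_sub d1 d2, integral_sub d0 j1, integral_sub j2 j3, e1, e2,
          integral_sub (iphi (k + 1)) (iphi k)]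
        ring
      have j45 : Integrable (fun ω => w ω * X k ω ^ 2 + w ω * v k ω) μ := j4.add j5
      have bound : |∫ ω, gphi h (psum X (k + 1) ω) (T (k + 1) ω) ∂μ - ∫ ω, gphi h (psum X k ω) (T k ω) ∂μ| ≤
          ∫ ω, 7 * K3 ^ 2 * L * (w ω * X k ω ^ 2 + w ω * v k ω) ∂μ := by
        rw [eq, ← Real.norm_eq_abs]
        refine norm_integral_le_of_norm_le (j45.const_mul (7 * K3 ^ 2 * L)) (ae_of_all _ fun ω => ?_)
        have := one_step_pt hl hL (psum X k ω) (X k ω) (hC.v0 k ω) (hC.vL k ω) (Tpos (k + 1) ω) (hC.Xb k ω)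
        rw [← psum_succ, ← Tsucc] at this
        rw [Real.norm_eq_abs]
        refine (le_of_eq ?_).trans (this.trans (le_of_eq ?_))
        · congr 1; simp only [ha, hb]; ring
        · simp only [hw]; ring
      rw [integral_const_mul, integral_add j4 j5, e3] at bound
      have lb : ∫ ω, w ω * v k ω ∂μ ≤ ∫ ω, 2 * (Real.log (T k ω) - Real.log (T (k + 1) ω)) ∂μ := by
        refine integral_mono j5 (((ilog k).sub (ilog (k + 1))).const_mul 2) fun ω => ?_
        have := log_aux (hC.v0 k ω) ((hC.vL k ω).trans (TL (k + 1) ω)) (Tpos (k + 1) ω)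
        rw [← Tsucc] at this
        refine (le_of_eq ?_).trans this
        simp only [hw]; ring
      rw [integral_const_mul, integral_sub (ilog k) (ilog (k + 1))] at lb
      have tri := abs_add_le (∫ ω, gphi h (psum X (k + 1) ω) (T (k + 1) ω) ∂μ - ∫ ω, gphi h (psum X k ω) (T k ω) ∂μ)
        (∫ ω, gphi h (psum X k ω) (T k ω) ∂μ - gphi h 0 (1 + L ^ 2))
      rw [sub_add_sub_cancel] at tri
      have hpos : 0 ≤ 14 * K3 ^ 2 * L := by positivity
      have := mul_le_mul_of_nonneg_left lb hpos
      linarith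
  refine (main n).trans ?_
  have : Real.log (L ^ 2) ≤ ∫ ω, Real.log (T n ω) ∂μ := by
    have := integral_mono (integrable_const (Real.log (L ^ 2))) (ilog n) fun ω => Real.log_le_log hL2 (TL n ω)
    simpa using this
  gcongr

/-- Main estimate for everywhere bounded sequences. -/
lemma Core.final {Ω : Type} [m0 : MeasurableSpace Ω] {μ : Measure Ω} [IsProbabilityMeasure μ]
    {F : ℕ → MeasurableSpace Ω} {L : ℝ} {X v : ℕ → Ω → ℝ} (hC : Core μ F L X v) (hL : 0 < L)
    {h : ℝ → ℝ} (hl : ∀ x y, |h x - h y| ≤ |x - y|) (n : ℕ) :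
    ∫ ω, h (psum X n ω) ∂μ - ∫ z, h z ∂gaussianReal 0 1 ≤
      33 * K3 ^ 2 * (L * Real.log (Real.exp 1 + (L ^ 2)⁻¹) + ∫ ω, √|psum v n ω - 1| ∂μ) := by
  classical
  have hc := lip_cont hl
  have hK := one_le_K3
  set θ : ℕ → Ω → ℝ := fun k ω => if psum v (k + 1) ω ≤ 1 then 1 else 0 with hθ
  have θm : ∀ k, Measurable[F k] (θ k) := fun k => by
    refine Measurable.ite ?_ measurable_const measurable_const
    exact measurableSet_le (hC.Q_meas k) measurable_const
  have θ01 : ∀ k ω, θ k ω = 0 ∨ θ k ω = 1 := fun k ω => by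
    simp only [hθ]; split_ifs <;> simp
  have C1 := hC.restr θ θm θ01
  have C2 := hC.restr (fun k ω => 1 - θ k ω) (fun k => Measurable.sub measurable_const (θm k))
    (fun k ω => by rcases θ01 k ω with h | h <;> simp [h])
  set X1 : ℕ → Ω → ℝ := fun k ω => θ k ω * X k ω with hX1
  set v1 : ℕ → Ω → ℝ := fun k ω => θ k ω * v k ω with hv1
  set X2 : ℕ → Ω → ℝ := fun k ω => (1 - θ k ω) * X k ω with hX2
  set v2 : ℕ → Ω → ℝ := fun k ω => (1 - θ k ω) * v k ω with hv2
  have sX : ∀ n ω, psum X n ω = psum X1 n ω + psum X2 n ω := fun n ω => by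
    simp only [psum, ← Finset.sum_add_distrib]
    refine Finset.sum_congr rfl fun k _ => ?_
    simp only [hX1, hX2]; ring
  have sv : ∀ n ω, psum v n ω = psum v1 n ω + psum v2 n ω := fun n ω => by
    simp only [psum, ← Finset.sum_add_distrib]
    refine Finset.sum_congr rfl fun k _ => ?_
    simp only [hv1, hv2]; ring
  have dich : ∀ n ω, (psum v n ω ≤ 1 ∧ psum v1 n ω = psum v n ω) ∨
      (1 < psum v n ω ∧ 1 - L ^ 2 ≤ psum v1 n ω ∧ psum v1 n ω ≤ 1) := by
    intro n ω
    induction n with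
    | zero => left; simp [psum_zero]
    | succ k ih =>
      have hv0 := hC.v0 k ω
      have hvL := hC.vL k ω
      have es := psum_succ v k ω
      have es1 := psum_succ v1 k ω
      by_cases hle : psum v (k + 1) ω ≤ 1
      · left
        have ht : v1 k ω = v k ω := by simp [hv1, hθ, hle]
        rcases ih with ⟨_, i⟩ | ⟨i, _⟩
        · exact ⟨hle, by rw [es, es1, ht, i]⟩
        · linarith
      · right
        have ht : v1 k ω = 0 := by simp [hv1, hθ, hle]
        push Not at hle
        rw [es1, ht, add_zero]
        rcases ih with ⟨i1, i⟩ | ⟨_, i⟩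
        · refine ⟨hle, ?_, ?_⟩ <;> linarith
        · exact ⟨hle, i⟩
  have hQ1 : ∀ n ω, psum v1 n ω ≤ 1 := fun n ω => by
    rcases dich n ω with ⟨a, b⟩ | ⟨_, _, b⟩ <;> linarith
  have b1 : ∀ ω, 1 + L ^ 2 - psum v1 n ω ≤ |psum v n ω - 1| + (2 * L) ^ 2 := fun ω => by
    rcases dich n ω with ⟨a, b⟩ | ⟨a, b, c⟩
    · rw [b]; nlinarith [neg_abs_le (psum v n ω - 1)]
    · nlinarith [abs_nonneg (psum v n ω - 1)]
  have b2 : ∀ ω, psum v2 n ω ≤ |psum v n ω - 1| + L ^ 2 := fun ω => by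
    have := sv n ω
    rcases dich n ω with ⟨a, b⟩ | ⟨a, b, c⟩
    · nlinarith [abs_nonneg (psum v n ω - 1)]
    · linarith [le_abs_self (psum v n ω - 1)]
  -- measurability and integrability
  have Sm : Measurable (psum X n) := (hC.S_meas n).mono (hC.Fle n) le_rfl
  have Qm : Measurable (psum v n) := (hC.Q_meas' n).mono (hC.Fle n) le_rfl
  have S1m : Measurable (psum X1 n) := (C1.S_meas n).mono (hC.Fle n) le_rfl
  have Q1m : Measurable (psum v1 n) := (C1.Q_meas' n).mono (hC.Fle n) le_rfl
  have S2m : Measurable (psum X2 n) := (C2.S_meas n).mono (hC.Fle n) le_rfl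
  have Q2m : Measurable (psum v2 n) := (C2.Q_meas' n).mono (hC.Fle n) le_rfl
  have iD : Integrable (fun ω => √|psum v n ω - 1|) μ :=
    bdd_int (c := √(n * L ^ 2 + 1)) (by fun_prop) fun ω => by
      rw [abs_of_nonneg (Real.sqrt_nonneg _)]
      refine Real.sqrt_le_sqrt ?_
      have := hC.Q_le n ω
      have := hC.Q_nonneg n ω
      rw [abs_le]; constructor <;> linarith
  have hh : ∀ x, |h x| ≤ |h 0| + |x| := fun x => by
    have h1 := hl x 0
    have h2 := abs_add_le (h x - h 0) (h 0)
    rw [sub_zero] at h1; rw [sub_add_cancel] at h2; linarith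
  have iS : Integrable (fun ω => h (psum X n ω)) μ :=
    bdd_int (c := |h 0| + n * L) (hc.measurable.comp Sm) fun ω => by
      linarith [hh (psum X n ω), hC.S_le n ω]
  have iS1 : Integrable (fun ω => h (psum X1 n ω)) μ :=
    bdd_int (c := |h 0| + n * L) (hc.measurable.comp S1m) fun ω => by
      linarith [hh (psum X1 n ω), C1.S_le n ω]
  have Tpos : ∀ ω, 0 ≤ 1 + L ^ 2 - psum v1 n ω := fun ω => by nlinarith [hQ1 n ω, sq_nonneg L]
  have TU : ∀ ω, √(1 + L ^ 2 - psum v1 n ω) ≤ √(1 + L ^ 2) := fun ω =>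
    Real.sqrt_le_sqrt (by linarith [C1.Q_nonneg n ω])
  have iP : Integrable (fun ω => gphi h (psum X1 n ω) (1 + L ^ 2 - psum v1 n ω)) μ :=
    bdd_int (c := |h 0| + n * L + K3 * √(1 + L ^ 2))
      ((gphi_meas hc).comp (S1m.prodMk (measurable_const.sub Q1m))) fun ω => by
      refine (gphi_abs hl _ (Tpos ω)).trans ?_
      have := C1.S_le n ω
      have := TU ω
      gcongr
  -- the four comparisons
  have c1 : ∫ ω, h (psum X n ω) ∂μ - ∫ ω, h (psum X1 n ω) ∂μ ≤ 2 * (∫ ω, √|psum v n ω - 1| ∂μ + L) := by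
    have i2 : Integrable (fun ω => |psum X2 n ω|) μ := (bdd_int S2m (C2.S_le n)).abs
    have i3 : Integrable (fun ω => √(psum v2 n ω)) μ :=
      bdd_int (c := √(n * L ^ 2)) (by fun_prop) fun ω => by
        rw [abs_of_nonneg (Real.sqrt_nonneg _)]
        exact Real.sqrt_le_sqrt (C2.Q_le n ω)
    rw [← integral_sub iS iS1]
    have a1 : ∫ ω, (h (psum X n ω) - h (psum X1 n ω)) ∂μ ≤ ∫ ω, |psum X2 n ω| ∂μ :=
      integral_mono (iS.sub iS1) i2 fun ω => by
        have := hl (psum X n ω) (psum X1 n ω)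
        rw [sX, add_sub_cancel_left] at this
        simp only [sX n ω]
        exact (le_abs_self _).trans this
    have a2 := C2.bdg n
    have a3 : ∫ ω, √(psum v2 n ω) ∂μ ≤ ∫ ω, (√|psum v n ω - 1| + L) ∂μ :=
      integral_mono i3 (iD.add (integrable_const L)) fun ω => by
        refine (Real.sqrt_le_sqrt (b2 ω)).trans ?_
        have := sqrt_add_le' |psum v n ω - 1| (L ^ 2) (abs_nonneg _) (sq_nonneg _)
        rwa [Real.sqrt_sq hL.le] at this
    rw [integral_add iD (integrable_const L)] at a3
    simp only [integral_const, probReal_univ, smul_eq_mul, one_mul] at a3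
    linarith
  have c2 : ∫ ω, h (psum X1 n ω) ∂μ - ∫ ω, gphi h (psum X1 n ω) (1 + L ^ 2 - psum v1 n ω) ∂μ ≤
      K3 * (∫ ω, √|psum v n ω - 1| ∂μ + 2 * L) := by
    rw [← integral_sub iS1 iP]
    have iDL : Integrable (fun ω => √|psum v n ω - 1| + 2 * L) μ := iD.add (integrable_const _)
    have a1 : ∫ ω, (h (psum X1 n ω) - gphi h (psum X1 n ω) (1 + L ^ 2 - psum v1 n ω)) ∂μ ≤
        ∫ ω, K3 * (√|psum v n ω - 1| + 2 * L) ∂μ :=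
      integral_mono (iS1.sub iP) (iDL.const_mul K3) fun ω => by
        have := gphi_var_lip hl (psum X1 n ω) (Tpos ω) le_rfl
        rw [zero_add, gphi_zero, abs_sub_comm] at this
        refine ((le_abs_self _).trans this).trans ?_
        have h2 := Real.sqrt_le_sqrt (b1 ω)
        have h3 := sqrt_add_le' |psum v n ω - 1| ((2 * L) ^ 2) (abs_nonneg _) (sq_nonneg _)
        rw [Real.sqrt_sq (by positivity)] at h3
        have h4 := h2.trans h3
        gcongr
    rw [integral_const_mul, integral_add iD (integrable_const _)] at a1
    simp only [integral_const, probReal_univ, smul_eq_mul, one_mul] at a1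
    exact a1
  have c3 := C1.lindeberg hL hQ1 hl n
  have c4 : gphi h 0 (1 + L ^ 2) - ∫ z, h z ∂gaussianReal 0 1 ≤ K3 * L := by
    have := gphi_var_lip hl 0 (sq_nonneg L) (zero_le_one (α := ℝ))
    rw [Real.sqrt_sq hL.le] at this
    have e : gphi h 0 1 = ∫ z, h z ∂gaussianReal 0 1 := by simp [gphi]
    rw [← e]
    exact (le_abs_self _).trans this
  -- the logarithm
  have hL2 : 0 < L ^ 2 := by positivity
  have l1 : Real.log (1 + L ^ 2) - Real.log (L ^ 2) ≤ Real.log (Real.exp 1 + (L ^ 2)⁻¹) := by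
    rw [← Real.log_div (by positivity) hL2.ne']
    refine Real.log_le_log (by positivity) ?_
    have : (1 + L ^ 2) / L ^ 2 = 1 + (L ^ 2)⁻¹ := by field_simp; ring
    rw [this]
    linarith [Real.add_one_le_exp 1]
  have l2 : 1 ≤ Real.log (Real.exp 1 + (L ^ 2)⁻¹) := by
    have : Real.log (Real.exp 1) ≤ Real.log (Real.exp 1 + (L ^ 2)⁻¹) :=
      Real.log_le_log (Real.exp_pos 1) (by have := inv_pos.2 hL2; linarith)
    rwa [Real.log_exp] at this
  have D0 : 0 ≤ ∫ ω, √|psum v n ω - 1| ∂μ := integral_nonneg fun ω => Real.sqrt_nonneg _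
  have c3' := (le_abs_self _).trans c3
  set D := ∫ ω, √|psum v n ω - 1| ∂μ
  set ℓ := Real.log (Real.exp 1 + (L ^ 2)⁻¹)
  have hK2 : K3 ≤ K3 ^ 2 := by nlinarith
  have f1 : 28 * K3 ^ 2 * L * (Real.log (1 + L ^ 2) - Real.log (L ^ 2)) ≤ 28 * K3 ^ 2 * (L * ℓ) := by
    calc _ ≤ 28 * K3 ^ 2 * L * ℓ := by gcongr
      _ = _ := by ring
  have hLl : L ≤ L * ℓ := le_mul_of_one_le_right hL.le l2
  have f2 : (2 + 3 * K3) * L ≤ 5 * K3 ^ 2 * (L * ℓ) := by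
    have : 2 + 3 * K3 ≤ 5 * K3 ^ 2 := by nlinarith
    gcongr
  have f3 : (2 + K3) * D ≤ 33 * K3 ^ 2 * D := by
    have : 2 + K3 ≤ 33 * K3 ^ 2 := by nlinarith
    gcongr
  linarith


/-- conditional expectation identity tested against bounded measurable functions -/
lemma int_mul_condExp {Ω : Type} [m0 : MeasurableSpace Ω] {μ : Measure Ω} [IsProbabilityMeasure μ]
    {m : MeasurableSpace Ω} (hm : m ≤ m0) {g U : Ω → ℝ} (hg : Measurable[m] g)
    (hb : ∃ c, ∀ ω, |g ω| ≤ c) (hU : Integrable U μ) :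
    ∫ ω, g ω * U ω ∂μ = ∫ ω, g ω * (μ[U | m]) ω ∂μ := by
  obtain ⟨c, hc⟩ := hb
  have h1 := condExp_stronglyMeasurable_mul_of_bound (μ := μ) hm hg.stronglyMeasurable hU c
    (ae_of_all _ fun ω => hc ω)
  have h2 := integral_condExp (μ := μ) (f := g * U) hm
  have h3 := integral_congr_ae h1
  rw [h2] at h3
  exact h3

lemma clamp_eq {L x : ℝ} (h : |x| ≤ L) : max (-L) (min L x) = x := by
  rw [abs_le] at h
  rw [min_eq_right h.2, max_eq_right h.1]

lemma clamp_abs {L x : ℝ} (h : 0 ≤ L) : |max (-L) (min L x)| ≤ L := by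
  rw [abs_le]
  exact ⟨le_max_left _ _, max_le (by linarith) (min_le_left _ _)⟩

lemma exists_core {Ω : Type} [m0 : MeasurableSpace Ω] {μ : Measure Ω} [IsProbabilityMeasure μ]
    {F : ℕ → MeasurableSpace Ω} {n : ℕ} {Y : ℕ → Ω → ℝ} {sn M : ℝ} (hY : IsMDS μ F n Y)
    (hsn : 0 < sn) (hM : 0 ≤ M) (hb : ∀ i, 1 ≤ i → i ≤ n → ∀ᵐ ω ∂μ, |Y i ω| ≤ M) :
    ∃ X v : ℕ → Ω → ℝ, Core μ F (M / sn) X v ∧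
      (∀ᵐ ω ∂μ, psum X n ω = (∑ i ∈ Finset.Icc 1 n, Y i ω) / sn) ∧
      (∀ᵐ ω ∂μ, psum v n ω =
        (∑ i ∈ Finset.Icc 1 n, (μ[fun ω' => (Y i ω') ^ 2 | F (i - 1)]) ω) / sn ^ 2) := by
  have hL : 0 ≤ M / sn := by positivity
  set L := M / sn with hLdef
  have hML : M = L * sn := by rw [hLdef]; field_simp
  let X : ℕ → Ω → ℝ := fun k ω => if k < n then max (-L) (min L (Y (k + 1) ω / sn)) else 0
  let v : ℕ → Ω → ℝ := fun k ω => if k < n then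
    max 0 (min (L ^ 2) ((μ[fun ω' => (Y (k + 1) ω') ^ 2 | F k]) ω / sn ^ 2)) else 0
  have iY : ∀ k, k < n → Integrable (Y (k + 1)) μ := fun k hk =>
    (hY.memL2 (k + 1) (by omega) (by omega)).integrable (by norm_num)
  have iY2 : ∀ k, k < n → Integrable (fun ω => (Y (k + 1) ω) ^ 2) μ := fun k hk =>
    (hY.memL2 (k + 1) (by omega) (by omega)).integrable_sq
  have Xae : ∀ k, k < n → ∀ᵐ ω ∂μ, X k ω = Y (k + 1) ω / sn := by
    intro k hk
    filter_upwards [hb (k + 1) (by omega) (by omega)] with ω hω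
    simp only [X, if_pos hk]
    apply clamp_eq
    rw [abs_div, abs_of_pos hsn, div_le_iff₀ hsn, ← hML]; exact hω
  have vae : ∀ k, k < n → ∀ᵐ ω ∂μ, v k ω = (μ[fun ω' => (Y (k + 1) ω') ^ 2 | F k]) ω / sn ^ 2 := by
    intro k hk
    have h0 : 0 ≤ᵐ[μ] μ[fun ω' => (Y (k + 1) ω') ^ 2 | F k] :=
      condExp_nonneg (ae_of_all _ fun ω => by positivity)
    have h1 : μ[fun ω' => (Y (k + 1) ω') ^ 2 | F k] ≤ᵐ[μ] μ[fun _ => M ^ 2 | F k] := by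
      refine condExp_mono (iY2 k hk) (integrable_const _) ?_
      filter_upwards [hb (k + 1) (by omega) (by omega)] with ω hω
      exact sq_le_sq' (by linarith [abs_le.1 hω]) (abs_le.1 hω).2
    rw [condExp_const (hY.le k)] at h1
    filter_upwards [h0, h1] with ω a b
    simp only [v, if_pos hk]
    have a' : 0 ≤ (μ[fun ω' => (Y (k + 1) ω') ^ 2 | F k]) ω := a
    have b' : (μ[fun ω' => (Y (k + 1) ω') ^ 2 | F k]) ω / sn ^ 2 ≤ L ^ 2 := by
      rw [div_le_iff₀ (by positivity), ← mul_pow, ← hML]; exact b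
    rw [min_eq_right b', max_eq_right (by positivity)]
  have hsum : ∀ (f : ℕ → ℝ), ∑ i ∈ Finset.Icc 1 n, f i = ∑ k ∈ Finset.range n, f (k + 1) := by
    intro f
    rw [Finset.range_eq_Ico, Finset.sum_Ico_add' f 0 n 1]
    rfl
  refine ⟨X, v, ?_, ?_, ?_⟩
  · refine ⟨hY.le, hY.mono, ?_, ?_, ?_, ?_, ?_, ?_, ?_⟩
    · intro k
      by_cases hk : k < n
      · have hm := hY.adapted (k + 1) (by omega) (by omega)
        simp only [X, if_pos hk]
        exact measurable_const.max (measurable_const.min (hm.div_const sn))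
      · simp only [X, if_neg hk]; exact measurable_const
    · intro k ω
      by_cases hk : k < n
      · simp only [X, if_pos hk]; exact clamp_abs hL
      · simp only [X, if_neg hk]; simpa using hL
    · intro k
      by_cases hk : k < n
      · have hm : Measurable[F k] (μ[fun ω' => (Y (k + 1) ω') ^ 2 | F k]) :=
          stronglyMeasurable_condExp.measurable
        simp only [v, if_pos hk]
        exact measurable_const.max (measurable_const.min (hm.div_const (sn ^ 2)))
      · simp only [v, if_neg hk]; exact measurable_const
    · intro k ω
      by_cases hk : k < n
      · simp only [v, if_pos hk]; exact le_max_left _ _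
      · simp only [v, if_neg hk]; exact le_rfl
    · intro k ω
      by_cases hk : k < n
      · simp only [v, if_pos hk]; exact max_le (by positivity) (min_le_left _ _)
      · simp only [v, if_neg hk]; positivity
    · intro k g hg hgb
      by_cases hk : k < n
      · have e1 : ∫ ω, g ω * X k ω ∂μ = ∫ ω, g ω * Y (k + 1) ω / sn ∂μ := by
          refine integral_congr_ae ?_
          filter_upwards [Xae k hk] with ω hω
          rw [hω]; ring
        have hmd : μ[Y (k + 1) | F k] =ᵐ[μ] 0 := hY.mdiff (k + 1) (by omega) (by omega)
        have e2 : ∫ ω, g ω * (μ[Y (k + 1) | F k]) ω ∂μ = ∫ _, (0 : ℝ) ∂μ := by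
          refine integral_congr_ae ?_
          filter_upwards [hmd] with ω hω
          rw [hω]; simp
        rw [e1, integral_div, int_mul_condExp (hY.le k) hg hgb (iY k hk), e2]
        simp
      · simp only [X, if_neg hk]; simp
    · intro k g hg hgb
      by_cases hk : k < n
      · have e1 : ∫ ω, g ω * X k ω ^ 2 ∂μ = ∫ ω, g ω * (fun ω' => Y (k + 1) ω' ^ 2) ω / sn ^ 2 ∂μ := by
          refine integral_congr_ae ?_
          filter_upwards [Xae k hk] with ω hω
          rw [hω]; ring
        have e2 : ∫ ω, g ω * v k ω ∂μ =
            ∫ ω, g ω * (μ[fun ω' => (Y (k + 1) ω') ^ 2 | F k]) ω / sn ^ 2 ∂μ := by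
          refine integral_congr_ae ?_
          filter_upwards [vae k hk] with ω hω
          rw [hω]; ring
        rw [e1, e2, integral_div, integral_div, int_mul_condExp (hY.le k) hg hgb (iY2 k hk)]
      · simp only [X, v, if_neg hk]; simp
  · have : ∀ᵐ ω ∂μ, ∀ k, k < n → X k ω = Y (k + 1) ω / sn := by
      rw [ae_all_iff]; intro k
      by_cases hk : k < n
      · filter_upwards [Xae k hk] with ω hω _ using hω
      · exact ae_of_all _ fun ω h => absurd h hk
    filter_upwards [this] with ω hω
    rw [hsum, Finset.sum_div, psum]
    exact Finset.sum_congr rfl fun k hk => hω k (Finset.mem_range.1 hk)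
  · have : ∀ᵐ ω ∂μ, ∀ k, k < n →
        v k ω = (μ[fun ω' => (Y (k + 1) ω') ^ 2 | F k]) ω / sn ^ 2 := by
      rw [ae_all_iff]; intro k
      by_cases hk : k < n
      · filter_upwards [vae k hk] with ω hω _ using hω
      · exact ae_of_all _ fun ω h => absurd h hk
    filter_upwards [this] with ω hω
    rw [hsum (fun i => (μ[fun ω' => (Y i ω') ^ 2 | F (i - 1)]) ω), Finset.sum_div, psum]
    exact Finset.sum_congr rfl fun k hk => hω k (Finset.mem_range.1 hk)

lemma rnorm_half {Ω : Type} [m0 : MeasurableSpace Ω] (μ : Measure Ω) (U : Ω → ℝ) :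
    rnorm μ (1 / 2) U ^ ((1 : ℝ) / 2) = ∫ ω, √|U ω| ∂μ := by
  unfold rnorm
  simp_rw [← Real.sqrt_eq_rpow]
  have h0 : 0 ≤ ∫ ω, √|U ω| ∂μ := integral_nonneg fun ω => Real.sqrt_nonneg _
  rw [show (1 : ℝ) / (1 / 2) = (2 : ℕ) by norm_num, Real.rpow_natCast, Real.sqrt_sq h0]

/-- The `W₁` bound in the `L^∞` case. -/
theorem w1_bound_Linfty :
    ∃ C : ℝ, 0 < C ∧
      ∀ (Ω : Type) (m0 : MeasurableSpace Ω) (μ : Measure Ω), IsProbabilityMeasure μ →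
      ∀ (F : ℕ → MeasurableSpace Ω) (n : ℕ) (Y : ℕ → Ω → ℝ) (sn : ℝ),
        1 ≤ n → IsMDS μ F n Y → 0 < sn →
        sn ^ 2 = ∑ i ∈ Finset.Icc 1 n, ∫ ω, (Y i ω) ^ 2 ∂μ →
        (∀ i, 1 ≤ i → i ≤ n → eLpNorm (Y i) ⊤ μ < ⊤) →
        wassersteinDist 1 (μ.map fun ω => (∑ i ∈ Finset.Icc 1 n, Y i ω) / sn) stdGaussian ≤
          C * (((((Finset.Icc 1 n).sup fun i => eLpNorm (Y i) ⊤ μ).toReal) / sn) * Real.log (Real.exp 1 + (((((Finset.Icc 1 n).sup fun i => eLpNorm (Y i) ⊤ μ).toReal) / sn) ^ 2)⁻¹) + rnorm μ (1 / 2) (fun ω => (∑ i ∈ Finset.Icc 1 n, (μ[fun ω' => (Y i ω') ^ 2 | F (i - 1)]) ω) / sn ^ 2 - 1) ^ ((1 : ℝ) / 2)) := by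
  refine ⟨33 * K3 ^ 2, by have := one_le_K3; positivity, ?_⟩
  intro Ω m0 μ hμ F n Y sn hn hY hsn hs hb
  set M := ((Finset.Icc 1 n).sup fun i => eLpNorm (Y i) ⊤ μ).toReal with hMdef
  have hM0 : 0 ≤ M := ENNReal.toReal_nonneg
  have hsup : ((Finset.Icc 1 n).sup fun i => eLpNorm (Y i) ⊤ μ) < ⊤ := by
    rw [Finset.sup_lt_iff (by simp)]
    intro i hi
    rw [Finset.mem_Icc] at hi
    exact hb i hi.1 hi.2
  have hbd : ∀ i, 1 ≤ i → i ≤ n → ∀ᵐ ω ∂μ, |Y i ω| ≤ M := by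
    intro i h1 h2
    have hle : eLpNorm (Y i) ⊤ μ ≤ (Finset.Icc 1 n).sup fun i => eLpNorm (Y i) ⊤ μ :=
      Finset.le_sup (f := fun i => eLpNorm (Y i) ⊤ μ) (Finset.mem_Icc.2 ⟨h1, h2⟩)
    filter_upwards [ae_le_eLpNormEssSup (f := Y i) (μ := μ)] with ω hω
    rw [← eLpNorm_exponent_top] at hω
    have := ENNReal.toReal_mono hsup.ne (hω.trans hle)
    rwa [toReal_enorm, Real.norm_eq_abs] at this
  have hMpos : 0 < M := by
    rcases hM0.lt_or_eq with h | h
    · exact h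
    · exfalso
      have hz : ∑ i ∈ Finset.Icc 1 n, ∫ ω, (Y i ω) ^ 2 ∂μ = 0 := by
        refine Finset.sum_eq_zero fun i hi => ?_
        rw [Finset.mem_Icc] at hi
        have : ∫ ω, (Y i ω) ^ 2 ∂μ = ∫ _, (0 : ℝ) ∂μ := by
          refine integral_congr_ae ?_
          filter_upwards [hbd i hi.1 hi.2] with ω hω
          rw [← h] at hω
          have : Y i ω = 0 := abs_nonpos_iff.1 hω
          simp [this]
        rw [this]; simp
      rw [hz] at hs
      have : 0 < sn ^ 2 := by positivity
      linarith
  obtain ⟨X, v, hC, hX, hv⟩ := exists_core hY hsn hM0 hbd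
  have hXm : Measurable (psum X n) := (hC.S_meas n).mono (hC.Fle n) le_rfl
  have hmap : (μ.map fun ω => (∑ i ∈ Finset.Icc 1 n, Y i ω) / sn) = μ.map (psum X n) :=
    Measure.map_congr (by filter_upwards [hX] with ω hω using hω.symm)
  rw [hmap, _root_.stdGaussian, rnorm_half]
  have hp : IsProbabilityMeasure (μ.map (psum X n)) := Measure.isProbabilityMeasure_map hXm.aemeasurable
  have hintg : Integrable (fun x => x) (μ.map (psum X n)) := by
    rw [integrable_map_measure (by fun_prop) hXm.aemeasurable]
    refine Integrable.of_bound hXm.aestronglyMeasurable (n * (M / sn)) (ae_of_all _ fun ω => ?_)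
    have h1 := Finset.abs_sum_le_sum_abs (fun k => X k ω) (Finset.range n)
    have h2 := Finset.sum_le_card_nsmul (Finset.range n) (fun k => |X k ω|) (M / sn)
      fun k _ => hC.Xb k ω
    rw [Finset.card_range, nsmul_eq_mul] at h2
    exact h1.trans h2
  obtain ⟨h, hl, hW⟩ := wasserstein_le_lip (μ.map (psum X n)) (gaussianReal 0 1) hintg int_id1
  rw [integral_map hXm.aemeasurable (lip_cont hl).aestronglyMeasurable] at hW
  have hfin := hC.final (by positivity) hl n
  have hve : ∫ ω, √|psum v n ω - 1| ∂μ = ∫ ω, √|(∑ i ∈ Finset.Icc 1 n,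
      (μ[fun ω' => (Y i ω') ^ 2 | F (i - 1)]) ω) / sn ^ 2 - 1| ∂μ := by
    refine integral_congr_ae ?_
    filter_upwards [hv] with ω hω
    rw [hω]
  rw [hve] at hfin
  exact hW.trans hfin
end
end

section
/- There is a universal constant C such that for every square-integrable martingale difference sequence {Y_m}_{m=1}^n with max_{1≤i≤n} ‖Y_i‖_∞ < ∞, one has W_2(X_n, N) ≤ C ( n^{1/4} s_n^{-1} max_{1≤i≤n} ‖Y_i‖_∞ + ‖V_n² − 1‖_1^{1/2} ), where N is a standard normal random variable. -/
open MeasureTheory ProbabilityTheory Real Filter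

noncomputable section

open scoped ENNReal

abbrev gam : Measure ℝ := gaussianReal 0 1

lemma gam_Ioc_pos (x y : ℝ) (h : x < y) : 0 < gam (Set.Ioc x y) := by
  rw [pos_iff_ne_zero]
  intro h0
  have := gaussianReal_absolutelyContinuous' 0 (v := 1) one_ne_zero h0
  rw [Real.volume_Ioc] at this
  simp at this
  linarith

instance : NullSingletonClass gam := nullSingletonClass_gaussianReal one_ne_zero

lemma gam_cdf_strictMono : StrictMono (cdf gam) := by
  intro x y h
  rw [cdf_eq_real, cdf_eq_real]
  have h1 : Set.Iic y = Set.Iic x ∪ Set.Ioc x y := (Set.Iic_union_Ioc_eq_Iic h.le).symm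
  rw [h1, measureReal_union (by
    rw [Set.disjoint_left]; intro a ha hb; exact absurd hb.1 (not_lt.mpr ha)) measurableSet_Ioc]
  have : 0 < gam.real (Set.Ioc x y) :=
    ENNReal.toReal_pos (gam_Ioc_pos x y h).ne' (measure_ne_top _ _)
  linarith

lemma gam_cdf_continuous : Continuous (cdf gam) := by
  rw [continuous_iff_continuousAt]
  intro x
  rw [continuousAt_iff_continuous_left'_right']
  refine ⟨?_, ((cdf gam).right_continuous x).mono Set.Ioi_subset_Ici_self⟩
  rw [(monotone_cdf gam).continuousWithinAt_Iio_iff_leftLim_eq]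
  have h := (cdf gam).measure_singleton x
  rw [measure_cdf, measure_singleton] at h
  have h2 := (monotone_cdf gam).leftLim_le (le_refl x)
  have h3 := ENNReal.ofReal_eq_zero.mp h.symm
  linarith

lemma gam_cdf_pos (x : ℝ) : 0 < cdf gam x :=
  (cdf_nonneg gam (x-1)).trans_lt (gam_cdf_strictMono (by linarith))
lemma gam_cdf_lt_one (x : ℝ) : cdf gam x < 1 :=
  (gam_cdf_strictMono (show x < x + 1 by linarith)).trans_le (cdf_le_one gam (x+1))

lemma gam_cdf_le (p : ℝ) (h0 : 0 ≤ p) (h1 : p ≤ 1) : gam.real {y | cdf gam y ≤ p} = p := by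
  rcases h0.eq_or_lt with rfl | h0
  · have : {y | cdf gam y ≤ 0} = ∅ := by
      ext y; simp [gam_cdf_pos y]
    simp [this]
  rcases h1.eq_or_lt with rfl | h1
  · have : {y | cdf gam y ≤ 1} = Set.univ := by
      ext y; simp [cdf_le_one]
    simp [this]
  obtain ⟨y, hy⟩ : p ∈ Set.range (cdf gam) := by
    apply mem_range_of_exists_le_of_exists_ge gam_cdf_continuous
    · exact ((tendsto_cdf_atBot gam).eventually (ge_mem_nhds h0)).exists
    · exact ((tendsto_cdf_atTop gam).eventually (le_mem_nhds h1)).exists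
  have : {y | cdf gam y ≤ p} = Set.Iic y := by
    ext z; simp only [Set.mem_ofPred_eq, Set.mem_Iic, ← hy]
    exact gam_cdf_strictMono.le_iff_le
  rw [this, ← cdf_eq_real, hy]

lemma exists_transport (P : Measure ℝ) [IsProbabilityMeasure P] :
    ∃ T : ℝ → ℝ, Monotone T ∧ gam.map T = P := by
  let A : ℝ → Set ℝ := fun y => {x | cdf gam y ≤ cdf P x}
  have hne : ∀ y, (A y).Nonempty := fun y =>
    ((tendsto_cdf_atTop P).eventually (le_mem_nhds (gam_cdf_lt_one y))).exists
  have hbd : ∀ y, BddBelow (A y) := fun y => by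
    obtain ⟨b, hb⟩ := ((tendsto_cdf_atBot P).eventually (gt_mem_nhds (gam_cdf_pos y))).exists
    refine ⟨b, fun x hx => ?_⟩
    by_contra! h
    have := monotone_cdf P h.le
    have h2 : cdf gam y ≤ cdf P x := hx
    linarith
  let T : ℝ → ℝ := fun y => sInf (A y)
  have hT : Monotone T := fun y z hyz =>
    csInf_le_csInf (hbd y) (hne z) (fun x hx => (monotone_cdf gam hyz).trans hx)
  have hgal : ∀ y x, T y ≤ x ↔ cdf gam y ≤ cdf P x := by
    intro y x
    refine ⟨fun h => ?_, fun h => csInf_le (hbd y) h⟩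
    have hc := (cdf P).right_continuous x
    have hc' : Tendsto (cdf P) (nhdsWithin x (Set.Ioi x)) (nhds (cdf P x)) :=
      hc.mono Set.Ioi_subset_Ici_self
    refine ge_of_tendsto hc' ?_
    filter_upwards [self_mem_nhdsWithin] with z hz
    obtain ⟨w, hw, hwz⟩ := exists_lt_of_csInf_lt (hne y) (h.trans_lt hz)
    exact le_trans hw (monotone_cdf P hwz.le)
  refine ⟨T, hT, ?_⟩
  have : IsProbabilityMeasure (gam.map T) :=
    Measure.isProbabilityMeasure_map hT.measurable.aemeasurable
  apply Measure.eq_of_cdf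
  ext x
  rw [cdf_eq_real, measureReal_def, Measure.map_apply hT.measurable measurableSet_Iic]
  have : T ⁻¹' Set.Iic x = {y | cdf gam y ≤ cdf P x} := by
    ext y; exact hgal y x
  rw [this]
  exact gam_cdf_le _ (cdf_nonneg P x) (cdf_le_one P x)

/-- Potential with 4-Lipschitz derivative dominating the quadratic cost along a monotone map. -/
lemma exists_potential (T : ℝ → ℝ) (hT : Monotone T) :
    ∃ h φ : ℝ → ℝ, Continuous h ∧ Continuous φ ∧
      (∀ x v, |h v - h x - φ x * (v - x)| ≤ 2 * (v - x) ^ 2) ∧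
      ∀ y, (T y - y) ^ 2 ≤ h (T y) - h y := by
  let m : ℝ → ℝ := fun y => (y + T y) / 2
  have hm : StrictMono m := by
    intro y z hyz
    have := hT hyz.le
    simp only [m]; linarith
  let f : ℝ → ℝ := fun x => 2 * (T (Function.invFun m x) - Function.invFun m x)
  have hf : ∀ y, f (m y) = 2 * (T y - y) := by
    intro y; simp only [f]; rw [Function.leftInverse_invFun hm.injective y]
  have key : ∀ y z, y ≤ z → |f (m y) - f (m z)| ≤ 4 * |m y - m z| := by
    intro y z hyz
    have h1 := hT hyz
    have h2 := hm.monotone hyz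
    rw [hf, hf, abs_sub_comm (m y), abs_of_nonneg (sub_nonneg.mpr h2), abs_le]
    simp only [m]
    constructor <;> linarith
  have hL : LipschitzOnWith 4 f (Set.range m) := by
    apply LipschitzOnWith.of_dist_le_mul
    rintro _ ⟨y, rfl⟩ _ ⟨z, rfl⟩
    rw [Real.dist_eq, Real.dist_eq]
    rcases le_total y z with h | h
    · exact_mod_cast key y z h
    · rw [abs_sub_comm, abs_sub_comm (m y)]; exact_mod_cast key z y h
  obtain ⟨φ, hφ, hφf⟩ := hL.extend_real
  have hφc : Continuous φ := hφ.continuous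
  let h : ℝ → ℝ := fun x => ∫ r in (0:ℝ)..x, φ r
  have hosc : ∀ x v, |h v - h x - φ x * (v - x)| ≤ 2 * (v - x) ^ 2 := by
    intro x v
    have e1 : h v - h x = ∫ r in x..v, φ r :=
      intervalIntegral.integral_interval_sub_left (hφc.intervalIntegrable _ _)
        (hφc.intervalIntegrable _ _)
    have e2 : h v - h x - φ x * (v - x) = (v - x) * ∫ θ in (0:ℝ)..1, (φ (x + (v - x) * θ) - φ x) := by
      rw [e1, intervalIntegral.integral_sub (Continuous.intervalIntegrable (by fun_prop) _ _)
        (by simp), mul_sub (v - x), intervalIntegral.mul_integral_comp_add_mul]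
      simp; ring
    rw [e2, abs_mul]
    have e3 : |∫ θ in (0:ℝ)..1, (φ (x + (v - x) * θ) - φ x)| ≤ ∫ θ in (0:ℝ)..1, 4 * |v - x| * θ := by
      refine (intervalIntegral.abs_integral_le_integral_abs zero_le_one).trans ?_
      apply intervalIntegral.integral_mono_on zero_le_one
      · exact Continuous.intervalIntegrable (by fun_prop) _ _
      · exact Continuous.intervalIntegrable (by fun_prop) _ _
      · intro θ hθ
        have := hφ.dist_le_mul (x + (v - x) * θ) x
        rw [Real.dist_eq, Real.dist_eq] at this
        refine this.trans (le_of_eq ?_)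
        rw [add_sub_cancel_left, abs_mul, abs_of_nonneg hθ.1]
        push_cast; ring
    rw [intervalIntegral.integral_const_mul, integral_id] at e3
    calc _ ≤ |v - x| * (4 * |v - x| * ((1 ^ 2 - 0 ^ 2) / 2)) := by gcongr
      _ = 2 * |v - x| ^ 2 := by ring
      _ = _ := by rw [sq_abs]
  refine ⟨h, φ, ?_, hφc, hosc, ?_⟩
  · exact intervalIntegral.continuous_primitive (fun a b => hφc.intervalIntegrable _ _) 0
  · intro y
    have h1 := (abs_le.mp (hosc (m y) (T y))).1
    have h2 := (abs_le.mp (hosc (m y) y)).2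
    have h3 : φ (m y) = 2 * (T y - y) := by rw [← hφf ⟨y, rfl⟩, hf]
    rw [h3] at h1 h2
    simp only [m] at h1 h2
    nlinarith

lemma gam_int_exp (b : ℝ) : Integrable (fun z => exp (b * |z|)) gam := by
  have h1 := integrable_exp_mul_gaussianReal (μ := 0) (v := 1) b
  have h2 := integrable_exp_mul_gaussianReal (μ := 0) (v := 1) (-b)
  refine (h1.add h2).mono' (by fun_prop) (ae_of_all _ fun z => ?_)
  rw [Real.norm_eq_abs, abs_of_pos (exp_pos _)]
  simp only [Pi.add_apply]
  have p1 := exp_pos (b * z)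
  have p2 := exp_pos (-b * z)
  rcases abs_cases z with ⟨h, _⟩ | ⟨h, _⟩ <;> rw [h]
  · linarith
  · rw [mul_neg, ← neg_mul]; linarith

lemma gam_int_of_bound (f : ℝ → ℝ) (hf : Measurable f) (C : ℝ) (n : ℕ) (b : ℝ)
    (h : ∀ z, |f z| ≤ C * (1 + |z|) ^ n * exp (b * |z|)) : Integrable f gam := by
  have hC : 0 ≤ C := by
    have := (abs_nonneg _).trans (h 0)
    simpa using this
  refine ((gam_int_exp (b+1)).const_mul (C * n.factorial * exp 1)).mono' hf.aestronglyMeasurable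
    (ae_of_all _ fun z => (h z).trans ?_)
  have h1 := Real.pow_div_factorial_le_exp (1 + |z|) (by positivity) n
  rw [div_le_iff₀ (by positivity)] at h1
  calc C * (1 + |z|) ^ n * exp (b * |z|) ≤ C * (exp (1 + |z|) * n.factorial) * exp (b * |z|) := by gcongr
    _ = _ := by rw [exp_add, add_mul, exp_add]; ring_nf

lemma gam_shift (k : ℝ → ℝ) (a : ℝ) :
    ∫ z, k (z + a) ∂gam = ∫ z, k z * exp (a * z - a ^ 2 / 2) ∂gam := by
  rw [integral_gaussianReal_eq_integral_smul one_ne_zero,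
    integral_gaussianReal_eq_integral_smul one_ne_zero,
    ← integral_sub_right_eq_self _ a]
  congr 1; ext z
  simp only [gaussianPDFReal, smul_eq_mul, sub_add_cancel]
  rw [mul_comm (k z), ← mul_assoc, mul_assoc _ (exp _) (exp _), ← exp_add]
  congr 3
  simp; ring

lemma gam_r3 (a z : ℝ) (ha : |a| ≤ 1) :
    |exp (a * z - a ^ 2 / 2) - 1 - a * z - a ^ 2 / 2 * (z ^ 2 - 1)| ≤
      |a| ^ 3 * (2 * (1 + |z|) ^ 3 * exp (1 + |z|)) := by
  set w := a * z - a ^ 2 / 2 with hw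
  have hwa : |w| ≤ |a| * (1 + |z|) := by
    rw [hw]
    refine (abs_sub _ _).trans ?_
    rw [abs_mul, abs_of_nonneg (show 0 ≤ a ^ 2 / 2 by positivity), ← sq_abs a]
    nlinarith [abs_nonneg a, abs_nonneg z]
  have hw1 : |w| ≤ 1 + |z| := hwa.trans (by nlinarith [abs_nonneg a, abs_nonneg z])
  have h1 : |exp w - 1 - w - w ^ 2 / 2| ≤ |w| ^ 3 * exp |w| := by
    have := Complex.norm_exp_sub_sum_le_norm_mul_exp (w : ℂ) 3
    simp only [Finset.sum_range_succ, Finset.sum_range_zero] at this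
    have e : Complex.exp (w:ℂ) - (0 + (w:ℂ) ^ 0 / (Nat.factorial 0 : ℂ) + (w:ℂ) ^ 1 / (Nat.factorial 1 : ℂ)
        + (w:ℂ) ^ 2 / (Nat.factorial 2:ℂ)) = ((exp w - 1 - w - w ^ 2 / 2 : ℝ) : ℂ) := by
      push_cast; simp [Nat.factorial]; ring
    rw [e, Complex.norm_real, Complex.norm_real] at this
    exact this
  have e : exp w - 1 - a * z - a ^ 2 / 2 * (z ^ 2 - 1) =
      (exp w - 1 - w - w ^ 2 / 2) + (a ^ 4 / 8 - a ^ 3 * z / 2) := by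
    rw [hw]; ring
  rw [e]
  have h2 : |a ^ 4 / 8 - a ^ 3 * z / 2| ≤ |a| ^ 3 * (1 + |z|) := by
    have : a ^ 4 / 8 - a ^ 3 * z / 2 = a ^ 3 * (a / 8 - z / 2) := by ring
    rw [this, abs_mul, abs_pow]
    gcongr
    refine (abs_sub _ _).trans ?_
    rw [abs_div, abs_div]
    norm_num
    linarith [abs_nonneg z]
  have h3 : |w| ^ 3 * exp |w| ≤ (|a| * (1 + |z|)) ^ 3 * exp (1 + |z|) := by gcongr
  have h4 : (1 + |z|) ≤ (1 + |z|) ^ 3 * exp (1 + |z|) := by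
    have p1 : 1 ≤ exp (1 + |z|) := one_le_exp (by positivity)
    have p2 : 1 + |z| ≤ (1 + |z|) ^ 3 := le_self_pow₀ (by linarith [abs_nonneg z]) (by norm_num)
    nlinarith [abs_nonneg z]
  refine (abs_add_le _ _).trans ((add_le_add (h1.trans h3) h2).trans ?_)
  have h5 := mul_le_mul_of_nonneg_left h4 (show 0 ≤ |a| ^ 3 by positivity)
  nlinarith

/-- Third order expansion of a Gaussian-smoothed function with quadratic growth. -/
lemma gam_expand : ∃ C : ℝ, 0 < C ∧ ∀ k : ℝ → ℝ, Measurable k → (∀ z, |k z| ≤ 2 * z ^ 2) → ∀ a : ℝ,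
    |∫ z, k (z + a) ∂gam - ∫ z, k z ∂gam - a * ∫ z, k z * z ∂gam
      - a ^ 2 / 2 * ∫ z, k z * (z ^ 2 - 1) ∂gam| ≤ C * |a| ^ 3 := by
  have q0 : ∀ z : ℝ, 0 ≤ |z| := abs_nonneg
  have bd2 : ∀ z : ℝ, z ^ 2 ≤ (1 + |z|) ^ 2 := fun z => by
    rw [← sq_abs z]; gcongr; linarith
  have iW : Integrable (fun z : ℝ => 2 * z ^ 2 * (2 * (1 + |z|) ^ 3 * exp (1 + |z|))) gam := by
    refine gam_int_of_bound _ (by fun_prop) (4 * exp 1) 5 1 fun z => ?_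
    rw [abs_of_nonneg (by positivity), exp_add, one_mul]
    have := bd2 z
    calc _ ≤ 2 * (1 + |z|) ^ 2 * (2 * (1 + |z|) ^ 3 * (exp 1 * exp |z|)) := by gcongr
      _ = _ := by ring
  have iP : ∀ f : ℝ → ℝ, Measurable f → (∀ z, |f z| ≤ 16 * (1 + |z|) ^ 4) → Integrable f gam :=
    fun f hf hb => gam_int_of_bound f hf 16 4 0 (fun z => by simpa using hb z)
  have b1 : ∀ z : ℝ, 1 ≤ 1 + |z| := fun z => by linarith [q0 z]
  have bl : ∀ (z : ℝ) (n : ℕ), n ≤ 4 → (1 + |z|) ^ n ≤ (1 + |z|) ^ 4 := fun z n hn =>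
    pow_le_pow_right₀ (b1 z) hn
  set C1 := ∫ z, 2 * z ^ 2 * (2 * (1 + |z|) ^ 3 * exp (1 + |z|)) ∂gam with hC1
  set C2 := ∫ z, 16 * (1 + |z|) ^ 4 ∂gam with hC2
  have iC2 : Integrable (fun z : ℝ => 16 * (1 + |z|) ^ 4) gam :=
    iP _ (by fun_prop) (fun z => by rw [abs_of_nonneg (by positivity)])
  have hC1n : 0 ≤ C1 := integral_nonneg fun z => by positivity
  have hC2n : 0 ≤ C2 := integral_nonneg fun z => by positivity
  have hint : ∀ f : ℝ → ℝ, (∀ z, |f z| ≤ 16 * (1 + |z|) ^ 4) → |∫ z, f z ∂gam| ≤ C2 := fun f hb =>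
    (abs_integral_le_integral_abs).trans
      (integral_mono_of_nonneg (ae_of_all _ fun z => abs_nonneg _) iC2 (ae_of_all _ hb))
  refine ⟨C1 + 4 * C2 + 1, by positivity, fun k hk hkb a => ?_⟩
  have k0 : ∀ z, |k z| ≤ 16 * (1 + |z|) ^ 4 := fun z => by
    have := hkb z; have := bd2 z; have := bl z 2 (by norm_num)
    have : 0 ≤ (1 + |z|) ^ 4 := by positivity
    linarith
  have k1 : ∀ z, |k z * z| ≤ 16 * (1 + |z|) ^ 4 := fun z => by
    rw [abs_mul]
    calc |k z| * |z| ≤ (2 * (1 + |z|) ^ 2) * (1 + |z|) := by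
          gcongr
          · exact (hkb z).trans (by linarith [bd2 z])
          · linarith
      _ = 2 * (1 + |z|) ^ 3 := by ring
      _ ≤ _ := by
        have := bl z 3 (by norm_num)
        have : 0 ≤ (1 + |z|) ^ 4 := by positivity
        linarith
  have k2 : ∀ z, |k z * (z ^ 2 - 1)| ≤ 16 * (1 + |z|) ^ 4 := fun z => by
    rw [abs_mul]
    calc |k z| * |z ^ 2 - 1| ≤ (2 * (1 + |z|) ^ 2) * (1 + |z|) ^ 2 := by
          gcongr
          · exact (hkb z).trans (by linarith [bd2 z])
          · rw [abs_le]
            constructor <;> nlinarith [bd2 z, q0 z, sq_nonneg z]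
      _ = 2 * (1 + |z|) ^ 4 := by ring
      _ ≤ _ := by
        have : 0 ≤ (1 + |z|) ^ 4 := by positivity
        linarith
  have i0 := iP _ hk k0
  have i1 := iP (fun z => k z * z) (by fun_prop) k1
  have i2 := iP (fun z => k z * (z ^ 2 - 1)) (by fun_prop) k2
  by_cases ha : |a| ≤ 1
  · have i3 : Integrable (fun z => k z * exp (a * z - a ^ 2 / 2)) gam := by
      refine gam_int_of_bound _ (by fun_prop) 2 2 1 fun z => ?_
      rw [abs_mul, abs_of_pos (exp_pos _)]
      have : a * z - a ^ 2 / 2 ≤ 1 * |z| := by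
        have : a * z ≤ |a| * |z| := by rw [← abs_mul]; exact le_abs_self _
        nlinarith [q0 z, sq_nonneg a]
      gcongr
      exact (hkb z).trans (by linarith [bd2 z])
    have i4 : Integrable (fun z => k z * exp (a * z - a ^ 2 / 2) - k z) gam := i3.sub i0
    have i5 : Integrable (fun z => k z * exp (a * z - a ^ 2 / 2) - k z - a * (k z * z)) gam :=
      i4.sub (i1.const_mul _)
    rw [gam_shift, ← integral_const_mul, ← integral_const_mul, ← integral_sub i3 i0,
      ← integral_sub i4 (i1.const_mul _), ← integral_sub i5 (i2.const_mul _)]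
    refine abs_integral_le_integral_abs.trans ?_
    have : ∫ z, |k z * exp (a * z - a ^ 2 / 2) - k z - a * (k z * z) - a ^ 2 / 2 * (k z * (z ^ 2 - 1))| ∂gam
        ≤ ∫ z, |a| ^ 3 * (2 * z ^ 2 * (2 * (1 + |z|) ^ 3 * exp (1 + |z|))) ∂gam := by
      refine integral_mono_of_nonneg (ae_of_all _ fun z => abs_nonneg _) (iW.const_mul _)
        (ae_of_all _ fun z => ?_)
      have e : k z * exp (a * z - a ^ 2 / 2) - k z - a * (k z * z) - a ^ 2 / 2 * (k z * (z ^ 2 - 1))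
        = k z * (exp (a * z - a ^ 2 / 2) - 1 - a * z - a ^ 2 / 2 * (z ^ 2 - 1)) := by ring
      simp only
      rw [e, abs_mul]
      calc _ ≤ (2 * z ^ 2) * (|a| ^ 3 * (2 * (1 + |z|) ^ 3 * exp (1 + |z|))) := by
            gcongr
            · exact hkb z
            · exact gam_r3 a z ha
        _ = _ := by ring
    refine this.trans ?_
    rw [integral_const_mul, ← hC1, mul_comm]
    gcongr
    linarith
  · push Not at ha
    have hs : |∫ z, k (z + a) ∂gam| ≤ a ^ 2 * C2 := by
      rw [hC2, ← integral_const_mul]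
      refine abs_integral_le_integral_abs.trans
        (integral_mono_of_nonneg (ae_of_all _ fun z => abs_nonneg _) (iC2.const_mul _)
        (ae_of_all _ fun z => ?_))
      simp only
      refine (hkb _).trans ?_
      have e1 : (z + a) ^ 2 ≤ (|a| * (1 + |z|)) ^ 2 := by
        rw [← sq_abs (z + a)]
        gcongr
        refine (abs_add_le _ _).trans ?_
        nlinarith [q0 z]
      rw [mul_pow, sq_abs] at e1
      have e2 := mul_le_mul_of_nonneg_left (bl z 2 (by norm_num)) (sq_nonneg a)
      have : 0 ≤ a ^ 2 * (1 + |z|) ^ 4 := by positivity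
      linarith
    have h0 := hint _ k0
    have h1 := hint _ k1
    have h2 := hint _ k2
    have hA : |a| ^ 2 ≤ |a| ^ 3 := pow_le_pow_right₀ ha.le (by norm_num)
    have hB : |a| ≤ |a| ^ 3 := le_self_pow₀ ha.le (by norm_num)
    have hC : 1 ≤ |a| ^ 3 := one_le_pow₀ ha.le
    rw [← sq_abs a] at hs
    have t1 : |a * ∫ z, k z * z ∂gam| ≤ |a| * C2 := by rw [abs_mul]; gcongr
    have t2 : |a ^ 2 / 2 * ∫ z, k z * (z ^ 2 - 1) ∂gam| ≤ |a| ^ 2 * C2 := by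
      rw [abs_mul, abs_of_nonneg (show 0 ≤ a ^ 2 / 2 by positivity), ← sq_abs a]
      gcongr
      linarith [sq_nonneg |a|]
    refine (abs_sub _ _).trans ?_
    refine (add_le_add (abs_sub _ _) le_rfl).trans ?_
    refine (add_le_add (add_le_add (abs_sub _ _) le_rfl) le_rfl).trans ?_
    nlinarith [mul_le_mul_of_nonneg_right hA hC2n, mul_le_mul_of_nonneg_right hB hC2n,
      mul_le_mul_of_nonneg_right hC hC2n, mul_nonneg hC1n (show 0 ≤ |a| ^ 3 by positivity)]
/-- `h` has a derivative `φ` with quadratic remainder. -/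
structure Osc (h φ : ℝ → ℝ) : Prop where
  hc : Continuous h
  pc : Continuous φ
  osc : ∀ x v, |h v - h x - φ x * (v - x)| ≤ 2 * (v - x) ^ 2

/-- Gaussian smoothing. -/
def smU (h : ℝ → ℝ) (t x : ℝ) : ℝ := ∫ z, h (x + √t * z) ∂gam
def smB (h : ℝ → ℝ) (t x : ℝ) : ℝ := (∫ z, h (x + √t * z) * z ∂gam) / √t
def smD (h : ℝ → ℝ) (t x : ℝ) : ℝ := (∫ z, h (x + √t * z) * (z ^ 2 - 1) ∂gam) / (2 * t)

lemma gam_int_poly (f : ℝ → ℝ) (hf : Measurable f) (C : ℝ) (n : ℕ)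
    (h : ∀ z, |f z| ≤ C * (1 + |z|) ^ n) : Integrable f gam :=
  gam_int_of_bound f hf C n 0 (fun z => by simpa using h z)

lemma gam_int_pow (n : ℕ) : Integrable (fun z : ℝ => z ^ n) gam :=
  gam_int_poly _ (by fun_prop) 1 n fun z => by
    rw [abs_pow, one_mul]
    gcongr
    linarith

lemma gam_int_abs_pow (n : ℕ) : Integrable (fun z : ℝ => |z| ^ n) gam := by
  have := (gam_int_pow n).abs
  simpa [abs_pow] using this

lemma gam_m1 : ∫ z, z ∂gam = 0 := integral_id_gaussianReal

lemma gam_m2 : ∫ z, z ^ 2 ∂gam = 1 := by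
  have h := variance_fun_id_gaussianReal (μ := 0) (v := 1)
  rw [variance_eq_integral (by fun_prop)] at h
  simpa using h

lemma gam_m3 : ∫ z, z ^ 3 ∂gam = 0 := by
  have h : gam.map (fun x => -x) = gam := by
    have := gaussianReal_map_neg (μ := 0) (v := 1)
    simpa using this
  have h2 : ∫ z, z ^ 3 ∂gam = ∫ z, (-z) ^ 3 ∂gam := by
    conv_lhs => rw [← h]
    rw [integral_map (by fun_prop) (by fun_prop)]
  have h3 : ∀ z : ℝ, (-z) ^ 3 = - z ^ 3 := fun z => by ring
  simp_rw [h3, integral_neg] at h2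
  linarith

namespace Osc
variable {h φ : ℝ → ℝ}

lemma bound (H : Osc h φ) (x w : ℝ) : |h (x + w)| ≤ (|h x| + |φ x| + 2) * (1 + |w|) ^ 2 := by
  have h1 := H.osc x (x + w)
  rw [add_sub_cancel_left] at h1
  have h2 : |h (x + w)| ≤ 2 * w ^ 2 + |h x| + |φ x| * |w| := by
    rw [← abs_mul]
    have e : h (x + w) = (h (x + w) - h x - φ x * w) + h x + φ x * w := by ring
    rw [e]
    exact (abs_add_le _ _).trans (add_le_add ((abs_add_le _ _).trans (add_le_add h1 le_rfl)) le_rfl)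
  refine h2.trans ?_
  rw [← sq_abs w]
  nlinarith [abs_nonneg w, abs_nonneg (h x), abs_nonneg (φ x), mul_nonneg (abs_nonneg w) (abs_nonneg (h x)),
    mul_nonneg (abs_nonneg w) (abs_nonneg (φ x)), mul_nonneg (sq_nonneg |w|) (abs_nonneg (h x)),
    mul_nonneg (sq_nonneg |w|) (abs_nonneg (φ x))]

lemma bound' (H : Osc h φ) (x c z : ℝ) :
    |h (x + c * z)| ≤ (|h x| + |φ x| + 2) * (1 + |c|) ^ 2 * (1 + |z|) ^ 2 := by
  refine (H.bound x (c * z)).trans ?_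
  rw [mul_assoc, ← mul_pow]
  gcongr
  rw [abs_mul]
  nlinarith [abs_nonneg c, abs_nonneg z]

lemma int0 (H : Osc h φ) (x c : ℝ) : Integrable (fun z => h (x + c * z)) gam := by
  have := H.hc
  exact gam_int_poly _ (by fun_prop) _ 2 (H.bound' x c)

lemma int1 (H : Osc h φ) (x c : ℝ) : Integrable (fun z => h (x + c * z) * z) gam := by
  have := H.hc
  refine gam_int_poly _ (by fun_prop) ((|h x| + |φ x| + 2) * (1 + |c|) ^ 2) 3 (fun z => ?_)
  rw [abs_mul, pow_succ _ 2, ← mul_assoc]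
  gcongr
  · exact H.bound' x c z
  · linarith

lemma int2 (H : Osc h φ) (x c : ℝ) : Integrable (fun z => h (x + c * z) * (z ^ 2 - 1)) gam := by
  have := H.hc
  refine gam_int_poly _ (by fun_prop) ((|h x| + |φ x| + 2) * (1 + |c|) ^ 2) 4 (fun z => ?_)
  rw [abs_mul, show (1 + |z|) ^ 4 = (1 + |z|) ^ 2 * (1 + |z|) ^ 2 by ring, ← mul_assoc]
  gcongr
  · exact H.bound' x c z
  · rw [← sq_abs z, abs_le]
    constructor <;> nlinarith [abs_nonneg z]

end Osc

/-- Third-order expansion of the smoothed function. -/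
lemma sm_expand : ∃ C : ℝ, 0 < C ∧ ∀ h φ : ℝ → ℝ, Osc h φ → ∀ t x : ℝ, 0 < t →
    (∀ y, |smU h t (x + y) - smU h t x - y * smB h t x - y ^ 2 * smD h t x| ≤ C * |y| ^ 3 / √t) ∧
    |smD h t x| ≤ C ∧ |smB h t x| ≤ |φ x| + C * √t := by
  obtain ⟨C, hC, hK⟩ := gam_expand
  have iM2 : Integrable (fun z : ℝ => 2 * z ^ 2 * (z ^ 2 + 1)) gam := by
    have := ((gam_int_pow 4).add (gam_int_pow 2)).const_mul 2
    refine this.congr (ae_of_all _ fun z => ?_)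
    simp only [Pi.add_apply]; ring
  have iM1 : Integrable (fun z : ℝ => 2 * z ^ 2 * |z|) gam := by
    have := (gam_int_abs_pow 3).const_mul 2
    refine this.congr (ae_of_all _ fun z => ?_)
    simp only
    rw [← sq_abs z]; ring
  set M1 := ∫ z, 2 * z ^ 2 * |z| ∂gam with hM1
  set M2 := ∫ z, 2 * z ^ 2 * (z ^ 2 + 1) ∂gam with hM2
  have hM1n : 0 ≤ M1 := integral_nonneg fun z => by positivity
  have hM2n : 0 ≤ M2 := integral_nonneg fun z => by positivity
  refine ⟨C + M1 + M2, by positivity, fun h φ H t x ht => ?_⟩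
  have hs : 0 < √t := Real.sqrt_pos.mpr ht
  have hss : √t * √t = t := Real.mul_self_sqrt ht.le
  let k : ℝ → ℝ := fun z => (h (x + √t * z) - h x - φ x * (√t * z)) / t
  have hkm : Measurable k := by
    have := H.hc
    have : Continuous k := by simp only [k]; fun_prop
    exact this.measurable
  have hkb : ∀ z, |k z| ≤ 2 * z ^ 2 := fun z => by
    have := H.osc x (x + √t * z)
    rw [add_sub_cancel_left] at this
    simp only [k]
    rw [abs_div, abs_of_pos ht, div_le_iff₀ ht]
    refine this.trans (le_of_eq ?_)
    rw [mul_pow, Real.sq_sqrt ht.le]; ring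
  have hid : Integrable (fun z : ℝ => z) gam := by simpa using gam_int_pow 1
  have E0 : ∀ y, ∫ z, k (z + y / √t) ∂gam = (smU h t (x + y) - h x - φ x * y) / t := by
    intro y
    simp only [k, smU]
    rw [integral_div]
    congr 1
    have e : ∀ z, h (x + √t * (z + y / √t)) - h x - φ x * (√t * (z + y / √t))
        = h (x + y + √t * z) - ((h x + φ x * y) + φ x * √t * z) := by
      intro z
      have : √t * (z + y / √t) = y + √t * z := by field_simp; ring
      rw [this, ← add_assoc]; ring
    simp_rw [e]
    have j : Integrable (fun z : ℝ => h x + φ x * y + φ x * √t * z) gam :=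
      (integrable_const _).add (hid.const_mul _)
    rw [integral_sub (H.int0 _ _) j,
      integral_add (integrable_const _) (hid.const_mul _), integral_const_mul, gam_m1]
    simp; ring
  have E00 : ∫ z, k z ∂gam = (smU h t x - h x) / t := by
    have := E0 0
    simpa using this
  have E1 : ∫ z, k z * z ∂gam = (√t * smB h t x - φ x * √t) / t := by
    simp only [k, smB]
    rw [mul_div_cancel₀ _ hs.ne']
    have e : ∀ z, (h (x + √t * z) - h x - φ x * (√t * z)) / t * z
        = (h (x + √t * z) * z - (h x * z + φ x * √t * z ^ 2)) / t := fun z => by ring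
    simp_rw [e]
    have j : Integrable (fun z : ℝ => h x * z + φ x * √t * z ^ 2) gam :=
      (hid.const_mul _).add ((gam_int_pow 2).const_mul _)
    rw [integral_div, integral_sub (H.int1 _ _) j,
      integral_add (hid.const_mul _) ((gam_int_pow 2).const_mul _), integral_const_mul, integral_const_mul,
      gam_m1, gam_m2]
    ring
  have E2 : ∫ z, k z * (z ^ 2 - 1) ∂gam = 2 * smD h t x := by
    simp only [k, smD]
    have e : ∀ z, (h (x + √t * z) - h x - φ x * (√t * z)) / t * (z ^ 2 - 1)
        = (h (x + √t * z) * (z ^ 2 - 1) - (h x * z ^ 2 - h x + (φ x * √t * z ^ 3 - φ x * √t * z))) / t :=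
      fun z => by ring
    simp_rw [e]
    have j1 : Integrable (fun z : ℝ => h x * z ^ 2 - h x) gam :=
      ((gam_int_pow 2).const_mul _).sub (integrable_const _)
    have j2 : Integrable (fun z : ℝ => φ x * √t * z ^ 3 - φ x * √t * z) gam :=
      ((gam_int_pow 3).const_mul _).sub (hid.const_mul _)
    have j : Integrable (fun z : ℝ => h x * z ^ 2 - h x + (φ x * √t * z ^ 3 - φ x * √t * z)) gam :=
      j1.add j2
    rw [integral_div, integral_sub (H.int2 _ _) j, integral_add j1 j2,
      integral_sub ((gam_int_pow 2).const_mul _) (integrable_const _),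
      integral_sub ((gam_int_pow 3).const_mul _) (hid.const_mul _),
      integral_const_mul, integral_const_mul, integral_const_mul, gam_m1, gam_m2, gam_m3]
    simp; field_simp
  have bD : |2 * smD h t x| ≤ M2 := by
    rw [← E2]
    refine abs_integral_le_integral_abs.trans (integral_mono_of_nonneg
      (ae_of_all _ fun z => abs_nonneg _) iM2 (ae_of_all _ fun z => ?_))
    simp only
    rw [abs_mul]
    gcongr
    · exact hkb z
    · rw [abs_le]; constructor <;> nlinarith [sq_nonneg z]
  have bB : |(√t * smB h t x - φ x * √t) / t| ≤ M1 := by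
    rw [← E1]
    refine abs_integral_le_integral_abs.trans (integral_mono_of_nonneg
      (ae_of_all _ fun z => abs_nonneg _) iM1 (ae_of_all _ fun z => ?_))
    simp only
    rw [abs_mul]
    gcongr
    exact hkb z
  refine ⟨fun y => ?_, ?_, ?_⟩
  · have := hK k hkm hkb (y / √t)
    rw [E0, E00, E1, E2] at this
    have e : (smU h t (x + y) - h x - φ x * y) / t - (smU h t x - h x) / t -
        y / √t * ((√t * smB h t x - φ x * √t) / t) - (y / √t) ^ 2 / 2 * (2 * smD h t x)
        = (smU h t (x + y) - smU h t x - y * smB h t x - y ^ 2 * smD h t x) / t := by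
      rw [div_pow, Real.sq_sqrt ht.le]
      field_simp
      ring
    rw [e, abs_div, abs_of_pos ht, div_le_iff₀ ht, abs_div, abs_of_pos hs] at this
    refine this.trans ?_
    have e2 : C * (|y| / √t) ^ 3 * t = C * |y| ^ 3 / √t := by
      nth_rewrite 2 [← hss]
      field_simp
    rw [e2]
    gcongr
    linarith
  · rw [abs_mul] at bD
    norm_num at bD
    linarith [abs_nonneg (smD h t x)]
  · have e : (√t * smB h t x - φ x * √t) / t = (smB h t x - φ x) / √t := by
      rw [div_eq_div_iff ht.ne' hs.ne']
      linear_combination (smB h t x - φ x) * hss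
    rw [e, abs_div, abs_of_pos hs, div_le_iff₀ hs] at bB
    have : |smB h t x| ≤ |smB h t x - φ x| + |φ x| := by
      have := abs_add_le (smB h t x - φ x) (φ x)
      simpa using this
    nlinarith

lemma smU_sub (h φ : ℝ → ℝ) (H : Osc h φ) (t x : ℝ) (ht : 0 ≤ t) : |smU h t x - h x| ≤ 2 * t := by
  have hid : Integrable (fun z : ℝ => z) gam := by simpa using gam_int_pow 1
  have j1 : Integrable (fun z : ℝ => h x + φ x * √t * z) gam := (integrable_const _).add (hid.const_mul _)
  have e : smU h t x - h x = ∫ z, (h (x + √t * z) - (h x + φ x * √t * z)) ∂gam := by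
    rw [integral_sub (H.int0 _ _) j1, integral_add (integrable_const _) (hid.const_mul _),
      integral_const_mul, gam_m1]
    simp [smU]
  rw [e]
  have : ∫ z, 2 * t * z ^ 2 ∂gam = 2 * t := by rw [integral_const_mul, gam_m2, mul_one]
  rw [← this]
  refine abs_integral_le_integral_abs.trans (integral_mono_of_nonneg
      (ae_of_all _ fun z => abs_nonneg _) ((gam_int_pow 2).const_mul _) (ae_of_all _ fun z => ?_))
  simp only
  have := H.osc x (x + √t * z)
  rw [add_sub_cancel_left, mul_pow, Real.sq_sqrt ht] at this
  rw [show h (x + √t * z) - (h x + φ x * √t * z) = h (x + √t * z) - h x - φ x * (√t * z) by ring]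
  linarith

lemma gam_scale (c : ℝ) : gam.map (fun z => c * z) = gaussianReal 0 (Real.toNNReal (c ^ 2)) := by
  have := gaussianReal_map_const_mul (μ := 0) (v := 1) c
  rw [this, mul_zero, mul_one]
  congr 1
  ext
  simp [Real.coe_toNNReal _ (sq_nonneg c)]

lemma smU_semigroup (h φ : ℝ → ℝ) (H : Osc h φ) (t q x : ℝ) (ht : 0 ≤ t) (hq : 0 ≤ q) :
    smU h (t + q) x = ∫ z, smU h t (x + √q * z) ∂gam := by
  have hc := H.hc
  have e1 : ∀ s y, 0 ≤ s → smU h s y = ∫ w, h (y + w) ∂(gaussianReal 0 (Real.toNNReal s)) := by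
    intro s y hs
    have := gam_scale (√s)
    rw [Real.sq_sqrt hs] at this
    rw [← this, integral_map (by fun_prop) (by fun_prop)]
    rfl
  have hint : Integrable (fun w => h (x + w)) (gaussianReal 0 (Real.toNNReal (q + t))) := by
    have := gam_scale (√(q + t))
    rw [Real.sq_sqrt (by positivity)] at this
    rw [← this, integrable_map_measure (by fun_prop) (by fun_prop)]
    exact H.int0 x (√(q + t))
  have hconv : gaussianReal 0 (Real.toNNReal (q + t)) =
      (gaussianReal 0 (Real.toNNReal q)) ∗ (gaussianReal 0 (Real.toNNReal t)) := by
    rw [gaussianReal_conv_gaussianReal, Real.toNNReal_add hq ht, add_zero]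
  rw [add_comm, e1 _ _ (by positivity), hconv, integral_conv (by rwa [← hconv])]
  have := gam_scale (√q)
  rw [Real.sq_sqrt hq] at this
  rw [← this, integral_map (by fun_prop)]
  · congr 1; ext z
    rw [e1 _ _ ht]
    simp_rw [add_assoc]
  · apply StronglyMeasurable.aestronglyMeasurable
    apply StronglyMeasurable.integral_prod_right' (f := fun p : ℝ × ℝ => h (x + (p.1 + p.2)))
    exact (by fun_prop : Continuous fun p : ℝ × ℝ => h (x + (p.1 + p.2))).stronglyMeasurable

lemma smU_meas (h φ : ℝ → ℝ) (H : Osc h φ) : Measurable (fun p : ℝ × ℝ => smU h p.1 p.2) := by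
  have hc := H.hc
  apply StronglyMeasurable.measurable
  apply StronglyMeasurable.integral_prod_right' (f := fun p : (ℝ × ℝ) × ℝ => h (p.1.2 + √p.1.1 * p.2))
  exact Continuous.stronglyMeasurable (by fun_prop)

lemma smB_meas (h φ : ℝ → ℝ) (H : Osc h φ) : Measurable (fun p : ℝ × ℝ => smB h p.1 p.2) := by
  have hc := H.hc
  apply Measurable.div _ (by fun_prop)
  apply StronglyMeasurable.measurable
  apply StronglyMeasurable.integral_prod_right'
    (f := fun p : (ℝ × ℝ) × ℝ => h (p.1.2 + √p.1.1 * p.2) * p.2)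
  exact Continuous.stronglyMeasurable (by fun_prop)

lemma smD_meas (h φ : ℝ → ℝ) (H : Osc h φ) : Measurable (fun p : ℝ × ℝ => smD h p.1 p.2) := by
  have hc := H.hc
  apply Measurable.div _ (by fun_prop)
  apply StronglyMeasurable.measurable
  apply StronglyMeasurable.integral_prod_right'
    (f := fun p : (ℝ × ℝ) × ℝ => h (p.1.2 + √p.1.1 * p.2) * (p.2 ^ 2 - 1))
  exact Continuous.stronglyMeasurable (by fun_prop)

/-- The one-step estimates. -/
lemma sm_step : ∃ C : ℝ, 0 < C ∧ ∀ h φ : ℝ → ℝ, Osc h φ → ∀ t x M q y : ℝ, 0 < M → M ^ 2 ≤ t →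
    0 ≤ q → q ≤ M ^ 2 → |y| ≤ M →
    (smU h t (x + y) - smU h (t + q) x ≤ y * smB h t x + (y ^ 2 - q) * smD h t x
      + C * M * (y ^ 2 + q) / √t) ∧
    (smU h t (x + y) - smU h t x ≤ y * smB h t x + C * y ^ 2) ∧
    |smD h t x| ≤ C ∧ |smB h t x| ≤ |φ x| + C * √t := by
  obtain ⟨C, hC, hE⟩ := sm_expand
  set m3 := ∫ z, |z| ^ 3 ∂gam with hm3
  have hm3n : 0 ≤ m3 := integral_nonneg fun z => by positivity
  refine ⟨C * (2 + m3), by positivity, fun h φ H t x M q y hM hMt hq hqM hy => ?_⟩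
  have hc := H.hc
  have ht : 0 < t := lt_of_lt_of_le (by positivity) hMt
  have hs : 0 < √t := Real.sqrt_pos.mpr ht
  have hMs : M ≤ √t := Real.le_sqrt_of_sq_le hMt
  obtain ⟨h1, h2, h3⟩ := hE h φ H t x ht
  have hid : Integrable (fun z : ℝ => z) gam := by simpa using gam_int_pow 1
  have hG : |smU h (t + q) x - smU h t x - q * smD h t x| ≤ C * m3 * (M * q) / √t := by
    have hUint : Integrable (fun z => smU h t (x + √q * z)) gam := by
      have hi := (H.int0 x (√q)).norm.add (integrable_const (2 * t))
      refine hi.mono' ((smU_meas h φ H).comp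
        (by fun_prop : Measurable fun z => (t, x + √q * z))).aestronglyMeasurable
        (ae_of_all _ fun z => ?_)
      have := smU_sub h φ H t (x + √q * z) ht.le
      simp only [Pi.add_apply, Real.norm_eq_abs]
      have h5 := abs_add_le (smU h t (x + √q * z) - h (x + √q * z)) (h (x + √q * z))
      rw [sub_add_cancel] at h5
      linarith
    have j : Integrable (fun z : ℝ => smU h t x + √q * smB h t x * z) gam :=
      (integrable_const _).add (hid.const_mul _)
    have i2 : Integrable (fun z => smU h t (x + √q * z) - (smU h t x + √q * smB h t x * z)) gam :=
      hUint.sub j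
    have e : smU h (t + q) x - smU h t x - q * smD h t x
        = ∫ z, (smU h t (x + √q * z) - (smU h t x + √q * smB h t x * z) - q * smD h t x * z ^ 2) ∂gam := by
      rw [integral_sub i2 ((gam_int_pow 2).const_mul _), integral_sub hUint j, integral_add (integrable_const _) (hid.const_mul _),
        integral_const_mul, integral_const_mul, gam_m1, gam_m2, smU_semigroup h φ H t q x ht.le hq]
      simp
    rw [e]
    have hr : ∫ z, C * (√q * q) / √t * |z| ^ 3 ∂gam ≤ C * m3 * (M * q) / √t := by
      rw [integral_const_mul, ← hm3]
      have : √q ≤ M := Real.sqrt_le_iff.mpr ⟨hM.le, hqM⟩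
      calc C * (√q * q) / √t * m3 = C * m3 * (√q * q) / √t := by ring
        _ ≤ _ := by gcongr
    refine le_trans ?_ hr
    refine abs_integral_le_integral_abs.trans (integral_mono_of_nonneg
      (ae_of_all _ fun z => abs_nonneg _) ((gam_int_abs_pow 3).const_mul _) (ae_of_all _ fun z => ?_))
    simp only
    have := h1 (√q * z)
    rw [mul_pow, Real.sq_sqrt hq, abs_mul, mul_pow, abs_of_nonneg (Real.sqrt_nonneg q),
      pow_succ √q 2, Real.sq_sqrt hq] at this
    calc _ = |smU h t (x + √q * z) - smU h t x - √q * z * smB h t x - q * z ^ 2 * smD h t x| := by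
          congr 1; ring
      _ ≤ _ := this
      _ = _ := by ring
  have hy3 : |y| ^ 3 ≤ M * y ^ 2 := by
    rw [← sq_abs y, pow_succ, mul_comm]
    gcongr
  refine ⟨?_, ?_, ?_, ?_⟩
  · have a1 := (abs_le.mp (h1 y)).2
    have a2 := (abs_le.mp hG).1
    have a3 : C * |y| ^ 3 / √t ≤ C * (M * y ^ 2) / √t := by gcongr
    have a4 : C * (M * y ^ 2) / √t + C * m3 * (M * q) / √t ≤ C * (2 + m3) * M * (y ^ 2 + q) / √t := by
      rw [← add_div]
      gcongr
      have : 0 ≤ C * M * y ^ 2 := by positivity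
      have : 0 ≤ C * M * m3 * y ^ 2 := by positivity
      have : 0 ≤ C * M * q := by positivity
      linarith
    linarith
  · have a1 := (abs_le.mp (h1 y)).2
    have a3 : C * |y| ^ 3 / √t ≤ C * y ^ 2 := by
      rw [div_le_iff₀ hs]
      calc C * |y| ^ 3 ≤ C * (M * y ^ 2) := by gcongr
        _ ≤ C * (√t * y ^ 2) := by gcongr
        _ = _ := by ring
    have a4 : y ^ 2 * smD h t x ≤ y ^ 2 * C := by
      gcongr; exact (le_abs_self _).trans h2
    have : 0 ≤ C * m3 * y ^ 2 := by positivity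
    linarith
  · nlinarith [mul_nonneg hC.le hm3n]
  · have : 0 ≤ C * √t * (1 + m3) := by positivity
    linarith

/-- Partial sums. -/
def pT (q : ℕ → ℝ) (k : ℕ) : ℝ := ∑ j ∈ Finset.range k, q j
/-- Predictable truncation indicator. -/
def chi (s2 : ℝ) (q : ℕ → ℝ) (k : ℕ) : ℝ := if pT q (k + 1) ≤ s2 then 1 else 0
/-- Truncated clock. -/
def pA (s2 : ℝ) (q : ℕ → ℝ) (k : ℕ) : ℝ := ∑ j ∈ Finset.range k, chi s2 q j * q j

lemma pT_succ (q : ℕ → ℝ) (k : ℕ) : pT q (k + 1) = pT q k + q k := Finset.sum_range_succ _ _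
lemma pA_succ (s2 : ℝ) (q : ℕ → ℝ) (k : ℕ) : pA s2 q (k + 1) = pA s2 q k + chi s2 q k * q k :=
  Finset.sum_range_succ _ _

lemma pA_inv (s2 M2 : ℝ) (q : ℕ → ℝ) (hs : 0 ≤ s2) (hq : ∀ k, 0 ≤ q k ∧ q k ≤ M2) (k : ℕ) :
    (pT q k ≤ s2 ∧ pA s2 q k = pT q k) ∨ (s2 < pT q k ∧ s2 - M2 < pA s2 q k ∧ pA s2 q k ≤ s2) := by
  induction k with
  | zero => left; simp [pT, pA, hs]
  | succ k ih =>
    have h1 := hq k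
    have hT := pT_succ q k
    have hA := pA_succ s2 q k
    by_cases hc : pT q (k + 1) ≤ s2
    · have : chi s2 q k = 1 := by simp [chi, hc]
      rw [this] at hA
      rcases ih with ih | ih
      · left; exact ⟨hc, by linarith⟩
      · exfalso; linarith
    · have : chi s2 q k = 0 := by simp [chi, hc]
      rw [this] at hA
      push Not at hc
      right
      rcases ih with ih | ih
      · exact ⟨hc, by linarith, by linarith⟩
      · exact ⟨hc, by linarith, by linarith⟩

lemma pA_le (s2 M2 : ℝ) (q : ℕ → ℝ) (hs : 0 ≤ s2) (hq : ∀ k, 0 ≤ q k ∧ q k ≤ M2) (k : ℕ) :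
    pA s2 q k ≤ s2 := by
  rcases pA_inv s2 M2 q hs hq k with h | h
  · linarith
  · exact h.2.2

lemma chi_nonneg (s2 : ℝ) (q : ℕ → ℝ) (k : ℕ) : 0 ≤ chi s2 q k := by
  unfold chi; split_ifs <;> norm_num

lemma pA_nonneg (s2 : ℝ) (q : ℕ → ℝ) (hq : ∀ k, 0 ≤ q k) (k : ℕ) :
    0 ≤ pA s2 q k := Finset.sum_nonneg fun i _ => mul_nonneg (chi_nonneg _ _ _) (hq i)

lemma pA_gap (s2 M2 : ℝ) (q : ℕ → ℝ) (hs : 0 ≤ s2) (hM : 0 ≤ M2) (hq : ∀ k, 0 ≤ q k ∧ q k ≤ M2) (k : ℕ) :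
    s2 - pA s2 q k ≤ |pT q k - s2| + M2 ∧ pT q k - pA s2 q k ≤ |pT q k - s2| + M2 := by
  rcases pA_inv s2 M2 q hs hq k with h | h
  · have := neg_abs_le (pT q k - s2)
    have := abs_nonneg (pT q k - s2)
    constructor <;> linarith
  · have := le_abs_self (pT q k - s2)
    have := abs_nonneg (pT q k - s2)
    constructor <;> linarith

/-- first-order coefficient -/
def cB (H : ℝ → ℝ) (s2 M : ℝ) (q : ℕ → ℝ) (x : ℝ) (k : ℕ) : ℝ :=
  smB H (s2 + M ^ 2 - pA s2 q (k + 1)) x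
/-- second-order coefficient -/
def cE (C : ℝ) (H : ℝ → ℝ) (s2 M : ℝ) (q : ℕ → ℝ) (x : ℝ) (k : ℕ) : ℝ :=
  chi s2 q k * (smD H (s2 + M ^ 2 - pA s2 q (k + 1)) x + C * M / √(s2 + M ^ 2 - pA s2 q (k + 1)))
    + (1 - chi s2 q k) * C
/-- remainder coefficient -/
def cG (C : ℝ) (s2 M : ℝ) (q : ℕ → ℝ) (k : ℕ) : ℝ :=
  chi s2 q k * (2 * C * M / √(s2 + M ^ 2 - pA s2 q (k + 1))) + (1 - chi s2 q k) * C

lemma sqrt_tele (t q : ℝ) (ht : 0 < t) (hq : 0 ≤ q) (hqt : q ≤ t) :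
    q / √t ≤ 3 * (√(t + q) - √t) := by
  have hs := Real.sqrt_pos.2 ht
  have h1 := Real.mul_self_sqrt ht.le
  have h2 := Real.mul_self_sqrt (show 0 ≤ t + q by linarith)
  have h3 := Real.sqrt_nonneg (t + q)
  have h4 : √(t + q) ≤ 2 * √t := by
    apply Real.sqrt_le_iff.2
    constructor
    · positivity
    · nlinarith
  have h5 : √t ≤ √(t + q) := Real.sqrt_le_sqrt (by linarith)
  rw [div_le_iff₀ hs]
  nlinarith

lemma path_bound : ∃ C : ℝ, 0 < C ∧ ∀ H φ : ℝ → ℝ, Osc H φ → ∀ (s2 M : ℝ) (q : ℕ → ℝ), 0 ≤ s2 → 0 < M →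
    (∀ k, 0 ≤ q k ∧ q k ≤ M ^ 2) →
    (∀ x k, |cB H s2 M q x k| ≤ |φ x| + C * √(s2 + M ^ 2) ∧ |cE C H s2 M q x k| ≤ 2 * C) ∧
    ∀ (y : ℕ → ℝ) (n : ℕ), (∀ k, k < n → |y k| ≤ M) →
      H (pT y n) - smU H s2 0 ≤ (∑ k ∈ Finset.range n, (y k * cB H s2 M q (pT y k) k
        + (y k ^ 2 - q k) * cE C H s2 M q (pT y k) k))
        + (6 * C + C + 6) * (M ^ 2 + M * √(s2 + M ^ 2) + |pT q n - s2|) := by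
  obtain ⟨C, hC, hst⟩ := sm_step
  refine ⟨C, hC, fun H φ O s2 M q hs hM hq => ?_⟩
  have hM2 : 0 < M ^ 2 := by positivity
  have hτ : ∀ k, M ^ 2 ≤ s2 + M ^ 2 - pA s2 q k := fun k => by
    linarith [pA_le s2 (M ^ 2) q hs hq k]
  have hτ2 : ∀ k, s2 + M ^ 2 - pA s2 q k ≤ s2 + M ^ 2 := fun k => by
    linarith [pA_nonneg s2 q (fun k => (hq k).1) k]
  have hMτ : ∀ k, M ≤ √(s2 + M ^ 2 - pA s2 q k) := fun k => Real.le_sqrt_of_sq_le (hτ k)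
  constructor
  · intro x k
    obtain ⟨-, -, hD, hB⟩ := hst H φ O (s2 + M ^ 2 - pA s2 q (k + 1)) x M 0 0 hM (hτ _) le_rfl hM2.le
      (by simpa using hM.le)
    constructor
    · refine hB.trans ?_
      gcongr
      exact hτ2 _
    · have h2 : C * M / √(s2 + M ^ 2 - pA s2 q (k + 1)) ≤ C := by
        rw [div_le_iff₀ (hM.trans_le (hMτ _))]
        exact mul_le_mul_of_nonneg_left (hMτ _) hC.le
      have h3 : 0 ≤ C * M / √(s2 + M ^ 2 - pA s2 q (k + 1)) := by positivity
      unfold cE chi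
      rw [abs_le] at hD ⊢
      split_ifs
      · constructor <;> linarith
      · constructor <;> linarith
  · intro y n hy
    set R := s2 + M ^ 2 with hR
    set v : ℕ → ℝ := fun k => smU H (R - pA s2 q k) (pT y k) with hv
    have step : ∀ k, k < n → v (k + 1) - v k ≤ (y k * cB H s2 M q (pT y k) k
        + (y k ^ 2 - q k) * cE C H s2 M q (pT y k) k) + q k * cG C s2 M q k := by
      intro k hk
      obtain ⟨h1, h2, -, -⟩ := hst H φ O (R - pA s2 q (k + 1)) (pT y k) M (q k) (y k) hM (hτ _)
        (hq k).1 (hq k).2 (hy k hk)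
      simp only [hv, pT_succ y k]
      unfold cB cE cG
      by_cases hc : pT q (k + 1) ≤ s2
      · have e : chi s2 q k = 1 := by simp [chi, hc]
        have e2 : R - pA s2 q k = R - pA s2 q (k + 1) + q k := by rw [pA_succ, e]; ring
        rw [e, e2]
        refine h1.trans (le_of_eq ?_)
        rw [← hR]
        ring
      · have e : chi s2 q k = 0 := by simp [chi, hc]
        have e2 : R - pA s2 q k = R - pA s2 q (k + 1) := by rw [pA_succ, e]; ring
        rw [e, e2]
        refine h2.trans (le_of_eq ?_)
        rw [← hR]
        ring
    have gstep : ∀ k, q k * cG C s2 M q k ≤ 6 * C * M * (√(R - pA s2 q k) - √(R - pA s2 q (k + 1)))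
        + C * ((pT q (k + 1) - pA s2 q (k + 1)) - (pT q k - pA s2 q k)) := by
      intro k
      unfold cG
      by_cases hc : pT q (k + 1) ≤ s2
      · have e : chi s2 q k = 1 := by simp [chi, hc]
        have e2 : R - pA s2 q k = R - pA s2 q (k + 1) + q k := by rw [pA_succ, e]; ring
        have h1 := sqrt_tele (R - pA s2 q (k + 1)) (q k) (hM2.trans_le (hτ _)) (hq k).1
          ((hq k).2.trans (hτ _))
        rw [← e2] at h1
        have h2 : pT q (k + 1) - pA s2 q (k + 1) - (pT q k - pA s2 q k) = 0 := by
          rw [pA_succ, e, pT_succ]; ring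
        rw [h2, e, ← hR]
        have h3 := mul_le_mul_of_nonneg_left h1 (show 0 ≤ 2 * C * M by positivity)
        refine le_trans (le_of_eq ?_) (h3.trans (le_of_eq ?_)) <;> ring
      · have e : chi s2 q k = 0 := by simp [chi, hc]
        rw [pA_succ, e, pT_succ]
        refine le_of_eq ?_
        ring
    have s1 := Finset.sum_le_sum (s := Finset.range n) fun k hk => step k (Finset.mem_range.1 hk)
    have s2' := Finset.sum_le_sum (s := Finset.range n) fun k _ => gstep k
    rw [Finset.sum_range_sub v n, Finset.sum_add_distrib] at s1
    rw [Finset.sum_add_distrib, ← Finset.mul_sum, ← Finset.mul_sum, Finset.sum_range_sub',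
      Finset.sum_range_sub (fun k => pT q k - pA s2 q k)] at s2'
    obtain ⟨g1, g2⟩ := pA_gap s2 (M ^ 2) q hs hM2.le hq n
    have z1 : pA s2 q 0 = 0 := by simp [pA]
    have z2 : pT q 0 = 0 := by simp [pT]
    have z3 : pT y 0 = 0 := by simp [pT]
    have b1 := abs_le.1 (smU_sub H φ O (R - pA s2 q n) (pT y n) (hM2.le.trans (hτ n)))
    have b2 : smU H R 0 ≤ smU H s2 0 + 2 * M ^ 2 := by
      have e : smU H R 0 = ∫ z, smU H (M ^ 2) (0 + √s2 * z) ∂gam := by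
        rw [← smU_semigroup H φ O (M ^ 2) s2 0 hM2.le hs, hR, add_comm]
      have e2 : ∫ z, (H (0 + √s2 * z) + 2 * M ^ 2) ∂gam = smU H s2 0 + 2 * M ^ 2 := by
        rw [integral_add (O.int0 _ _) (integrable_const _)]
        simp [smU]
      rw [e, ← e2]
      have m1 : Measurable (fun z => smU H (M ^ 2) (0 + √s2 * z)) :=
        (smU_meas H φ O).comp (f := fun z : ℝ => (M ^ 2, 0 + √s2 * z)) (by fun_prop)
      have ib : Integrable (fun z => smU H (M ^ 2) (0 + √s2 * z)) gam := by
        refine Integrable.mono' (((O.int0 0 √s2).abs).add (integrable_const (2 * M ^ 2)))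
          m1.aestronglyMeasurable (ae_of_all _ fun z => ?_)
        have := abs_le.1 (smU_sub H φ O (M ^ 2) (0 + √s2 * z) hM2.le)
        have l1 := le_abs_self (H (0 + √s2 * z))
        have l2 := neg_abs_le (H (0 + √s2 * z))
        simp only [Pi.add_apply, Real.norm_eq_abs]
        rw [abs_le]
        constructor <;> linarith
      refine integral_mono ib ((O.int0 _ _).add (integrable_const _)) fun z => ?_
      have := abs_le.1 (smU_sub H φ O (M ^ 2) (0 + √s2 * z) hM2.le)
      simp only
      linarith
    simp only [hv] at s1
    rw [z1, z3] at s1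
    rw [z1, z2] at s2'
    have r1 : √(R - 0) = √R := by simp
    rw [r1] at s2'
    rw [sub_zero] at s1
    have r2 := Real.sqrt_nonneg (R - pA s2 q n)
    have r3 : 0 ≤ C * M * √(R - pA s2 q n) := by positivity
    have r4 : C * (pT q n - pA s2 q n) ≤ C * (|pT q n - s2| + M ^ 2) := by gcongr
    have r5 : 0 ≤ M * √R := by positivity
    have r6 := abs_nonneg (pT q n - s2)
    have r7 : 0 ≤ C * (M * √R) := by positivity
    have r8 : 0 ≤ C * |pT q n - s2| := by positivity
    have r9 : 0 ≤ C * M ^ 2 := by positivity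
    simp only [hR] at *
    nlinarith

lemma int_mul_zero {Ω : Type} {m m0 : MeasurableSpace Ω} {μ : Measure Ω} [IsProbabilityMeasure μ]
    (hm : m ≤ m0) (f g : Ω → ℝ) (hf : Integrable f μ) (h0 : μ[f | m] =ᵐ[μ] 0)
    (hg : Measurable[m] g) (c : ℝ) (hc : ∀ ω, |g ω| ≤ c) :
    Integrable (fun ω => f ω * g ω) μ ∧ ∫ ω, f ω * g ω ∂μ = 0 := by
  have hgs : StronglyMeasurable[m] g := hg.stronglyMeasurable
  have hi : Integrable (g * f) μ :=
    hf.bdd_mul (hgs.mono hm).aestronglyMeasurable (ae_of_all _ fun ω => hc ω)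
  have e := condExp_mul_of_stronglyMeasurable_left (μ := μ) hgs hi hf
  have e2 : ∫ ω, (g * f) ω ∂μ = 0 := by
    rw [← integral_condExp hm, integral_congr_ae e]
    have : (g * μ[f | m]) =ᵐ[μ] 0 := by
      filter_upwards [h0] with ω h
      simp [h]
    rw [integral_congr_ae this]
    simp
  have e3 : (fun ω => f ω * g ω) = g * f := by
    ext ω; simp [mul_comm]
  rw [e3]
  exact ⟨hi, e2⟩

lemma mart_bound : ∃ C : ℝ, 0 < C ∧ ∀ (Ω : Type) (m0 : MeasurableSpace Ω) (μ : Measure Ω),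
    IsProbabilityMeasure μ → ∀ (F : ℕ → MeasurableSpace Ω), (∀ i, F i ≤ m0) → Monotone F →
    ∀ (y : ℕ → Ω → ℝ), (∀ k, Measurable[F (k + 1)] (y k)) → (∀ k, μ[y k | F k] =ᵐ[μ] 0) →
    ∀ M : ℝ, 0 < M → (∀ k ω, |y k ω| ≤ M) → ∀ s2 : ℝ, 0 ≤ s2 → ∀ H φ : ℝ → ℝ, Osc H φ → ∀ n : ℕ,
    ∫ ω, H (∑ k ∈ Finset.range n, y k ω) ∂μ - smU H s2 0 ≤ C * (M ^ 2 + M * √(s2 + M ^ 2)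
      + ∫ ω, |∑ k ∈ Finset.range n, (μ[fun ω' => y k ω' ^ 2 | F k]) ω - s2| ∂μ) := by
  obtain ⟨C, hC, hP⟩ := path_bound
  refine ⟨6 * C + C + 6, by positivity, ?_⟩
  intro Ω m0 μ hμ F hle hmono y hy hdiff M hM hyM s2 hs H φ O n
  have hM2 : 0 < M ^ 2 := by positivity
  set q : ℕ → Ω → ℝ := fun k ω => max 0 (min (M ^ 2) ((μ[fun ω' => y k ω' ^ 2 | F k]) ω)) with hqdef
  have hq : ∀ ω k, 0 ≤ q k ω ∧ q k ω ≤ M ^ 2 := fun ω k =>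
    ⟨le_max_left _ _, max_le hM2.le (min_le_left _ _)⟩
  have hqm : ∀ k, Measurable[F k] (q k) := fun k =>
    (show Measurable (fun z : ℝ => max 0 (min (M ^ 2) z)) by fun_prop).comp
      stronglyMeasurable_condExp.measurable
  have hy0 : ∀ k, Measurable (y k) := fun k => (hy k).mono (hle _) le_rfl
  have hyi : ∀ k, Integrable (y k) μ := fun k =>
    Integrable.of_bound (hy0 k).aestronglyMeasurable M (ae_of_all _ fun ω => hyM k ω)
  have hy2M : ∀ k ω, y k ω ^ 2 ≤ M ^ 2 := fun k ω => by
    rw [← sq_abs]; exact pow_le_pow_left₀ (abs_nonneg _) (hyM k ω) 2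
  have hy2i : ∀ k, Integrable (fun ω => y k ω ^ 2) μ := fun k =>
    Integrable.of_bound ((hy0 k).pow_const 2).aestronglyMeasurable (M ^ 2) (ae_of_all _ fun ω => by
      rw [Real.norm_eq_abs, abs_of_nonneg (sq_nonneg _)]; exact hy2M k ω)
  have hqe : ∀ k, q k =ᵐ[μ] μ[fun ω' => y k ω' ^ 2 | F k] := by
    intro k
    have h1 : 0 ≤ᵐ[μ] μ[fun ω' => y k ω' ^ 2 | F k] :=
      condExp_nonneg (ae_of_all _ fun ω => sq_nonneg _)
    have h2 : μ[fun ω' => y k ω' ^ 2 | F k] ≤ᵐ[μ] μ[fun _ => M ^ 2 | F k] :=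
      condExp_mono (hy2i k) (integrable_const _) (ae_of_all _ fun ω => hy2M k ω)
    rw [condExp_const (hle k)] at h2
    filter_upwards [h1, h2] with ω a b
    simp only [hqdef]
    rw [min_eq_right b, max_eq_right (show (0 : ℝ) ≤ _ from a)]
  have hq0 : ∀ k, Measurable (q k) := fun k => (hqm k).mono (hle _) le_rfl
  have hqi : ∀ k, Integrable (q k) μ := fun k =>
    Integrable.of_bound (hq0 k).aestronglyMeasurable (M ^ 2) (ae_of_all _ fun ω => by
      rw [Real.norm_eq_abs, abs_of_nonneg (hq ω k).1]; exact (hq ω k).2)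
  set S : ℕ → Ω → ℝ := fun k ω => pT (fun j => y j ω) k with hS
  have hSm : ∀ k, Measurable[F k] (S k) := fun k => by
    have : S k = fun ω => ∑ j ∈ Finset.range k, y j ω := rfl
    rw [this]
    refine Finset.measurable_fun_sum (m := F k) _ fun j hj => ?_
    exact (hy j).mono (hmono (Finset.mem_range.1 hj)) le_rfl
  have hTm : ∀ k, Measurable[F k] (fun ω => pT (fun j => q j ω) (k + 1)) := fun k => by
    refine Finset.measurable_fun_sum (m := F k) _ fun j hj => ?_
    exact (hqm j).mono (hmono (Nat.lt_succ_iff.1 (Finset.mem_range.1 hj))) le_rfl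
  have hchim : ∀ k, Measurable[F k] (fun ω => chi s2 (fun j => q j ω) k) := fun k => by
    refine Measurable.ite (m := F k) ?_ (@measurable_const _ _ _ (F k) _) (@measurable_const _ _ _ (F k) _)
    exact (hTm k) measurableSet_Iic
  have hAm : ∀ k, Measurable[F k] (fun ω => pA s2 (fun j => q j ω) (k + 1)) := fun k => by
    refine Finset.measurable_fun_sum (m := F k) _ fun j hj => ?_
    have := hmono (Nat.lt_succ_iff.1 (Finset.mem_range.1 hj))
    exact Measurable.mul (m := F k) ((hchim j).mono this le_rfl) ((hqm j).mono this le_rfl)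
  have hτm : ∀ k, Measurable[F k] (fun ω => s2 + M ^ 2 - pA s2 (fun j => q j ω) (k + 1)) := fun k =>
    Measurable.const_sub (m := F k) (hAm k) _
  have hpair : ∀ k, Measurable[F k] (fun ω => (s2 + M ^ 2 - pA s2 (fun j => q j ω) (k + 1), S k ω)) :=
    fun k => Measurable.prodMk (m := F k) (hτm k) (hSm k)
  have hBm : ∀ k, Measurable[F k] (fun ω => cB H s2 M (fun j => q j ω) (S k ω) k) := fun k =>
    (smB_meas H φ O).comp (hpair k)
  have hDm : ∀ k, Measurable[F k] (fun ω => smD H (s2 + M ^ 2 - pA s2 (fun j => q j ω) (k + 1)) (S k ω)) := fun k =>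
    (smD_meas H φ O).comp (hpair k)
  have hEm : ∀ k, Measurable[F k] (fun ω => cE C H s2 M (fun j => q j ω) (S k ω) k) := fun k => by
    unfold cE
    have h1 : Measurable[F k] (fun ω => √(s2 + M ^ 2 - pA s2 (fun j => q j ω) (k + 1))) :=
      Real.continuous_sqrt.measurable.comp (hτm k)
    exact Measurable.add (m := F k) (Measurable.mul (m := F k) (hchim k)
      (Measurable.add (m := F k) (hDm k) (Measurable.const_div (m := F k) h1 _)))
      (Measurable.mul_const (m := F k) (Measurable.const_sub (m := F k) (hchim k) _) _)
  have hSb : ∀ k ω, |S k ω| ≤ k * M := fun k ω => by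
    refine (Finset.abs_sum_le_sum_abs _ _).trans ?_
    refine (Finset.sum_le_sum fun j _ => hyM j ω).trans ?_
    simp
  have hbd : ∀ (f : ℝ → ℝ), Continuous f → ∀ k : ℕ, ∃ K, ∀ ω, |f (S k ω)| ≤ K := fun f hf k => by
    obtain ⟨K, hK⟩ := (isCompact_Icc (a := -(k * M)) (b := k * M)).exists_bound_of_continuousOn hf.continuousOn
    exact ⟨K, fun ω => hK _ (abs_le.1 (hSb k ω))⟩
  have I1 : ∀ k, Integrable (fun ω => y k ω * cB H s2 M (fun j => q j ω) (S k ω) k) μ ∧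
      ∫ ω, y k ω * cB H s2 M (fun j => q j ω) (S k ω) k ∂μ = 0 := fun k => by
    obtain ⟨K, hK⟩ := hbd φ O.pc k
    refine int_mul_zero (hle k) _ _ (hyi k) (hdiff k) (hBm k) (K + C * √(s2 + M ^ 2)) fun ω => ?_
    have := ((hP H φ O s2 M (fun j => q j ω) hs hM (hq ω)).1 (S k ω) k).1
    linarith [hK ω]
  have I2 : ∀ k, Integrable (fun ω => (y k ω ^ 2 - q k ω) * cE C H s2 M (fun j => q j ω) (S k ω) k) μ ∧
      ∫ ω, (y k ω ^ 2 - q k ω) * cE C H s2 M (fun j => q j ω) (S k ω) k ∂μ = 0 := fun k => by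
    refine int_mul_zero (hle k) (fun ω => y k ω ^ 2 - q k ω) _ ((hy2i k).sub (hqi k)) ?_ (hEm k) (2 * C) fun ω => ?_
    · have e := condExp_sub (μ := μ) (hy2i k) (hqi k) (F k)
      have e2 : μ[q k | F k] = q k :=
        condExp_of_stronglyMeasurable (hle k) (hqm k).stronglyMeasurable (hqi k)
      have e3 : (fun ω => y k ω ^ 2 - q k ω) = (fun ω => y k ω ^ 2) - q k := rfl
      rw [e3]
      filter_upwards [e, hqe k] with ω h1 h2
      rw [h1, Pi.sub_apply, e2, h2]
      simp
    · exact ((hP H φ O s2 M (fun j => q j ω) hs hM (hq ω)).1 (S k ω) k).2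
  have IT : Integrable (fun ω => |pT (fun j => q j ω) n - s2|) μ := by
    have : Integrable (fun ω => pT (fun j => q j ω) n) μ := integrable_finsetSum _ fun k _ => hqi k
    exact (this.sub (integrable_const s2)).abs
  have IH : Integrable (fun ω => H (S n ω)) μ := by
    obtain ⟨K, hK⟩ := hbd H O.hc n
    exact Integrable.of_bound (O.hc.measurable.comp ((hSm n).mono (hle n) le_rfl)).aestronglyMeasurable K
      (ae_of_all _ hK)
  have IS : Integrable (fun ω => ∑ k ∈ Finset.range n, (y k ω * cB H s2 M (fun j => q j ω) (S k ω) k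
        + (y k ω ^ 2 - q k ω) * cE C H s2 M (fun j => q j ω) (S k ω) k)) μ :=
    integrable_finsetSum _ fun k _ => (I1 k).1.add (I2 k).1
  have IS0 : ∫ ω, ∑ k ∈ Finset.range n, (y k ω * cB H s2 M (fun j => q j ω) (S k ω) k
        + (y k ω ^ 2 - q k ω) * cE C H s2 M (fun j => q j ω) (S k ω) k) ∂μ = 0 := by
    have I3 : ∀ k, Integrable (fun ω => y k ω * cB H s2 M (fun j => q j ω) (S k ω) k
        + (y k ω ^ 2 - q k ω) * cE C H s2 M (fun j => q j ω) (S k ω) k) μ :=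
      fun k => (I1 k).1.add (I2 k).1
    rw [integral_finsetSum _ fun k _ => I3 k]
    refine Finset.sum_eq_zero fun k _ => ?_
    rw [integral_add (I1 k).1 (I2 k).1, (I1 k).2, (I2 k).2, add_zero]
  have eT : ∫ ω, |∑ k ∈ Finset.range n, (μ[fun ω' => y k ω' ^ 2 | F k]) ω - s2| ∂μ
      = ∫ ω, |pT (fun j => q j ω) n - s2| ∂μ := by
    refine integral_congr_ae ?_
    have : ∀ᵐ ω ∂μ, ∀ k, q k ω = (μ[fun ω' => y k ω' ^ 2 | F k]) ω := ae_all_iff.2 hqe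
    filter_upwards [this] with ω h
    simp only [pT, h]
  rw [eT]
  have c1 : Integrable (fun ω => (6 * C + C + 6) * (M ^ 2 + M * √(s2 + M ^ 2) + |pT (fun j => q j ω) n - s2|)) μ :=
    ((integrable_const _).add IT).const_mul _
  have main := integral_mono (IH.sub (integrable_const (smU H s2 0))) (IS.add c1) fun ω =>
    (hP H φ O s2 M (fun j => q j ω) hs hM (hq ω)).2 (fun j => y j ω) n (fun k _ => hyM k ω)
  have f1 : ∫ ω, (H (S n ω) - smU H s2 0) ∂μ = ∫ ω, H (S n ω) ∂μ - smU H s2 0 := by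
    rw [integral_sub IH (integrable_const _)]; simp
  have f2 : ∫ ω, (6 * C + C + 6) * (M ^ 2 + M * √(s2 + M ^ 2) + |pT (fun j => q j ω) n - s2|) ∂μ
      = (6 * C + C + 6) * (M ^ 2 + M * √(s2 + M ^ 2) + ∫ ω, |pT (fun j => q j ω) n - s2| ∂μ) := by
    rw [integral_const_mul, integral_add (integrable_const _) IT]; simp
  have f3 := integral_add IS c1
  rw [IS0, f2, zero_add] at f3
  exact (le_of_eq f1.symm).trans (main.trans (le_of_eq f3))

lemma w2_potential (P : Measure ℝ) [IsProbabilityMeasure P] :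
    ∃ h φ : ℝ → ℝ, Osc h φ ∧ (Integrable h P →
      wassersteinDist 2 P stdGaussian ≤ √(∫ x, h x ∂P - ∫ x, h x ∂gam)) := by
  obtain ⟨T, hT, hTP⟩ := exists_transport P
  obtain ⟨h, φ, hc, pc, osc, hb⟩ := exists_potential T hT
  have O : Osc h φ := ⟨hc, pc, osc⟩
  refine ⟨h, φ, O, fun hi => ?_⟩
  have hTm : Measurable T := hT.measurable
  have hpm : Measurable (fun z => (T z, z)) := hTm.prodMk measurable_id
  have ig : Integrable h gam := by simpa using O.int0 0 1
  have iT : Integrable (fun z => h (T z)) gam := by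
    rw [← hTP] at hi
    exact (integrable_map_measure hc.aestronglyMeasurable hTm.aemeasurable).1 hi
  have eT : ∫ z, h (T z) ∂gam = ∫ x, h x ∂P := by
    rw [← hTP, integral_map hTm.aemeasurable hc.aestronglyMeasurable]
  have key : ∫ z, (T z - z) ^ 2 ∂gam ≤ ∫ x, h x ∂P - ∫ x, h x ∂gam := by
    rw [← eT, ← integral_sub iT ig]
    exact integral_mono_of_nonneg (ae_of_all _ fun z => sq_nonneg _) (iT.sub ig) (ae_of_all _ hb)
  have le1 : wassersteinDist 2 P stdGaussian
      ≤ (∫ p, |p.1 - p.2| ^ (2 : ℝ) ∂(gam.map (fun z => (T z, z)))) ^ (1 / (2 : ℝ)) := by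
    unfold wassersteinDist
    refine csInf_le ⟨0, ?_⟩ ⟨gam.map (fun z => (T z, z)), ?_, ?_, ?_, rfl⟩
    · rintro d ⟨c, -, -, -, rfl⟩
      exact Real.rpow_nonneg (integral_nonneg fun p => Real.rpow_nonneg (abs_nonneg _) _) _
    · exact Measure.isProbabilityMeasure_map hpm.aemeasurable
    · rw [Measure.map_map measurable_fst hpm]
      exact hTP
    · rw [Measure.map_map measurable_snd hpm]
      exact Measure.map_id
  refine le1.trans ?_
  rw [← Real.sqrt_eq_rpow]
  refine Real.sqrt_le_sqrt ?_
  rw [integral_map hpm.aemeasurable (by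
    apply Measurable.aestronglyMeasurable
    fun_prop)]
  refine le_trans (le_of_eq ?_) key
  refine integral_congr_ae (ae_of_all _ fun z => ?_)
  simp

lemma Osc.scale {h φ : ℝ → ℝ} (O : Osc h φ) (s : ℝ) (hs : 0 < s) :
    Osc (fun v => s ^ 2 * h (v / s)) (fun v => s * φ (v / s)) := by
  have hc := O.hc
  have pc := O.pc
  refine ⟨by fun_prop, by fun_prop, fun x v => ?_⟩
  have h1 := O.osc (x / s) (v / s)
  have e : s ^ 2 * h (v / s) - s ^ 2 * h (x / s) - s * φ (x / s) * (v - x)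
      = s ^ 2 * (h (v / s) - h (x / s) - φ (x / s) * (v / s - x / s)) := by
    field_simp
  have e2 : 2 * (v - x) ^ 2 = s ^ 2 * (2 * (v / s - x / s) ^ 2) := by
    field_simp
  rw [e, e2, abs_mul, abs_of_pos (show 0 < s ^ 2 by positivity)]
  gcongr

lemma Osc.smU_scale {h φ : ℝ → ℝ} (_ : Osc h φ) (s : ℝ) (hs : 0 < s) :
    smU (fun v => s ^ 2 * h (v / s)) (s ^ 2) 0 = s ^ 2 * ∫ z, h z ∂gam := by
  unfold smU
  rw [integral_const_mul, Real.sqrt_sq hs.le]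
  congr 1
  refine integral_congr_ae (ae_of_all _ fun z => ?_)
  simp only [zero_add]
  rw [mul_div_cancel_left₀ _ hs.ne']

lemma final_arith (C0 M s D N : ℝ) (hC : 0 < C0) (hM : 0 < M) (hs : 0 < s) (hD : 0 ≤ D) (hN : 1 ≤ N)
    (hsM : s ^ 2 ≤ N * M ^ 2) (W A : ℝ) (hW : W ≤ √A)
    (hA : s ^ 2 * A ≤ C0 * (M ^ 2 + M * √(s ^ 2 + M ^ 2) + s ^ 2 * D)) :
    W ≤ √(3 * C0) * (N ^ ((1 : ℝ) / 4) / s * M + D ^ ((1 : ℝ) / 2)) := by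
  have hr : 0 ≤ N ^ ((1 : ℝ) / 4) := by positivity
  set r := N ^ ((1 : ℝ) / 4) with hrdef
  have hr4 : r ^ 4 = N := by
    rw [hrdef, ← Real.rpow_natCast, ← Real.rpow_mul (by linarith)]
    norm_num
  have hr1 : 1 ≤ r ^ 2 := by
    have : 1 ≤ r := Real.one_le_rpow hN (by norm_num)
    nlinarith
  rw [← Real.sqrt_eq_rpow]
  have b1 : √(s ^ 2 + M ^ 2) ≤ 2 * (r ^ 2 * M) := by
    apply Real.sqrt_le_iff.2
    refine ⟨by positivity, ?_⟩
    have : (2 * (r ^ 2 * M)) ^ 2 = 4 * (N * M ^ 2) := by rw [← hr4]; ring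
    rw [this]
    nlinarith [sq_nonneg M]
  have b2 : s ^ 2 * A ≤ 3 * C0 * (r ^ 2 * M ^ 2 + s ^ 2 * D) := by
    refine hA.trans ?_
    have h1 : M * √(s ^ 2 + M ^ 2) ≤ M * (2 * (r ^ 2 * M)) := by gcongr
    have h2 : M ^ 2 ≤ r ^ 2 * M ^ 2 := by nlinarith [sq_nonneg M]
    have h3 : 0 ≤ s ^ 2 * D := by positivity
    have : M ^ 2 + M * √(s ^ 2 + M ^ 2) + s ^ 2 * D ≤ 3 * (r ^ 2 * M ^ 2 + s ^ 2 * D) := by nlinarith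
    nlinarith
  have b3 : A ≤ 3 * C0 * (r / s * M + √D) ^ 2 := by
    have hs2 : 0 < s ^ 2 := by positivity
    refine le_of_mul_le_mul_left (b2.trans ?_) hs2
    have e : s ^ 2 * (3 * C0 * (r / s * M + √D) ^ 2) = 3 * C0 * (r * M + s * √D) ^ 2 := by
      field_simp
    rw [e]
    have hd := Real.mul_self_sqrt hD
    have : 0 ≤ r * M * (s * √D) := by positivity
    have : r ^ 2 * M ^ 2 + s ^ 2 * D ≤ (r * M + s * √D) ^ 2 := by
      nlinarith
    gcongr
  refine hW.trans ((Real.sqrt_le_sqrt b3).trans (le_of_eq ?_))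
  rw [Real.sqrt_mul (by positivity), Real.sqrt_sq (by positivity)]

/-- The `W₂` bound in the `L^∞` case. -/
theorem w2_bound_Linfty :
    ∃ C : ℝ, 0 < C ∧
      ∀ (Ω : Type) (m0 : MeasurableSpace Ω) (μ : Measure Ω), IsProbabilityMeasure μ →
      ∀ (F : ℕ → MeasurableSpace Ω) (n : ℕ) (Y : ℕ → Ω → ℝ) (sn : ℝ),
        1 ≤ n → IsMDS μ F n Y → 0 < sn →
        sn ^ 2 = ∑ i ∈ Finset.Icc 1 n, ∫ ω, (Y i ω) ^ 2 ∂μ →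
        (∀ i, 1 ≤ i → i ≤ n → eLpNorm (Y i) ⊤ μ < ⊤) →
        wassersteinDist 2 (μ.map fun ω => (∑ i ∈ Finset.Icc 1 n, Y i ω) / sn) stdGaussian ≤
          C * ((n : ℝ) ^ ((1 : ℝ) / 4) / sn * (((Finset.Icc 1 n).sup fun i => eLpNorm (Y i) ⊤ μ).toReal) + rnorm μ 1 (fun ω => (∑ i ∈ Finset.Icc 1 n, (μ[fun ω' => (Y i ω') ^ 2 | F (i - 1)]) ω) / sn ^ 2 - 1) ^ ((1 : ℝ) / 2)) := by
  obtain ⟨C0, hC0, hm⟩ := mart_bound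
  refine ⟨√(3 * C0), by positivity, ?_⟩
  intro Ω m0 μ hμ F n Y sn hn hY hsn hs2 hfin
  set M : ℝ := ((Finset.Icc 1 n).sup fun i => eLpNorm (Y i) ⊤ μ).toReal with hMdef
  have hsupfin : ((Finset.Icc 1 n).sup fun i => eLpNorm (Y i) ⊤ μ) < ⊤ := by
    rw [Finset.sup_lt_iff (by simp)]
    intro i hi
    rw [Finset.mem_Icc] at hi
    exact hfin i hi.1 hi.2
  have hMn : 0 ≤ M := ENNReal.toReal_nonneg
  have hYM : ∀ i, 1 ≤ i → i ≤ n → ∀ᵐ ω ∂μ, |Y i ω| ≤ M := by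
    intro i h1 h2
    have hle : eLpNorm (Y i) ⊤ μ ≤ ((Finset.Icc 1 n).sup fun i => eLpNorm (Y i) ⊤ μ) :=
      Finset.le_sup (f := fun i => eLpNorm (Y i) ⊤ μ) (Finset.mem_Icc.2 ⟨h1, h2⟩)
    have hae : ∀ᵐ ω ∂μ, ‖Y i ω‖ₑ ≤ eLpNorm (Y i) ⊤ μ := by
      rw [eLpNorm_exponent_top]
      exact enorm_ae_le_eLpNormEssSup (Y i) μ
    filter_upwards [hae] with ω hω
    have := ENNReal.toReal_mono hsupfin.ne (hω.trans hle)
    rwa [toReal_enorm, Real.norm_eq_abs] at this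
  have hYb2 : ∀ i, 1 ≤ i → i ≤ n → ∫ ω, (Y i ω) ^ 2 ∂μ ≤ M ^ 2 := by
    intro i h1 h2
    have : ∫ ω, (Y i ω) ^ 2 ∂μ ≤ ∫ _, M ^ 2 ∂μ := by
      refine integral_mono_of_nonneg (ae_of_all _ fun ω => sq_nonneg _) (integrable_const _) ?_
      filter_upwards [hYM i h1 h2] with ω hω
      rw [← sq_abs]
      exact pow_le_pow_left₀ (abs_nonneg _) hω 2
    simpa using this
  have hsM : sn ^ 2 ≤ (n : ℝ) * M ^ 2 := by
    rw [hs2]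
    refine (Finset.sum_le_sum fun i hi => hYb2 i (Finset.mem_Icc.1 hi).1 (Finset.mem_Icc.1 hi).2).trans ?_
    simp
  have hMpos : 0 < M := by
    rcases hMn.lt_or_eq with h | h
    · exact h
    · exfalso
      rw [← h] at hsM
      have : 0 < sn ^ 2 := by positivity
      norm_num at hsM
      linarith
  set y : ℕ → Ω → ℝ := fun k ω => if k < n then max (-M) (min M (Y (k + 1) ω)) else 0 with hy
  have hye : ∀ k, k < n → y k =ᵐ[μ] Y (k + 1) := by
    intro k hk
    filter_upwards [hYM (k + 1) (by omega) (by omega)] with ω hω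
    rw [abs_le] at hω
    simp only [hy, if_pos hk]
    rw [min_eq_right hω.2, max_eq_right hω.1]
  have hyall : ∀ᵐ ω ∂μ, ∀ k, k < n → y k ω = Y (k + 1) ω := by
    rw [ae_all_iff]
    intro k
    by_cases hk : k < n
    · filter_upwards [hye k hk] with ω h _
      exact h
    · exact ae_of_all _ fun ω h => absurd h hk
  have hym : ∀ k, Measurable[F (k + 1)] (y k) := by
    intro k
    by_cases hk : k < n
    · have : y k = (fun z : ℝ => max (-M) (min M z)) ∘ Y (k + 1) := by
        ext ω; simp [hy, hk]
      rw [this]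
      exact (show Measurable (fun z : ℝ => max (-M) (min M z)) by fun_prop).comp
        (hY.adapted (k + 1) (by omega) (by omega))
    · have : y k = fun _ => 0 := by
        ext ω; simp [hy, hk]
      rw [this]
      exact @measurable_const _ _ _ (F (k + 1)) _
  have hyd : ∀ k, μ[y k | F k] =ᵐ[μ] 0 := by
    intro k
    by_cases hk : k < n
    · exact (condExp_congr_ae (hye k hk)).trans (hY.mdiff (k + 1) (by omega) (by omega))
    · have : y k = 0 := by
        ext ω; simp [hy, hk]
      rw [this, condExp_zero]
  have hyb : ∀ k ω, |y k ω| ≤ M := by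
    intro k ω
    simp only [hy]
    split_ifs
    · rw [abs_le]
      exact ⟨le_max_left _ _, max_le (by linarith) (min_le_left _ _)⟩
    · simpa using hMn
  have hsum : ∀ f : ℕ → ℝ, ∑ i ∈ Finset.Icc 1 n, f i = ∑ k ∈ Finset.range n, f (k + 1) := by
    intro f
    rw [Finset.range_eq_Ico, Finset.sum_Ico_add' f 0 n 1]
    rfl
  have hXe : (fun ω => (∑ i ∈ Finset.Icc 1 n, Y i ω) / sn)
      =ᵐ[μ] fun ω => (∑ k ∈ Finset.range n, y k ω) / sn := by
    filter_upwards [hyall] with ω h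
    rw [hsum]
    congr 1
    exact Finset.sum_congr rfl fun k hk => (h k (Finset.mem_range.1 hk)).symm
  rw [Measure.map_congr hXe]
  set X : Ω → ℝ := fun ω => (∑ k ∈ Finset.range n, y k ω) / sn with hX
  have hXm : Measurable X :=
    (Finset.measurable_fun_sum _ fun k _ => (hym k).mono (hY.le _) le_rfl).div_const _
  have hP : IsProbabilityMeasure (μ.map X) := Measure.isProbabilityMeasure_map hXm.aemeasurable
  obtain ⟨h, φ, O, hW⟩ := w2_potential (μ.map X)
  have hXb : ∀ ω, |X ω| ≤ n * M / sn := by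
    intro ω
    simp only [hX]
    rw [abs_div, abs_of_pos hsn]
    gcongr
    refine (Finset.abs_sum_le_sum_abs _ _).trans ?_
    refine (Finset.sum_le_sum fun j _ => hyb j ω).trans ?_
    simp
  have ihX : Integrable (fun ω => h (X ω)) μ := by
    obtain ⟨K, hK⟩ := (isCompact_Icc (a := -(n * M / sn)) (b := n * M / sn)).exists_bound_of_continuousOn
      O.hc.continuousOn
    exact Integrable.of_bound (O.hc.measurable.comp hXm).aestronglyMeasurable K
      (ae_of_all _ fun ω => hK _ (abs_le.1 (hXb ω)))
  have ih : Integrable h (μ.map X) :=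
    (integrable_map_measure O.hc.aestronglyMeasurable hXm.aemeasurable).2 ihX
  have hW := hW ih
  rw [integral_map hXm.aemeasurable O.hc.aestronglyMeasurable] at hW
  have hmain := hm Ω m0 μ hμ F hY.le hY.mono y hym hyd M hMpos hyb (sn ^ 2) (sq_nonneg _) _ _
    (O.scale sn hsn) n
  rw [O.smU_scale sn hsn, integral_const_mul] at hmain
  have hD : rnorm μ 1 (fun ω => (∑ i ∈ Finset.Icc 1 n, (μ[fun ω' => (Y i ω') ^ 2 | F (i - 1)]) ω) / sn ^ 2 - 1)
      = ∫ ω, |(∑ i ∈ Finset.Icc 1 n, (μ[fun ω' => (Y i ω') ^ 2 | F (i - 1)]) ω) / sn ^ 2 - 1| ∂μ := by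
    unfold rnorm
    simp
  rw [hD]
  have hDe : ∫ ω, |∑ k ∈ Finset.range n, (μ[fun ω' => y k ω' ^ 2 | F k]) ω - sn ^ 2| ∂μ
      = sn ^ 2 * ∫ ω, |(∑ i ∈ Finset.Icc 1 n, (μ[fun ω' => (Y i ω') ^ 2 | F (i - 1)]) ω) / sn ^ 2 - 1| ∂μ := by
    rw [← integral_const_mul]
    refine integral_congr_ae ?_
    have hce : ∀ᵐ ω ∂μ, ∀ k, k < n → (μ[fun ω' => y k ω' ^ 2 | F k]) ω
        = (μ[fun ω' => (Y (k + 1) ω') ^ 2 | F k]) ω := by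
      rw [ae_all_iff]
      intro k
      by_cases hk : k < n
      · have : (fun ω' => y k ω' ^ 2) =ᵐ[μ] fun ω' => (Y (k + 1) ω') ^ 2 := by
          filter_upwards [hye k hk] with ω h
          rw [h]
        filter_upwards [condExp_congr_ae (m := F k) this] with ω h _
        exact h
      · exact ae_of_all _ fun ω h => absurd h hk
    filter_upwards [hce] with ω h
    rw [hsum]
    simp only [Nat.add_sub_cancel]
    rw [Finset.sum_congr rfl fun k hk => h k (Finset.mem_range.1 hk)]
    have hs2p : 0 < sn ^ 2 := by positivity
    rw [← abs_of_pos hs2p, ← abs_mul, abs_of_pos hs2p]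
    congr 1
    field_simp
  rw [hDe] at hmain
  refine final_arith C0 M sn _ n hC0 hMpos hsn (integral_nonneg fun ω => abs_nonneg _)
    (by exact_mod_cast hn) hsM _ _ hW ?_
  rw [mul_sub]
  exact hmain
end
end
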